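/- arXiv:2605.18598 — 2 statements merged into one kernel-verified Lean document; each statement's English description precedes it below -/
import Mathlib

section
/- Riemannian Dimension Bound for DNN (Theorem). There is an absolute constant C > 0 with the following property. Consider a fully connected network of depth L with 1-Lipschitz columnwise activations σ_1,…,σ_L, input matrix X ∈ ℝ^{d_0×n}, and weight class B_F(R) := {W : ‖W‖_F ≤ R}. Suppose M_{l→L} : B_F(R) × (0,∞) → [0,∞) (l = 1,…,L) satisfy the local Lipschitz property: for every W ∈ B_F(R), every ε > 0, every W' ∈ B_F(R) with ρ_n(W,W') ≤ ε, and every l, the outer map G_l^{W'}(A) := σ_L(W'_L·σ_{L−1}(⋯σ_{l+1}(W'_{l+1}·A)⋯)) (the identity when l = L) satisfies ‖G_l^{W'}(σ_l(W'_l F_{l−1}(W,X))) − G_l^{W'}(σ_l(W_l F_{l−1}(W,X)))‖_F ≤ M_{l→L}(W,ε)·‖σ_l(W'_l F_{l−1}(W,X)) − σ_l(W_l F_{l−1}(W,X))‖_F. Then there exists a probability measure π on the space of weight tuples such that for every W with ‖W‖_F ≤ R and every ε > 0: log( 1 / π{ W' : ρ_n(W,W') ≤ ε } ) ≤ d_R(W,ε)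 := Σ_{l=1}^L [ d_l·d_eff(A_l(W,ε), ρ̂(W), ε) + d_{l−1}·d_eff(A_l(W,ε), ρ̂(W), ε) + log d_{l−1} + log n ], where A_l(W,ε) := L·M_{l→L}(W,ε)²·F_{l−1}(W,X)·F_{l−1}(W,X)ᵀ and ρ̂(W) := C·max{‖W‖_F, R/2ⁿ}. -/
open MeasureTheory
open scoped ENNReal NNReal Matrix

noncomputable section

/-- The pointwise dimension `log(1/p)` of a (probability) mass `p`, valued in `[0,∞]`,
with the convention `log(1/0) = ∞`. -/
def negLog (p : ℝ≥0∞) : ℝ≥0∞ :=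
  if p = 0 then ⊤ else ENNReal.ofReal (Real.log (1 / p.toReal))

/-- Squared Frobenius norm of a real matrix. -/
def frobSq {m k : Type*} [Fintype m] [Fintype k] (M : Matrix m k ℝ) : ℝ :=
  ∑ i, ∑ j, M i j ^ 2

/-- Apply a map `g : ℝ^m → ℝ^m` columnwise to a matrix. -/
def mapCols {m k : Type*} [Fintype m] [Fintype k] (g : (m → ℝ) → m → ℝ)
    (M : Matrix m k ℝ) : Matrix m k ℝ :=
  Matrix.of fun i j => g (fun i' => M i' j) i

/-- Weight tuples of a fully connected network with widths `d 0, d 1, d 2, …`. -/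
def Weights (d : ℕ → ℕ) : Type :=
  (l : ℕ) → Matrix (Fin (d (l + 1))) (Fin (d l)) ℝ

instance {m n : Type*} : MeasurableSpace (Matrix m n ℝ) :=
  (inferInstance : MeasurableSpace (m → n → ℝ))

instance (d : ℕ → ℕ) : MeasurableSpace (Weights d) :=
  (inferInstance : MeasurableSpace ((l : ℕ) → Matrix (Fin (d (l + 1))) (Fin (d l)) ℝ))

/-- The feature matrices of the network: `F_0 = X`, `F_{l+1} = σ_l(W_l F_l)`. -/
def feat (d : ℕ → ℕ) (nn : ℕ) (σ : (l : ℕ) → ((Fin (d (l + 1)) → ℝ) → Fin (d (l + 1)) → ℝ))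
    (W : Weights d) (X : Matrix (Fin (d 0)) (Fin nn) ℝ) :
    (l : ℕ) → Matrix (Fin (d l)) (Fin nn) ℝ
  | 0 => X
  | l + 1 => mapCols (σ l) (W l * feat d nn σ W X l)

/-- Propagation of an arbitrary matrix `A` (sitting at layer `start`) through the network. -/
def iterNet (d : ℕ → ℕ) (nn : ℕ) (σ : (l : ℕ) → ((Fin (d (l + 1)) → ℝ) → Fin (d (l + 1)) → ℝ))
    (W : Weights d) (start : ℕ) (A : Matrix (Fin (d start)) (Fin nn) ℝ) :
    (k : ℕ) → Matrix (Fin (d (start + k))) (Fin nn) ℝ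
  | 0 => A
  | k + 1 => mapCols (σ (start + k)) (W (start + k) * iterNet d nn σ W start A k)

/-- The empirical network metric `ρ_n(W,W') = ‖F_L(W,X) − F_L(W',X)‖_F / √n`. -/
def rhoN (d : ℕ → ℕ) (L nn : ℕ) (σ : (l : ℕ) → ((Fin (d (l + 1)) → ℝ) → Fin (d (l + 1)) → ℝ))
    (X : Matrix (Fin (d 0)) (Fin nn) ℝ) (W W' : Weights d) : ℝ :=
  Real.sqrt (frobSq (feat d nn σ W X L - feat d nn σ W' X L) / nn)

/-- The Frobenius norm `‖W‖_F = (Σ_{l<L} ‖W_l‖_F²)^{1/2}` of a weight tuple with `L` layers. -/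
def wNorm (d : ℕ → ℕ) (L : ℕ) (W : Weights d) : ℝ :=
  Real.sqrt (∑ l ∈ Finset.range L, frobSq (W l))

/-- The eigenvalues of a symmetric real matrix, listed in nonincreasing order with
multiplicity (junk value `0` if the matrix is not symmetric). -/
def eigDesc {m : ℕ} (G : Matrix (Fin m) (Fin m) ℝ) : Fin m → ℝ :=
  if h : G.IsHermitian then (fun k => (h.eigenvalues ∘ Tuple.sort h.eigenvalues) k.rev) else 0

/-- Effective dimension `d_eff(G,R,ε) = (1/2) Σ_{k=1}^{r_eff(G,R,ε)} log(8R²λ_k(G)/(nε²))`,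
where `r_eff(G,R,ε) = max{k : λ_k(G)·R² ≥ nε²/2}`. -/
def dEff {m : ℕ} (G : Matrix (Fin m) (Fin m) ℝ) (R : ℝ) (n : ℕ) (ε : ℝ) : ℝ :=
  (1 / 2) *
    ∑ k ∈ Finset.univ.filter (fun k : Fin m => (n : ℝ) * ε ^ 2 / 2 ≤ eigDesc G k * R ^ 2),
      Real.log (8 * R ^ 2 * eigDesc G k / (n * ε ^ 2))

/-!
The prior puts mass on a neighbourhood of `W` by sampling each layer as a product of two random
factors of low rank, the left one uniform in a Frobenius ball and the right one uniform in an
operator-norm ball. Shrink `W` by a ridge factor in the eigenbasis of the Gram matrices and discard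
the directions whose factor is below `1/2`. What remains has rank `k ≈ r_eff`, and the product of
its noisy factorisations, with noise of size `1/√λ` in a direction of eigenvalue `λ`, stays close
to `W`. By symmetry, half of the noise in each factor has nonpositive inner product with the
shrunken point, and for that half the gain in norm from shrinking pays for the noise, so that the
product stays in the ball. The mass lost is the determinant of the noise: `d_l + d_{l-1}` powers of
`1/(ρ√λ)` for each retained direction, that is, the exponential of `-(d_l + d_{l-1}) d_eff`.

Mixing over the ranks of the layers makes the prior independent of the Gram matrices at a cost of
`log d_{l-1}` per layer, and mixing over the radii `R, R/2, …, R/2^(n-1)` adapts it to `‖W‖` at a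
cost of `log n`. Finally, a neighbourhood in the Gram seminorms lies in the `ρ_n`-ball by
telescoping over the layers, along a segment because the Lipschitz property is local.
-/

/-! ### Networks and the empirical metric -/

section Network

attribute [local instance] Matrix.frobeniusNormedAddCommGroup Matrix.frobeniusNormedSpace

lemma sqrt_frobSq {m k : Type*} [Fintype m] [Fintype k] (A : Matrix m k ℝ) :
    √(frobSq A) = ‖A‖ := by
  rw [Matrix.frobenius_norm_def, Real.sqrt_eq_rpow]
  simp [frobSq]

lemma frobSq_nonneg {m k : Type*} [Fintype m] [Fintype k] (A : Matrix m k ℝ) : 0 ≤ frobSq A :=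
  Finset.sum_nonneg fun _ _ => Finset.sum_nonneg fun _ _ => sq_nonneg _

lemma frobSq_eq_norm_sq {m k : Type*} [Fintype m] [Fintype k] (A : Matrix m k ℝ) :
    frobSq A = ‖A‖ ^ 2 := by
  rw [← sqrt_frobSq, Real.sq_sqrt (frobSq_nonneg A)]

lemma frobSq_lineMap_le {m k : Type*} [Fintype m] [Fintype k] (A B : Matrix m k ℝ) {t : ℝ}
    (h0 : 0 ≤ t) (h1 : t ≤ 1) :
    frobSq (AffineMap.lineMap A B t) ≤ (1 - t) * frobSq A + t * frobSq B := by
  simp only [frobSq, Finset.mul_sum, ← Finset.sum_add_distrib, AffineMap.lineMap_apply_module,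
    Matrix.add_apply, Matrix.smul_apply, smul_eq_mul]
  gcongr with i _ j
  nlinarith [mul_nonneg (mul_nonneg h0 (sub_nonneg.2 h1)) (sq_nonneg (A i j - B i j))]

lemma frobSq_mapCols_sub_le {m k : Type*} [Fintype m] [Fintype k] {g : (m → ℝ) → m → ℝ}
    (hg : ∀ u v : m → ℝ, ∑ i, (g u i - g v i) ^ 2 ≤ ∑ i, (u i - v i) ^ 2)
    (A B : Matrix m k ℝ) : frobSq (mapCols g A - mapCols g B) ≤ frobSq (A - B) := by
  unfold frobSq
  rw [Finset.sum_comm, Finset.sum_comm (f := fun i j => (A - B) i j ^ 2)]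
  exact Finset.sum_le_sum fun j _ => hg (fun i => A i j) (fun i => B i j)

lemma norm_mapCols_sub_le {m k : Type*} [Fintype m] [Fintype k] {g : (m → ℝ) → m → ℝ}
    (hg : ∀ u v : m → ℝ, ∑ i, (g u i - g v i) ^ 2 ≤ ∑ i, (u i - v i) ^ 2)
    (A B : Matrix m k ℝ) : ‖mapCols g A - mapCols g B‖ ≤ ‖A - B‖ := by
  rw [← sqrt_frobSq, ← sqrt_frobSq]
  exact Real.sqrt_le_sqrt (frobSq_mapCols_sub_le hg A B)

lemma continuous_mapCols {m k : Type*} [Fintype m] [Fintype k] {g : (m → ℝ) → m → ℝ}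
    (hg : ∀ u v : m → ℝ, ∑ i, (g u i - g v i) ^ 2 ≤ ∑ i, (u i - v i) ^ 2) :
    Continuous (mapCols g : Matrix m k ℝ → Matrix m k ℝ) :=
  (LipschitzWith.mk_one fun A B => by
    simpa only [dist_eq_norm] using norm_mapCols_sub_le hg A B).continuous

variable {d : ℕ → ℕ} {nn : ℕ} {σ : (l : ℕ) → ((Fin (d (l + 1)) → ℝ) → Fin (d (l + 1)) → ℝ)}

lemma feat_succ (W : Weights d) (X : Matrix (Fin (d 0)) (Fin nn) ℝ) (l : ℕ) :
    feat d nn σ W X (l + 1) = mapCols (σ l) (W l * feat d nn σ W X l) :=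
  rfl

lemma feat_congr {W W' : Weights d} (X : Matrix (Fin (d 0)) (Fin nn) ℝ) {l : ℕ}
    (h : ∀ k < l, W k = W' k) : feat d nn σ W X l = feat d nn σ W' X l := by
  induction l with
  | zero => rfl
  | succ l ih =>
    rw [feat_succ, feat_succ, h l l.lt_succ_self, ih fun k hk => h k (hk.trans l.lt_succ_self)]

lemma feat_add {W W' : Weights d} (X : Matrix (Fin (d 0)) (Fin nn) ℝ) {j : ℕ}
    (h : ∀ l, j ≤ l → W l = W' l) (k : ℕ) :
    feat d nn σ W X (j + k) = iterNet d nn σ W' j (feat d nn σ W X j) k := by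
  induction k with
  | zero => rfl
  | succ k ih =>
    change mapCols _ (W (j + k) * feat d nn σ W X (j + k)) = _
    rw [ih, h _ (Nat.le_add_right j k)]
    rfl

/-- The weights that agree with `W` on the layers below `j` and with `W'` from layer `j` on;
moving `j` from `0` to `L` replaces the network `W'` by `W` one layer at a time. -/
def hybridWeights (W W' : Weights d) (j : ℕ) : Weights d := fun l => if l < j then W l else W' l

lemma feat_hybridWeights_sub (W W' : Weights d) (X : Matrix (Fin (d 0)) (Fin nn) ℝ) (j k : ℕ) :
    feat d nn σ (hybridWeights W W' j) X (j + 1 + k) -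
        feat d nn σ (hybridWeights W W' (j + 1)) X (j + 1 + k) =
      iterNet d nn σ W' (j + 1) (mapCols (σ j) (W' j * feat d nn σ W X j)) k -
        iterNet d nn σ W' (j + 1) (mapCols (σ j) (W j * feat d nn σ W X j)) k := by
  have below {i l : ℕ} (h : l ≤ i) :
      feat d nn σ (hybridWeights W W' i) X l = feat d nn σ W X l :=
    feat_congr X fun k hk => if_pos (hk.trans_le h)
  have above {i l : ℕ} (h : i ≤ l) : hybridWeights W W' i l = W' l := if_neg h.not_gt
  have split {i : ℕ} (h : i ≤ j + 1) : feat d nn σ (hybridWeights W W' i) X (j + 1 + k) =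
      iterNet d nn σ W' (j + 1) (feat d nn σ (hybridWeights W W' i) X (j + 1)) k :=
    feat_add X (fun l hl => above (h.trans hl)) k
  rw [split j.le_succ, split le_rfl, below le_rfl, feat_succ, feat_succ, below le_rfl,
    above le_rfl]

lemma norm_feat_sub_le (W W' : Weights d) (X : Matrix (Fin (d 0)) (Fin nn) ℝ) (L : ℕ) :
    ‖feat d nn σ W X L - feat d nn σ W' X L‖ ≤
      ∑ j ∈ Finset.range L,
        ‖iterNet d nn σ W' (j + 1) (mapCols (σ j) (W' j * feat d nn σ W X j)) (L - (j + 1)) -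
          iterNet d nn σ W' (j + 1) (mapCols (σ j) (W j * feat d nn σ W X j)) (L - (j + 1))‖ := by
  have h0 : feat d nn σ (hybridWeights W W' 0) X L = feat d nn σ W' X L :=
    congrArg (fun V => feat d nn σ V X L) (funext fun l => if_neg l.not_lt_zero)
  have hL : feat d nn σ (hybridWeights W W' L) X L = feat d nn σ W X L :=
    feat_congr X fun k hk => if_pos hk
  rw [← h0, ← hL, norm_sub_rev,
    ← Finset.sum_range_sub' fun j => feat d nn σ (hybridWeights W W' j) X L]
  refine (norm_sum_le _ _).trans (Finset.sum_le_sum fun j hj => ?_)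
  have hjL : j + 1 ≤ L := Finset.mem_range.1 hj
  generalize hk : L - (j + 1) = k
  obtain rfl : L = j + 1 + k := by omega
  exact (congrArg _ (feat_hybridWeights_sub W W' X j k)).le

/-- The local Lipschitz property at the pair `(W, W')`: the outer map `G_j^{W'}` of the network
`W'` expands the difference of the `j`-th features `σ_j(W'_j F_j(W))` and `σ_j(W_j F_j(W))` by a
factor of at most `c j`. -/
def OuterLipschitz (d : ℕ → ℕ) (L nn : ℕ)
    (σ : (l : ℕ) → ((Fin (d (l + 1)) → ℝ) → Fin (d (l + 1)) → ℝ))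
    (X : Matrix (Fin (d 0)) (Fin nn) ℝ) (c : ℕ → ℝ) (W W' : Weights d) : Prop :=
  ∀ j, j < L →
    √(frobSq (iterNet d nn σ W' (j + 1) (mapCols (σ j) (W' j * feat d nn σ W X j)) (L - (j + 1)) -
        iterNet d nn σ W' (j + 1) (mapCols (σ j) (W j * feat d nn σ W X j)) (L - (j + 1)))) ≤
      c j * √(frobSq (mapCols (σ j) (W' j * feat d nn σ W X j) -
        mapCols (σ j) (W j * feat d nn σ W X j)))

lemma OuterLipschitz.norm_feat_sub_le {L : ℕ} {X : Matrix (Fin (d 0)) (Fin nn) ℝ} {c : ℕ → ℝ}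
    {W W' : Weights d} (h : OuterLipschitz d L nn σ X c W W')
    (hσ : ∀ (l : ℕ) (u v : Fin (d (l + 1)) → ℝ),
      ∑ i, (σ l u i - σ l v i) ^ 2 ≤ ∑ i, (u i - v i) ^ 2)
    (hc : ∀ j, 0 ≤ c j) :
    ‖feat d nn σ W X L - feat d nn σ W' X L‖ ≤
      ∑ j ∈ Finset.range L, c j * ‖(W' j - W j) * feat d nn σ W X j‖ := by
  refine (_root_.norm_feat_sub_le W W' X L).trans (Finset.sum_le_sum fun j hj => ?_)
  have hj := h j (Finset.mem_range.1 hj)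
  simp only [sqrt_frobSq] at hj
  refine hj.trans (mul_le_mul_of_nonneg_left ?_ (hc j))
  rw [Matrix.sub_mul]
  exact norm_mapCols_sub_le (hσ j) _ _

/-- The point at time `t` of the segment from `W` to `W'`. -/
def segmentWeights (W W' : Weights d) (t : ℝ) : Weights d :=
  fun l => AffineMap.lineMap (W l) (W' l) t

lemma wNorm_segmentWeights_le {W W' : Weights d} {L : ℕ} {R t : ℝ} (h0 : 0 ≤ t) (h1 : t ≤ 1)
    (hR : 0 ≤ R) (hW : wNorm d L W ≤ R) (hW' : wNorm d L W' ≤ R) :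
    wNorm d L (segmentWeights W W' t) ≤ R := by
  unfold wNorm at *
  rw [Real.sqrt_le_left hR] at *
  calc ∑ l ∈ Finset.range L, frobSq (segmentWeights W W' t l)
      ≤ ∑ l ∈ Finset.range L, ((1 - t) * frobSq (W l) + t * frobSq (W' l)) :=
        Finset.sum_le_sum fun l _ => frobSq_lineMap_le (W l) (W' l) h0 h1
    _ = (1 - t) * ∑ l ∈ Finset.range L, frobSq (W l) +
          t * ∑ l ∈ Finset.range L, frobSq (W' l) := by
        rw [Finset.sum_add_distrib, Finset.mul_sum, Finset.mul_sum]
    _ ≤ (1 - t) * R ^ 2 + t * R ^ 2 := by gcongr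
    _ = R ^ 2 := by ring

lemma continuous_feat_segmentWeights
    (hσ : ∀ (l : ℕ) (u v : Fin (d (l + 1)) → ℝ),
      ∑ i, (σ l u i - σ l v i) ^ 2 ≤ ∑ i, (u i - v i) ^ 2)
    (W W' : Weights d) (X : Matrix (Fin (d 0)) (Fin nn) ℝ) (l : ℕ) :
    Continuous fun t => feat d nn σ (segmentWeights W W' t) X l := by
  induction l with
  | zero => exact continuous_const
  | succ l ih =>
    exact (continuous_mapCols (hσ l)).comp (AffineMap.lineMap_continuous.matrix_mul ih)

lemma rhoN_eq_norm (L : ℕ) (X : Matrix (Fin (d 0)) (Fin nn) ℝ) (W W' : Weights d) :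
    rhoN d L nn σ X W W' = ‖feat d nn σ W X L - feat d nn σ W' X L‖ / √nn := by
  rw [rhoN, Real.sqrt_div (frobSq_nonneg _), sqrt_frobSq]

lemma OuterLipschitz.rhoN_segmentWeights_le {L : ℕ} {X : Matrix (Fin (d 0)) (Fin nn) ℝ}
    {c : ℕ → ℝ} {W W' : Weights d} {t ε : ℝ} (h0 : 0 ≤ t)
    (h : OuterLipschitz d L nn σ X c W (segmentWeights W W' t)) (hn : 1 ≤ nn)
    (hσ : ∀ (l : ℕ) (u v : Fin (d (l + 1)) → ℝ),
      ∑ i, (σ l u i - σ l v i) ^ 2 ≤ ∑ i, (u i - v i) ^ 2)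
    (hc : ∀ j, 0 ≤ c j)
    (hsum : ∑ j ∈ Finset.range L, c j * √(frobSq ((W' j - W j) * feat d nn σ W X j)) ≤ √nn * ε) :
    rhoN d L nn σ X W (segmentWeights W W' t) ≤ t * ε := by
  have hseg (j : ℕ) : segmentWeights W W' t j - W j = t • (W' j - W j) := by
    rw [segmentWeights, AffineMap.lineMap_apply_module']
    abel
  rw [rhoN_eq_norm, div_le_iff₀ (by positivity)]
  calc ‖feat d nn σ W X L - feat d nn σ (segmentWeights W W' t) X L‖
      ≤ ∑ j ∈ Finset.range L,
          c j * ‖(segmentWeights W W' t j - W j) * feat d nn σ W X j‖ := h.norm_feat_sub_le hσ hc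
    _ = t * ∑ j ∈ Finset.range L, c j * √(frobSq ((W' j - W j) * feat d nn σ W X j)) := by
        rw [Finset.mul_sum]
        refine Finset.sum_congr rfl fun j _ => ?_
        rw [hseg, Matrix.smul_mul, norm_smul, Real.norm_of_nonneg h0, sqrt_frobSq]
        ring
    _ ≤ t * (√nn * ε) := by gcongr
    _ = t * ε * √nn := by ring

-- The Lipschitz property is only available inside the `ε`-ball. If the segment from `W` to `W'`
-- left the ball, it would be at distance exactly `ε` at some time `t < 1`, where the distance is
-- at most `t * ε`.
lemma rhoN_le_of_sum_le {L : ℕ} {X : Matrix (Fin (d 0)) (Fin nn) ℝ} {R ε : ℝ} {c : ℕ → ℝ}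
    {W W' : Weights d} (hn : 1 ≤ nn)
    (hσ : ∀ (l : ℕ) (u v : Fin (d (l + 1)) → ℝ),
      ∑ i, (σ l u i - σ l v i) ^ 2 ≤ ∑ i, (u i - v i) ^ 2)
    (hc : ∀ j, 0 ≤ c j) (hε : 0 < ε) (hR : 0 ≤ R)
    (hW : wNorm d L W ≤ R) (hW' : wNorm d L W' ≤ R)
    (hLip : ∀ V : Weights d, wNorm d L V ≤ R → rhoN d L nn σ X W V ≤ ε →
      OuterLipschitz d L nn σ X c W V)
    (hsum : ∑ j ∈ Finset.range L, c j * √(frobSq ((W' j - W j) * feat d nn σ W X j)) ≤ √nn * ε) :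
    rhoN d L nn σ X W W' ≤ ε := by
  have hcont : Continuous fun t => rhoN d L nn σ X W (segmentWeights W W' t) := by
    simp only [rhoN_eq_norm]
    exact (continuous_const.sub (continuous_feat_segmentWeights hσ W W' X L)).norm.div_const _
  have hzero : segmentWeights W W' 0 = W := funext fun l => AffineMap.lineMap_apply_zero _ _
  have hone : segmentWeights W W' 1 = W' := funext fun l => AffineMap.lineMap_apply_one _ _
  by_contra! hfar
  obtain ⟨t, ⟨ht0, ht1⟩, ht⟩ := intermediate_value_Icc zero_le_one hcont.continuousOn
    (show ε ∈ Set.Icc _ _ by simpa [hzero, hone, rhoN_eq_norm] using ⟨hε.le, by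
      simpa [rhoN_eq_norm] using hfar.le⟩)
  have hle : ε ≤ t * ε := ht.symm.le.trans <|
    (hLip _ (wNorm_segmentWeights_le ht0 ht1 hR hW hW') ht.le).rhoN_segmentWeights_le ht0 hn hσ
      hc hsum
  obtain rfl : t = 1 := by nlinarith
  exact hfar.ne' (hone ▸ ht)

end Network

/-! ### Mass of affine images of symmetric bodies -/

section HalfMass

/-- A compact, origin-symmetric neighbourhood of `0`: the bodies on which the prior puts uniform
measures. Convexity is never needed. -/
structure IsSymmetricBody {E : Type*} [AddGroup E] [TopologicalSpace E] (K : Set E) : Prop where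
  isCompact : IsCompact K
  neg_mem : ∀ x ∈ K, -x ∈ K
  mem_nhds_zero : K ∈ nhds 0

namespace IsSymmetricBody

lemma measurableSet {E : Type*} [AddGroup E] [TopologicalSpace E] [T2Space E]
    [MeasurableSpace E] [OpensMeasurableSpace E] {K : Set E} (hK : IsSymmetricBody K) :
    MeasurableSet K :=
  hK.isCompact.isClosed.measurableSet

lemma isProbabilityMeasure_cond {E : Type*} [AddGroup E] [TopologicalSpace E]
    [MeasurableSpace E] {K : Set E} (hK : IsSymmetricBody K) (μ : Measure E)
    [μ.IsAddHaarMeasure] : IsProbabilityMeasure (ProbabilityTheory.cond μ K) :=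
  ProbabilityTheory.cond_isProbabilityMeasure_of_finite
    (μ.measure_pos_of_mem_nhds hK.mem_nhds_zero).ne' hK.isCompact.measure_lt_top.ne

variable {E F : Type*} [NormedAddCommGroup E] [NormedSpace ℝ E] [FiniteDimensional ℝ E]
  [MeasurableSpace E] [BorelSpace E] [NormedAddCommGroup F] [NormedSpace ℝ F]
  [FiniteDimensional ℝ F] [MeasurableSpace F] [BorelSpace F]

-- The half of `K` on which the odd function `f` is nonpositive carries at least half of the mass,
-- because its negative covers the rest of `K`.
lemma ofReal_abs_det_div_two_le_cond {K : Set E} (hK : IsSymmetricBody K) (μ : Measure E)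
    [μ.IsAddHaarMeasure] {A : Set E} (c : E) (T : E →ₗ[ℝ] E) {f : E → ℝ} (hf : f.Odd)
    (hmaps : ∀ b ∈ K, c + T b ∈ K) (hgood : ∀ b ∈ K, f b ≤ 0 → c + T b ∈ A) :
    ENNReal.ofReal (|LinearMap.det T| / 2) ≤ ProbabilityTheory.cond μ K A := by
  set B : Set E := {b | b ∈ K ∧ f b ≤ 0}
  have hhalf : μ K ≤ 2 * μ B := by
    have hcover : K ⊆ B ∪ -B := fun x hx =>
      (le_total (f x) 0).imp (fun h => ⟨hx, h⟩)
        fun h => ⟨hK.neg_mem x hx, (hf x).trans_le (neg_nonpos.2 h)⟩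
    calc μ K ≤ μ B + μ (-B) := (measure_mono hcover).trans (measure_union_le _ _)
      _ = 2 * μ B := by rw [Measure.measure_neg, two_mul]
  have himage : ENNReal.ofReal |LinearMap.det T| * μ B ≤ μ (K ∩ A) := by
    rw [← Measure.addHaar_image_linearMap, ← measure_preimage_add μ (-c), ← Set.image_add_left]
    refine measure_mono ?_
    rintro _ ⟨_, ⟨b, hb, rfl⟩, rfl⟩
    exact ⟨hmaps b hb.1, hgood b hb.1 hb.2⟩
  have hhalf' : ENNReal.ofReal (1 / 2) * μ K ≤ μ B := by
    refine (mul_le_mul_right hhalf _).trans_eq ?_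
    rw [← mul_assoc, ← ENNReal.ofReal_ofNat 2, ← ENNReal.ofReal_mul (by norm_num)]
    norm_num
  calc ENNReal.ofReal (|LinearMap.det T| / 2)
      = (μ K)⁻¹ * μ K * ENNReal.ofReal (|LinearMap.det T| * (1 / 2)) := by
        rw [ENNReal.inv_mul_cancel (μ.measure_pos_of_mem_nhds hK.mem_nhds_zero).ne'
          hK.isCompact.measure_lt_top.ne, one_mul, mul_one_div]
    _ = (μ K)⁻¹ * (ENNReal.ofReal |LinearMap.det T| * (ENNReal.ofReal (1 / 2) * μ K)) := by
        rw [ENNReal.ofReal_mul (abs_nonneg _)]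
        ring
    _ ≤ (μ K)⁻¹ * (ENNReal.ofReal |LinearMap.det T| * μ B) := by gcongr
    _ ≤ (μ K)⁻¹ * μ (K ∩ A) := by gcongr
    _ = ProbabilityTheory.cond μ K A := (ProbabilityTheory.cond_apply hK.measurableSet μ A).symm

lemma ofReal_abs_det_mul_le_cond_prod {K₁ : Set E} {K₂ : Set F} (hK₁ : IsSymmetricBody K₁)
    (hK₂ : IsSymmetricBody K₂) (μ : Measure E) [μ.IsAddHaarMeasure] (ν : Measure F)
    [ν.IsAddHaarMeasure] {A : Set (E × F)} (hA : MeasurableSet A)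
    (c₁ : E) (T₁ : E →ₗ[ℝ] E) {f₁ : E → ℝ} (hf₁ : f₁.Odd) (hmaps₁ : ∀ b ∈ K₁, c₁ + T₁ b ∈ K₁)
    (c₂ : F) (T₂ : F →ₗ[ℝ] F) {f₂ : E → F → ℝ} (hf₂ : ∀ z, (f₂ z).Odd)
    (hmaps₂ : ∀ b ∈ K₂, c₂ + T₂ b ∈ K₂)
    (hgood : ∀ b₁ ∈ K₁, f₁ b₁ ≤ 0 → ∀ b₂ ∈ K₂, f₂ (c₁ + T₁ b₁) b₂ ≤ 0 →
      (c₁ + T₁ b₁, c₂ + T₂ b₂) ∈ A) :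
    ENNReal.ofReal (|LinearMap.det T₁| / 2) * ENNReal.ofReal (|LinearMap.det T₂| / 2) ≤
      ((ProbabilityTheory.cond μ K₁).prod (ProbabilityTheory.cond ν K₂)) A := by
  have := hK₂.isProbabilityMeasure_cond ν
  rw [Measure.prod_apply hA, mul_comm]
  refine le_trans ?_ (mul_meas_ge_le_lintegral (measurable_measure_prodMk_left hA)
    (ENNReal.ofReal (|LinearMap.det T₂| / 2)))
  gcongr
  exact hK₁.ofReal_abs_det_div_two_le_cond μ c₁ T₁ hf₁ hmaps₁ fun b₁ hb₁ hfb₁ =>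
    hK₂.ofReal_abs_det_div_two_le_cond ν c₂ T₂ (hf₂ _) hmaps₂ (hgood b₁ hb₁ hfb₁)

end IsSymmetricBody

end HalfMass

/-! ### Truncated ridge shrinkage -/

section Ridge

/-- The ridge shrinkage factor `ν / (ν + s)` of a direction of weight `ν` at penalty `s`, set to
zero when it is less than `1 / 2`. The truncation keeps the shrunken point of low rank. -/
def truncatedRidge (s ν : ℝ) : ℝ := if s ≤ ν then ν / (ν + s) else 0

/-- The weighted squared bias `Σ_t ν_t (Y_t - ν_t Y_t / (ν_t + s))²` of (untruncated) ridge
shrinkage at penalty `s`. -/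
def ridgeBias {ι : Type*} [Fintype ι] (ν Y : ι → ℝ) (s : ℝ) : ℝ :=
  ∑ t, ν t * Y t ^ 2 * (s / (ν t + s)) ^ 2

variable {s ν : ℝ}

lemma truncatedRidge_of_lt (h : ν < s) : truncatedRidge s ν = 0 := if_neg h.not_ge

lemma truncatedRidge_nonneg (hs : 0 < s) : 0 ≤ truncatedRidge s ν := by
  unfold truncatedRidge
  split_ifs
  · exact div_nonneg (by linarith) (by linarith)
  · exact le_rfl

lemma truncatedRidge_le_one (hs : 0 < s) : truncatedRidge s ν ≤ 1 := by
  unfold truncatedRidge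
  split_ifs
  · exact div_le_one_of_le₀ (by linarith) (by linarith)
  · exact zero_le_one

lemma sq_truncatedRidge_sub_one_le (hs : 0 < s) (hν : 0 ≤ ν) :
    (truncatedRidge s ν - 1) ^ 2 ≤ 4 * (s / (ν + s)) ^ 2 := by
  have hpos : 0 < ν + s := by linarith
  rw [show 4 * (s / (ν + s)) ^ 2 = (2 * (s / (ν + s))) ^ 2 by ring, sq_le_sq,
    abs_of_pos (show 0 < 2 * (s / (ν + s)) by positivity)]
  rcases le_or_gt s ν with h | h
  · rw [truncatedRidge, if_pos h, div_sub_one hpos.ne', sub_add_cancel_left, neg_div, abs_neg,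
      abs_of_pos (by positivity)]
    linarith [show 0 < s / (ν + s) by positivity]
  · rw [truncatedRidge_of_lt h, zero_sub, abs_neg, abs_one, ← mul_div_assoc, le_div_iff₀ hpos]
    linarith

lemma mul_sq_truncatedRidge_le (hs : 0 < s) (hν : 0 ≤ ν) :
    s * truncatedRidge s ν ^ 2 ≤ s - ν * (s / (ν + s)) ^ 2 := by
  have hpos : 0 < ν + s := by linarith
  have hrw : s - ν * (s / (ν + s)) ^ 2 = s * (ν ^ 2 + ν * s + s ^ 2) / (ν + s) ^ 2 := by
    field_simp
    ring
  rw [hrw, le_div_iff₀ (by positivity), truncatedRidge]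
  split_ifs
  · rw [mul_assoc, ← mul_pow, div_mul_cancel₀ _ hpos.ne']
    gcongr
    nlinarith [mul_nonneg hν hs.le, sq_nonneg s]
  · rw [zero_pow two_ne_zero, mul_zero, zero_mul]
    positivity

variable {ι : Type*} [Fintype ι] {ν Y : ι → ℝ}

lemma ridgeBias_nonneg (hν : ∀ t, 0 ≤ ν t) : 0 ≤ ridgeBias ν Y s :=
  Finset.sum_nonneg fun t _ => mul_nonneg (mul_nonneg (hν t) (sq_nonneg _)) (sq_nonneg _)

lemma ridgeBias_le (hs : 0 < s) (hν : ∀ t, 0 ≤ ν t) :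
    ridgeBias ν Y s ≤ s / 4 * ∑ t, Y t ^ 2 := by
  rw [ridgeBias, Finset.mul_sum]
  refine Finset.sum_le_sum fun t _ => ?_
  have hpos : 0 < ν t + s := by linarith [hν t]
  have hfactor : ν t * (s / (ν t + s)) ^ 2 ≤ s / 4 := by
    rw [div_pow, ← mul_div_assoc, div_le_iff₀ (by positivity)]
    nlinarith [mul_nonneg hs.le (sq_nonneg (ν t - s))]
  calc ν t * Y t ^ 2 * (s / (ν t + s)) ^ 2 = ν t * (s / (ν t + s)) ^ 2 * Y t ^ 2 := by ring
    _ ≤ s / 4 * Y t ^ 2 := mul_le_mul_of_nonneg_right hfactor (sq_nonneg _)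

lemma continuousOn_ridgeBias (hν : ∀ t, 0 ≤ ν t) :
    ContinuousOn (ridgeBias ν Y) (Set.Ioi 0) :=
  continuousOn_finsetSum _ fun t _ => continuousOn_const.mul <|
    (continuousOn_id.div (continuousOn_const.add continuousOn_id) fun _ hs =>
      (add_pos_of_nonneg_of_pos (hν t) hs).ne').pow 2

lemma tendsto_ridgeBias_nhdsGT_zero (hν : ∀ t, 0 ≤ ν t) :
    Filter.Tendsto (ridgeBias ν Y) (nhdsWithin 0 (Set.Ioi 0)) (nhds 0) := by
  have hlim : Filter.Tendsto (fun s : ℝ => s / 4 * ∑ t, Y t ^ 2) (nhdsWithin 0 (Set.Ioi 0))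
      (nhds 0) :=
    ((by fun_prop : Continuous fun s : ℝ => s / 4 * ∑ t, Y t ^ 2).tendsto' 0 0
      (by simp)).mono_left nhdsWithin_le_nhds
  refine squeeze_zero' (Filter.Eventually.of_forall fun s => ridgeBias_nonneg hν) ?_ hlim
  filter_upwards [self_mem_nhdsWithin] with s hs using ridgeBias_le hs hν

lemma tendsto_ridgeBias_atTop (ν Y : ι → ℝ) :
    Filter.Tendsto (ridgeBias ν Y) Filter.atTop (nhds (∑ t, ν t * Y t ^ 2)) := by
  refine tendsto_finsetSum _ fun t _ => ?_
  have hratio : Filter.Tendsto (fun s => s / (ν t + s)) Filter.atTop (nhds 1) := by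
    have hlim := (tendsto_const_nhds (x := ν t)).div_atTop
      (Filter.tendsto_atTop_add_const_left Filter.atTop (ν t) Filter.tendsto_id)
    refine (by simpa using hlim.const_sub 1 : Filter.Tendsto _ _ (nhds (1 : ℝ))).congr' ?_
    filter_upwards [Filter.eventually_gt_atTop (-ν t)] with s hs
    have : ν t + s ≠ 0 := by linarith
    field_simp
    ring
  simpa using (hratio.pow 2).const_mul (ν t * Y t ^ 2)

lemma exists_ridgeBias_eq (hν : ∀ t, 0 ≤ ν t) {c : ℝ} (h0 : 0 < c) (hc : c < ∑ t, ν t * Y t ^ 2) :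
    ∃ s, 0 < s ∧ ridgeBias ν Y s = c :=
  isPreconnected_Ioi.intermediate_value_Ioo (Filter.le_principal_iff.2 self_mem_nhdsWithin)
    (Filter.le_principal_iff.2 (Filter.Ioi_mem_atTop 0)) (continuousOn_ridgeBias hν)
    (tendsto_ridgeBias_nhdsGT_zero hν) (tendsto_ridgeBias_atTop ν Y) ⟨h0, hc⟩

-- `E` and `Q` are the two noise terms of the factorised perturbation of the shrunken point.
lemma sum_mul_sq_truncatedRidge_add_sub_le {E Q : ι → ℝ} (hs : 0 < s) (hν : ∀ t, 0 ≤ ν t) :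
    ∑ t, ν t * (truncatedRidge s (ν t) * Y t + E t + Q t - Y t) ^ 2 ≤
      8 * ridgeBias ν Y s + 4 * ∑ t, max (ν t) s * E t ^ 2 + 4 * ∑ t, max (ν t) s * Q t ^ 2 := by
  simp only [ridgeBias, Finset.mul_sum, ← Finset.sum_add_distrib]
  refine Finset.sum_le_sum fun t _ => ?_
  set g := truncatedRidge s (ν t)
  have hsplit : (g * Y t + E t + Q t - Y t) ^ 2 ≤
      2 * ((g - 1) ^ 2 * Y t ^ 2) + 4 * E t ^ 2 + 4 * Q t ^ 2 := by
    nlinarith [sq_nonneg ((g - 1) * Y t - E t - Q t), sq_nonneg (E t - Q t)]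
  have hbias := mul_le_mul_of_nonneg_right (sq_truncatedRidge_sub_one_le hs (hν t))
    (sq_nonneg (Y t))
  calc ν t * (g * Y t + E t + Q t - Y t) ^ 2
      ≤ ν t * (2 * (4 * (s / (ν t + s)) ^ 2 * Y t ^ 2) + 4 * E t ^ 2 + 4 * Q t ^ 2) :=
        mul_le_mul_of_nonneg_left (by linarith) (hν t)
    _ = 8 * (ν t * Y t ^ 2 * (s / (ν t + s)) ^ 2) + 4 * (ν t * E t ^ 2) +
          4 * (ν t * Q t ^ 2) := by ring
    _ ≤ 8 * (ν t * Y t ^ 2 * (s / (ν t + s)) ^ 2) + 4 * (max (ν t) s * E t ^ 2) +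
          4 * (max (ν t) s * Q t ^ 2) := by gcongr <;> exact le_max_left _ _

-- Shrinking gains `ridgeBias ν Y s / s` in squared norm, which pays for the noise.
lemma mul_sum_sq_truncatedRidge_add_le {E Q : ι → ℝ} (hs : 0 < s) (hν : ∀ t, 0 ≤ ν t)
    (hE : ∑ t, truncatedRidge s (ν t) * Y t * E t ≤ 0)
    (hQ : ∑ t, truncatedRidge s (ν t) * Y t * Q t ≤ 0) :
    s * ∑ t, (truncatedRidge s (ν t) * Y t + E t + Q t) ^ 2 ≤
      s * ∑ t, Y t ^ 2 - ridgeBias ν Y s + 2 * ∑ t, max (ν t) s * E t ^ 2 +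
        2 * ∑ t, max (ν t) s * Q t ^ 2 := by
  have hterm (t : ι) : s * (truncatedRidge s (ν t) * Y t + E t + Q t) ^ 2 ≤
      s * Y t ^ 2 - ν t * Y t ^ 2 * (s / (ν t + s)) ^ 2 +
        2 * s * (truncatedRidge s (ν t) * Y t * E t) +
        2 * s * (truncatedRidge s (ν t) * Y t * Q t) + 2 * (max (ν t) s * E t ^ 2) +
        2 * (max (ν t) s * Q t ^ 2) := by
    have hshrink := mul_le_mul_of_nonneg_right (mul_sq_truncatedRidge_le hs (hν t))
      (sq_nonneg (Y t))
    have hEt := mul_le_mul_of_nonneg_right (le_max_right (ν t) s) (sq_nonneg (E t))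
    have hQt := mul_le_mul_of_nonneg_right (le_max_right (ν t) s) (sq_nonneg (Q t))
    have hcross : 0 ≤ s * (E t - Q t) ^ 2 := by positivity
    nlinarith
  have hsum := Finset.sum_le_sum fun t (_ : t ∈ Finset.univ) => hterm t
  simp only [Finset.sum_add_distrib, Finset.sum_sub_distrib, ← Finset.mul_sum] at hsum
  rw [ridgeBias]
  linarith [mul_nonpos_of_nonneg_of_nonpos (by positivity : 0 ≤ 2 * s) hE,
    mul_nonpos_of_nonneg_of_nonpos (by positivity : 0 ≤ 2 * s) hQ]

end Ridge

/-! ### Determinants of block-diagonal maps -/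

section Det

lemma det_blockDiagonal_sigma {ι : Type*} [Fintype ι] [DecidableEq ι] {κ : ι → Type*}
    [∀ i, Fintype (κ i)] [∀ i, DecidableEq (κ i)] {R : Type*} [CommRing R]
    (M : ∀ i, Matrix (κ i) (κ i) R) :
    (Matrix.blockDiagonal' M).det = ∏ i, (M i).det := by
  let _ : LinearOrder ι := IsWellOrder.linearOrder WellOrderingRel
  rw [(Matrix.blockTriangular_blockDiagonal' M).det_fintype]
  refine Finset.prod_congr rfl fun i _ => ?_
  rw [← Matrix.det_submatrix_equiv_self (Equiv.sigmaSubtype i).symm]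
  congr 1
  ext a b
  exact Matrix.blockDiagonal'_apply_eq M i a b

lemma linearMap_det_piMap {ι R : Type*} [Fintype ι] [CommRing R] {M : ι → Type*}
    [∀ i, AddCommGroup (M i)] [∀ i, Module R (M i)] [∀ i, Module.Free R (M i)]
    [∀ i, Module.Finite R (M i)] (f : ∀ i, M i →ₗ[R] M i) :
    LinearMap.det (LinearMap.pi fun i => f i ∘ₗ LinearMap.proj i) =
      ∏ i, LinearMap.det (f i) := by
  classical
  let b i := Module.Free.chooseBasis R (M i)
  simp_rw [← LinearMap.det_toMatrix (Pi.basis b), ← LinearMap.det_toMatrix (b _)]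
  rw [← det_blockDiagonal_sigma]
  congr 1
  ext ⟨i, a⟩ ⟨j, c⟩
  rcases eq_or_ne i j with rfl | h
  · simp [LinearMap.toMatrix_apply, Matrix.blockDiagonal'_apply_eq, Pi.basis_repr]
  · simp [LinearMap.toMatrix_apply, Matrix.blockDiagonal'_apply_ne _ _ _ h, Pi.basis_repr,
      Pi.single_eq_of_ne h]

end Det

/-! ### Frobenius and operator balls of matrix families -/

instance {m n : Type*} [Countable m] [Countable n] : BorelSpace (Matrix m n ℝ) :=
  inferInstanceAs (BorelSpace (m → n → ℝ))

instance {m n : Type*} [Countable m] [Countable n] : SecondCountableTopology (Matrix m n ℝ) :=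
  inferInstanceAs (SecondCountableTopology (m → n → ℝ))

section Frobenius

variable {m n k : Type*} [Fintype m] [Fintype n] [Fintype k]

lemma continuous_frobSq : Continuous (frobSq : Matrix m n ℝ → ℝ) := by
  unfold frobSq
  fun_prop

lemma frobSq_neg (A : Matrix m n ℝ) : frobSq (-A) = frobSq A := by
  simp [frobSq]

lemma frobSq_transpose (A : Matrix m n ℝ) : frobSq Aᵀ = frobSq A :=
  Finset.sum_comm

lemma frobSq_add_le (A B : Matrix m n ℝ) : frobSq (A + B) ≤ 2 * frobSq A + 2 * frobSq B := by
  simp only [frobSq, Finset.mul_sum, ← Finset.sum_add_distrib, Matrix.add_apply]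
  gcongr with i _ j
  nlinarith [sq_nonneg (A i j - B i j)]

lemma frobSq_eq_trace (A : Matrix m n ℝ) : frobSq A = (A * Aᵀ).trace := by
  simp [frobSq, Matrix.trace, Matrix.mul_apply, sq]

lemma frobSq_mul_of_mul_transpose_eq_one [DecidableEq n] (A : Matrix m n ℝ) {U : Matrix n k ℝ}
    (hU : U * Uᵀ = 1) : frobSq (A * U) = frobSq A := by
  rw [frobSq_eq_trace, frobSq_eq_trace, Matrix.transpose_mul, Matrix.mul_assoc,
    ← Matrix.mul_assoc U, hU, Matrix.one_mul]

open scoped Matrix.Norms.Frobenius in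
lemma frobSq_mul_le (A : Matrix m n ℝ) (B : Matrix n k ℝ) :
    frobSq (A * B) ≤ frobSq A * frobSq B := by
  rw [frobSq_eq_norm_sq, frobSq_eq_norm_sq, frobSq_eq_norm_sq, ← mul_pow]
  gcongr
  exact Matrix.frobenius_norm_mul A B

lemma frobSq_submatrix_le (A : Matrix n k ℝ) {e : m → n} (he : e.Injective) :
    frobSq (A.submatrix e id) ≤ frobSq A := by
  calc frobSq (A.submatrix e id) = ∑ i ∈ Finset.univ.map ⟨e, he⟩, ∑ j, A i j ^ 2 :=
        (Finset.sum_map _ ⟨e, he⟩ fun i => ∑ j, A i j ^ 2).symm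
    _ ≤ frobSq A := Finset.sum_le_sum_of_subset_of_nonneg (Finset.subset_univ _)
        fun _ _ _ => Finset.sum_nonneg fun _ _ => sq_nonneg _

lemma frobSq_mul_diagonal_le [DecidableEq n] (A : Matrix m n ℝ) {τ : n → ℝ} {c : ℝ}
    (hτ : ∀ k, τ k ^ 2 ≤ c) : frobSq (A * Matrix.diagonal τ) ≤ c * frobSq A := by
  simp only [frobSq, Finset.mul_sum, Matrix.mul_diagonal]
  gcongr with i _ j
  rw [mul_pow, mul_comm]
  exact mul_le_mul_of_nonneg_right (hτ j) (sq_nonneg _)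

lemma frobSq_diagonal_mul_le [DecidableEq m] (A : Matrix m n ℝ) {τ : m → ℝ} {c : ℝ}
    (hτ : ∀ k, τ k ^ 2 ≤ c) : frobSq (Matrix.diagonal τ * A) ≤ c * frobSq A := by
  rw [← frobSq_transpose, Matrix.transpose_mul, Matrix.diagonal_transpose, ← frobSq_transpose A]
  exact frobSq_mul_diagonal_le _ hτ

/-- The squared Frobenius norm with column weights `ν`. -/
def weightedFrobSq (ν : n → ℝ) (A : Matrix m n ℝ) : ℝ :=
  ∑ i, ∑ j, ν j * A i j ^ 2

lemma weightedFrobSq_mul_diagonal [DecidableEq n] (A : Matrix m n ℝ) {ν τ : n → ℝ} {c : ℝ}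
    (h : ∀ j, ν j * τ j ^ 2 = c) : weightedFrobSq ν (A * Matrix.diagonal τ) = c * frobSq A := by
  simp only [weightedFrobSq, frobSq, Finset.mul_sum, Matrix.mul_diagonal]
  refine Finset.sum_congr rfl fun i _ => Finset.sum_congr rfl fun j _ => ?_
  rw [← h j]
  ring

lemma continuous_weightedFrobSq (ν : n → ℝ) :
    Continuous (weightedFrobSq ν : Matrix m n ℝ → ℝ) := by
  unfold weightedFrobSq
  fun_prop

end Frobenius

section FactorSpace

/-- Families of matrices with rows indexed by `J l` and columns indexed by `P l`, as an iterated
function space, which carries Lebesgue measure. -/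
abbrev FactorSpace {ι : Type*} (J P : ι → Type*) : Type _ := ∀ l, J l → P l → ℝ

variable {ι : Type*} {J P : ι → Type*}

/-- Multiplication of each row `j` of the `l`-th matrix by the scalar `c l j`. -/
def rowScale (c : ∀ l, J l → ℝ) : FactorSpace J P →ₗ[ℝ] FactorSpace J P :=
  LinearMap.pi fun l => (LinearMap.pi fun j => (c l j • LinearMap.id) ∘ₗ LinearMap.proj j) ∘ₗ
    LinearMap.proj l

/-- Application of the square matrix `A l` to every row of the `l`-th matrix. -/
def rowMul [∀ l, Fintype (P l)] [∀ l, DecidableEq (P l)] (A : ∀ l, Matrix (P l) (P l) ℝ) :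
    FactorSpace J P →ₗ[ℝ] FactorSpace J P :=
  LinearMap.pi fun l => (LinearMap.pi fun j => Matrix.toLin' (A l) ∘ₗ LinearMap.proj j) ∘ₗ
    LinearMap.proj l

lemma of_rowScale [∀ l, Fintype (J l)] [∀ l, DecidableEq (J l)] (c : ∀ l, J l → ℝ)
    (b : FactorSpace J P) (l : ι) :
    Matrix.of (rowScale c b l) = Matrix.diagonal (c l) * Matrix.of (b l) := by
  ext j i
  simp [rowScale]

lemma of_rowMul [∀ l, Fintype (P l)] [∀ l, DecidableEq (P l)] (A : ∀ l, Matrix (P l) (P l) ℝ)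
    (b : FactorSpace J P) (l : ι) : Matrix.of (rowMul A b l) = Matrix.of (b l) * (A l)ᵀ := by
  ext j i
  simp [rowMul, Matrix.mul_apply, Matrix.mulVec, dotProduct, mul_comm]

variable [∀ l, Fintype (J l)] [∀ l, Fintype (P l)]

/-- The ball of radius `r` for the largest of the operator norms. Vectors are written as matrices
with a single row. -/
def opBall (J P : ι → Type*) [∀ l, Fintype (J l)] [∀ l, Fintype (P l)] (r : ℝ) :
    Set (FactorSpace J P) :=
  {v | ∀ l (A : Matrix Unit (J l) ℝ), frobSq (A * Matrix.of (v l)) ≤ r ^ 2 * frobSq A}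

lemma frobSq_mul_le_of_mem_opBall {r : ℝ} {v : FactorSpace J P} (hv : v ∈ opBall J P r) (l : ι)
    {m : Type*} [Fintype m] (A : Matrix m (J l) ℝ) :
    frobSq (A * Matrix.of (v l)) ≤ r ^ 2 * frobSq A := by
  have hrow (i : m) := hv l (A.submatrix (fun _ => i) id)
  simp only [frobSq, Fintype.sum_unique] at hrow
  simp only [frobSq, Finset.mul_sum (s := (Finset.univ : Finset m))]
  exact Finset.sum_le_sum fun i _ => hrow i

lemma isCompact_opBall (r : ℝ) : IsCompact (opBall J P r) := by
  classical
  have hclosed : IsClosed (opBall J P r) := by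
    simp only [opBall, Set.ofPred_forall]
    exact isClosed_iInter fun l => isClosed_iInter fun A => isClosed_le
      (continuous_frobSq.comp (continuous_const.matrix_mul (continuous_apply l))) continuous_const
  refine (isCompact_Icc (a := fun _ _ _ => -|r|) (b := fun _ _ _ => |r|)).of_isClosed_subset
    hclosed fun v hv => ?_
  have hentry (l : ι) (j : J l) (k : P l) : |v l j k| ≤ |r| := by
    have hrow := frobSq_mul_le_of_mem_opBall hv l (Matrix.of fun (_ : Unit) => Pi.single j (1 : ℝ))
    simp only [frobSq, Matrix.mul_apply, Matrix.of_apply, Fintype.sum_unique, Pi.single_apply,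
      ite_mul, one_mul, zero_mul, Finset.sum_ite_eq', Finset.mem_univ, if_true,
      ite_pow, one_pow, ne_eq, OfNat.ofNat_ne_zero, not_false_eq_true, zero_pow, mul_one] at hrow
    exact sq_le_sq.1 ((Finset.single_le_sum (f := fun k => v l j k ^ 2)
      (fun _ _ => sq_nonneg _) (Finset.mem_univ k)).trans hrow)
  exact ⟨fun l j k => (abs_le.1 (hentry l j k)).1, fun l j k => (abs_le.1 (hentry l j k)).2⟩

variable [Fintype ι]

instance : (volume : Measure (FactorSpace J P)).IsAddHaarMeasure :=
  have (l : ι) : (volume : Measure (J l → P l → ℝ)).IsAddHaarMeasure :=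
    Measure.pi.isAddHaarMeasure _
  Measure.pi.isAddHaarMeasure _

/-- The ball of radius `r` for the total Frobenius norm. -/
def frobBall (J P : ι → Type*) [∀ l, Fintype (J l)] [∀ l, Fintype (P l)] (r : ℝ) :
    Set (FactorSpace J P) :=
  {z | ∑ l, frobSq (Matrix.of (z l)) ≤ r ^ 2}

lemma frobBall_subset_opBall (r : ℝ) : frobBall J P r ⊆ opBall J P r := by
  intro z hz l A
  rw [mul_comm (r ^ 2)]
  refine (frobSq_mul_le _ _).trans (mul_le_mul_of_nonneg_left ?_ (frobSq_nonneg A))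
  exact (Finset.single_le_sum (f := fun l => frobSq (Matrix.of (z l)))
    (fun l _ => frobSq_nonneg _) (Finset.mem_univ l)).trans hz

lemma isClosed_frobBall (r : ℝ) : IsClosed (frobBall J P r) :=
  isClosed_le (continuous_finsetSum _ fun l _ => continuous_frobSq.comp (continuous_apply l))
    continuous_const

lemma frobBall_mem_nhds_zero {r : ℝ} (hr : 0 < r) : frobBall J P r ∈ nhds 0 := by
  have hcont : Continuous fun z : FactorSpace J P => ∑ l, frobSq (Matrix.of (z l)) :=
    continuous_finsetSum _ fun l _ => continuous_frobSq.comp (continuous_apply l)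
  refine (hcont.tendsto 0).eventually_le_const ?_
  simpa [frobSq] using pow_pos hr 2

lemma isSymmetricBody_frobBall {r : ℝ} (hr : 0 < r) : IsSymmetricBody (frobBall J P r) where
  isCompact := (isCompact_opBall r).of_isClosed_subset (isClosed_frobBall r)
    (frobBall_subset_opBall r)
  neg_mem z hz := by simpa [frobBall, frobSq] using hz
  mem_nhds_zero := frobBall_mem_nhds_zero hr

omit [Fintype ι] in
lemma isSymmetricBody_opBall [Finite ι] {r : ℝ} (hr : 0 < r) : IsSymmetricBody (opBall J P r) where
  isCompact := isCompact_opBall r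
  neg_mem v hv l A := by
    change frobSq (A * -Matrix.of (v l)) ≤ _
    rw [Matrix.mul_neg, frobSq_neg]
    exact hv l A
  mem_nhds_zero :=
    have := Fintype.ofFinite ι
    Filter.mem_of_superset (frobBall_mem_nhds_zero hr) (frobBall_subset_opBall r)

lemma det_rowScale (c : ∀ l, J l → ℝ) :
    LinearMap.det (rowScale (P := P) c) = ∏ l, ∏ j, c l j ^ Fintype.card (P l) := by
  simp [rowScale, linearMap_det_piMap]

lemma det_rowMul [∀ l, DecidableEq (P l)] (A : ∀ l, Matrix (P l) (P l) ℝ) :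
    LinearMap.det (rowMul (J := J) A) = ∏ l, (A l).det ^ Fintype.card (J l) := by
  simp [rowMul, linearMap_det_piMap]

end FactorSpace

/-! ### Noisy low-rank factorisations of a shrunken point -/

section RowSelect

variable {J M P : Type*} [DecidableEq M]

/-- The matrix whose `j`-th row is the standard basis vector `e j`. -/
def rowSelect (e : J → M) : Matrix J M ℝ := (1 : Matrix M M ℝ).submatrix e id

lemma rowSelect_mul [Fintype M] (e : J → M) (A : Matrix M P ℝ) :
    rowSelect e * A = A.submatrix e id := by
  ext j i
  simp [rowSelect, Matrix.mul_apply, Matrix.one_apply]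

lemma rowSelect_mul_transpose [Fintype M] [DecidableEq J] {e : J → M} (he : e.Injective) :
    rowSelect e * (rowSelect e)ᵀ = 1 := by
  rw [rowSelect_mul, rowSelect, Matrix.transpose_submatrix, Matrix.submatrix_submatrix,
    Matrix.transpose_one]
  exact Matrix.submatrix_one e he

variable [Fintype J] [Fintype M]

lemma diagonal_comp_mul_rowSelect [DecidableEq J] (e : J → M) (τ : M → ℝ) :
    Matrix.diagonal (τ ∘ e) * rowSelect e = rowSelect e * Matrix.diagonal τ := by
  ext j k
  rw [Matrix.diagonal_mul, Matrix.mul_diagonal, mul_comm]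
  rcases eq_or_ne (e j) k with rfl | h
  · rfl
  · simp [rowSelect, h]

lemma diagonal_mul_transpose_rowSelect_mul {e : J → M} (he : e.Injective) {g : M → ℝ}
    (hg : ∀ k ∉ Set.range e, g k = 0) :
    Matrix.diagonal g * ((rowSelect e)ᵀ * rowSelect e) = Matrix.diagonal g := by
  ext k k'
  rw [Matrix.diagonal_mul, Matrix.mul_apply, Matrix.diagonal_apply]
  by_cases hk : k ∈ Set.range e
  · obtain ⟨j, rfl⟩ := hk
    rw [Finset.sum_eq_single j (fun j' _ h => by simp [rowSelect, he.ne h]) (by simp)]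
    simp [rowSelect, Matrix.one_apply]
  · simp [hg k hk]

lemma noisyFactors_transpose_mul_mul [DecidableEq J] {e : J → M} (he : e.Injective) {g : M → ℝ}
    (hg : ∀ k ∉ Set.range e, g k = 0) (τ : M → ℝ) {U : Matrix M M ℝ} (hU : Uᵀ * U = 1)
    (y : Matrix P M ℝ) (b : Matrix J P ℝ) (b' : Matrix J M ℝ) {z : Matrix J P ℝ}
    (hz : z = rowSelect e * (y * Matrix.diagonal g)ᵀ + Matrix.diagonal (τ ∘ e) * b) :
    zᵀ * (rowSelect e * Uᵀ + b' * (U * Matrix.diagonal τ)ᵀ) * U =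
      y * Matrix.diagonal g + bᵀ * rowSelect e * Matrix.diagonal τ +
        zᵀ * b' * Matrix.diagonal τ := by
  have hzE : zᵀ * rowSelect e =
      y * Matrix.diagonal g + bᵀ * rowSelect e * Matrix.diagonal τ := by
    rw [hz, Matrix.transpose_add, Matrix.transpose_mul, Matrix.transpose_transpose,
      Matrix.transpose_mul, Matrix.diagonal_transpose, Matrix.add_mul]
    simp only [Matrix.mul_assoc]
    rw [diagonal_mul_transpose_rowSelect_mul he hg, diagonal_comp_mul_rowSelect]
  rw [← hzE, Matrix.transpose_mul, Matrix.diagonal_transpose, Matrix.mul_add, Matrix.add_mul]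
  simp only [Matrix.mul_assoc, hU, Matrix.mul_one]

end RowSelect

section NoiseScale

/-- The amplitude `1 / (64 ρ √(max ν s))` of the noise in a direction of weight `ν`. -/
def noiseScale (ρ s ν : ℝ) : ℝ := 1 / (64 * ρ * √(max ν s))

variable {ρ s ν ν' : ℝ}

lemma noiseScale_pos (hρ : 0 < ρ) (hs : 0 < s) : 0 < noiseScale ρ s ν := by
  have := Real.sqrt_pos.2 (hs.trans_le (le_max_right ν s))
  unfold noiseScale
  positivity

lemma max_mul_sq_noiseScale (hs : 0 < s) :
    max ν s * noiseScale ρ s ν ^ 2 = 1 / (4096 * ρ ^ 2) := by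
  have hmax := hs.trans_le (le_max_right ν s)
  rw [noiseScale, div_pow, mul_pow, Real.sq_sqrt hmax.le]
  field_simp
  norm_num

lemma sq_noiseScale_le (hρ : 0 < ρ) (hs : 0 < s) (hsρ : 1 / 16 ≤ s * ρ ^ 2) :
    noiseScale ρ s ν ^ 2 ≤ 1 / 4 := by
  have hle : s * noiseScale ρ s ν ^ 2 ≤ 1 / (4096 * ρ ^ 2) :=
    (mul_le_mul_of_nonneg_right (le_max_right ν s) (sq_nonneg _)).trans_eq
      (max_mul_sq_noiseScale hs)
  rw [le_div_iff₀ (by positivity)] at hle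
  nlinarith [mul_le_mul_of_nonneg_right hsρ (sq_nonneg (noiseScale ρ s ν))]

lemma noiseScale_le_noiseScale (hρ : 0 < ρ) (hs : 0 < s) (h : ν' ≤ ν) :
    noiseScale ρ s ν ≤ noiseScale ρ s ν' := by
  have := Real.sqrt_pos.2 (hs.trans_le (le_max_right ν' s))
  unfold noiseScale
  gcongr

end NoiseScale

section Perturbation

variable {ι : Type*} {J P M : ι → Type*} [∀ l, Fintype (J l)] [∀ l, Fintype (P l)]
  [∀ l, Fintype (M l)]

lemma add_rowScale_mem_frobBall [Fintype ι] {r : ℝ} {c b : FactorSpace J P} {τ : ∀ l, J l → ℝ}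
    (hc : c ∈ frobBall J P (r / 2)) (hb : b ∈ frobBall J P r) (hτ : ∀ l j, τ l j ^ 2 ≤ 1 / 4) :
    c + rowScale τ b ∈ frobBall J P r := by
  classical
  have hterm (l : ι) : frobSq (Matrix.of ((c + rowScale τ b) l)) ≤
      2 * frobSq (Matrix.of (c l)) + 1 / 2 * frobSq (Matrix.of (b l)) := by
    change frobSq (Matrix.of (c l) + Matrix.of (rowScale τ b l)) ≤ _
    rw [of_rowScale]
    linarith [frobSq_add_le (Matrix.of (c l)) (Matrix.diagonal (τ l) * Matrix.of (b l)),
      frobSq_diagonal_mul_le (Matrix.of (b l)) (hτ l)]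
  have hsum := Finset.sum_le_sum fun l (_ : l ∈ Finset.univ) => hterm l
  rw [Finset.sum_add_distrib, ← Finset.mul_sum, ← Finset.mul_sum] at hsum
  simp only [frobBall, Set.mem_ofPred_eq] at hc hb ⊢
  linarith

lemma add_rowMul_mem_opBall [∀ l, DecidableEq (M l)] {r : ℝ} {c b : FactorSpace J M}
    {A : ∀ l, Matrix (M l) (M l) ℝ} (hc : c ∈ opBall J M (r / 2)) (hb : b ∈ opBall J M r)
    (hA : ∀ l (x : Matrix Unit (M l) ℝ), frobSq (x * (A l)ᵀ) ≤ 1 / 4 * frobSq x) :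
    c + rowMul A b ∈ opBall J M r := by
  intro l x
  change frobSq (x * (Matrix.of (c l) + Matrix.of (rowMul A b l))) ≤ _
  rw [of_rowMul, Matrix.mul_add, ← Matrix.mul_assoc]
  linarith [frobSq_add_le (x * Matrix.of (c l)) (x * Matrix.of (b l) * (A l)ᵀ), hc l x, hb l x,
    hA l (x * Matrix.of (b l))]

end Perturbation

/-! ### Mass of low-rank approximations -/

section RidgeFamily

variable {ι : Type*} {P M : ι → Type*}

/-- The entries of a family of matrices, as a single vector. -/
def entries (A : ∀ l, Matrix (P l) (M l) ℝ) : (Σ l, P l × M l) → ℝ := fun t => A t.1 t.2.1 t.2.2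

/-- Column weights of a family of matrices, as weights of its `entries`. -/
def entryWeights (P : ι → Type*) (ν : ∀ l, M l → ℝ) : (Σ l, P l × M l) → ℝ := fun t => ν t.1 t.2.2

variable [Fintype ι] [∀ l, Fintype (P l)] [∀ l, Fintype (M l)]

lemma sum_sq_entries (A : ∀ l, Matrix (P l) (M l) ℝ) :
    ∑ t, entries A t ^ 2 = ∑ l, frobSq (A l) := by
  simp only [entries, frobSq, Fintype.sum_sigma, Fintype.sum_prod_type]

lemma sum_mul_sq_entries (ν : ∀ l, M l → ℝ) (A : ∀ l, Matrix (P l) (M l) ℝ) :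
    ∑ t, entryWeights P ν t * entries A t ^ 2 = ∑ l, weightedFrobSq (ν l) (A l) := by
  simp only [entries, entryWeights, weightedFrobSq, Fintype.sum_sigma, Fintype.sum_prod_type]

/-- The pairing of the shrunken point with a noise term; its sign decides which half of the noise
is discarded. -/
def ridgePairing (s : ℝ) (ν : ∀ l, M l → ℝ) (y E : ∀ l, Matrix (P l) (M l) ℝ) : ℝ :=
  ∑ t, truncatedRidge s (entryWeights P ν t) * entries y t * entries E t

lemma ridgePairing_neg (s : ℝ) (ν : ∀ l, M l → ℝ) (y E : ∀ l, Matrix (P l) (M l) ℝ) :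
    ridgePairing s ν y (-E) = -ridgePairing s ν y E := by
  simp [ridgePairing, entries]

variable [∀ l, DecidableEq (M l)]

lemma ridge_family_le {s ρ : ℝ} {ν : ∀ l, M l → ℝ} {y E Q : ∀ l, Matrix (P l) (M l) ℝ}
    (hs : 0 < s) (hν : ∀ l k, 0 ≤ ν l k) (hy : ∑ l, frobSq (y l) ≤ ρ ^ 2)
    (hbias : ridgeBias (entryWeights P ν) (entries y) s = 1 / 64)
    (hE : ∑ l, weightedFrobSq (fun k => max (ν l k) s) (E l) ≤ 4 / 4096)
    (hQ : ∑ l, weightedFrobSq (fun k => max (ν l k) s) (Q l) ≤ 16 / 4096)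
    (hyE : ridgePairing s ν y E ≤ 0) (hyQ : ridgePairing s ν y Q ≤ 0) :
    ∑ l, frobSq (y l * Matrix.diagonal (fun k => truncatedRidge s (ν l k)) + E l + Q l) ≤ ρ ^ 2 ∧
    ∑ l, weightedFrobSq (ν l)
      (y l * Matrix.diagonal (fun k => truncatedRidge s (ν l k)) + E l + Q l - y l) ≤ 1 / 4 := by
  have hν' : ∀ t, 0 ≤ entryWeights P ν t := fun t => hν _ _
  rw [← sum_mul_sq_entries] at hE hQ
  rw [← sum_sq_entries] at hy ⊢
  rw [← sum_mul_sq_entries]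
  have hnorm := mul_sum_sq_truncatedRidge_add_le hs hν' hyE hyQ
  have hdist := sum_mul_sq_truncatedRidge_add_sub_le (Y := entries y) (E := entries E)
    (Q := entries Q) hs hν'
  simp only [entries, entryWeights, Matrix.add_apply, Matrix.sub_apply, Matrix.mul_diagonal]
    at hnorm hdist hE hQ hbias hy ⊢
  simp only [mul_comm (y _ _ _)]
  rw [hbias] at hnorm hdist
  exact ⟨(le_of_mul_le_mul_left (by linarith) hs).trans hy, by linarith⟩

end RidgeFamily

section NoisyFactors

variable {ι : Type*} {J P M : ι → Type*} [∀ l, Fintype (J l)] [∀ l, Fintype (M l)]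

/-- The family of products `zᵀ v` of a pair of families of factors. -/
def factorProd (z : FactorSpace J P) (v : FactorSpace J M) (l : ι) : Matrix (P l) (M l) ℝ :=
  (Matrix.of (z l))ᵀ * Matrix.of (v l)

omit [∀ l, Fintype (M l)] in
lemma continuous_factorProd :
    Continuous fun zv : FactorSpace J P × FactorSpace J M => factorProd zv.1 zv.2 :=
  continuous_pi fun l => Continuous.matrix_mul
    (((continuous_apply l).comp continuous_fst).matrix_transpose)
    ((continuous_apply l).comp continuous_snd)

variable [∀ l, DecidableEq (M l)]

/-- The left factor of the family `y l * diagonal (g l)`, in the frame `e`. -/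
def shrunkFactor (e : ∀ l, J l → M l) (g : ∀ l, M l → ℝ) (y : ∀ l, Matrix (P l) (M l) ℝ) :
    FactorSpace J P :=
  fun l => rowSelect (e l) * (y l * Matrix.diagonal (g l))ᵀ

/-- The frame consisting of the columns `e l` of `U l`, as a right factor. -/
def frameFactor (e : ∀ l, J l → M l) (U : ∀ l, Matrix (M l) (M l) ℝ) : FactorSpace J M :=
  fun l => rowSelect (e l) * (U l)ᵀ

/-- The contribution to the product of noise `b` of amplitude `τ` in the left factor. -/
def leftNoise (e : ∀ l, J l → M l) (τ : ∀ l, M l → ℝ) (b : FactorSpace J P) (l : ι) :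
    Matrix (P l) (M l) ℝ :=
  (Matrix.of (b l))ᵀ * rowSelect (e l) * Matrix.diagonal (τ l)

/-- The contribution to the product of noise `b'` of amplitude `τ` in the right factor, when the
left factor is `z`. -/
def rightNoise (τ : ∀ l, M l → ℝ) (z : FactorSpace J P) (b' : FactorSpace J M) (l : ι) :
    Matrix (P l) (M l) ℝ :=
  factorProd z b' l * Matrix.diagonal (τ l)

lemma leftNoise_neg (e : ∀ l, J l → M l) (τ : ∀ l, M l → ℝ) (b : FactorSpace J P) :
    leftNoise e τ (-b) = -leftNoise e τ b := by
  funext l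
  change (-Matrix.of (b l))ᵀ * _ * _ = -((Matrix.of (b l))ᵀ * _ * _)
  rw [Matrix.transpose_neg, Matrix.neg_mul, Matrix.neg_mul]

lemma rightNoise_neg (τ : ∀ l, M l → ℝ) (z : FactorSpace J P) (b' : FactorSpace J M) :
    rightNoise τ z (-b') = -rightNoise τ z b' := by
  funext l
  change _ * (-Matrix.of (b' l)) * _ = -(_ * Matrix.of (b' l) * _)
  rw [Matrix.mul_neg, Matrix.neg_mul]

lemma factorProd_noisy_mul {e : ∀ l, J l → M l} (he : ∀ l, (e l).Injective)
    {g : ∀ l, M l → ℝ} (hg : ∀ l, ∀ k ∉ Set.range (e l), g l k = 0)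
    (τ : ∀ l, M l → ℝ) {U : ∀ l, Matrix (M l) (M l) ℝ} (hU : ∀ l, (U l)ᵀ * U l = 1)
    (y : ∀ l, Matrix (P l) (M l) ℝ) (b : FactorSpace J P) (b' : FactorSpace J M)
    {z : FactorSpace J P} (hz : z = shrunkFactor e g y + rowScale (fun l => τ l ∘ e l) b) (l : ι) :
    factorProd z (frameFactor e U + rowMul (fun l => U l * Matrix.diagonal (τ l)) b') l * U l =
      y l * Matrix.diagonal (g l) + leftNoise e τ b l + rightNoise τ z b' l := by
  classical
  have hzl : Matrix.of (z l) = rowSelect (e l) * (y l * Matrix.diagonal (g l))ᵀ +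
      Matrix.diagonal (τ l ∘ e l) * Matrix.of (b l) := by
    rw [← of_rowScale (fun l => τ l ∘ e l), hz]
    rfl
  have hvl : Matrix.of ((frameFactor e U + rowMul (fun l => U l * Matrix.diagonal (τ l)) b') l) =
      rowSelect (e l) * (U l)ᵀ + Matrix.of (b' l) * (U l * Matrix.diagonal (τ l))ᵀ := by
    rw [← of_rowMul (fun l => U l * Matrix.diagonal (τ l))]
    rfl
  rw [factorProd, hvl]
  exact noisyFactors_transpose_mul_mul (he l) (hg l) (τ l) (hU l) (y l) _ _ hzl

variable [∀ l, Fintype (P l)]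

lemma shrunkFactor_mem_frobBall [Fintype ι] {e : ∀ l, J l → M l} (he : ∀ l, (e l).Injective)
    {g : ∀ l, M l → ℝ} (hg : ∀ l k, g l k ^ 2 ≤ 1) {y : ∀ l, Matrix (P l) (M l) ℝ} {r : ℝ}
    (hy : ∑ l, frobSq (y l) ≤ r ^ 2) : shrunkFactor e g y ∈ frobBall J P r := by
  refine (Finset.sum_le_sum fun l _ => ?_).trans hy
  change frobSq (rowSelect (e l) * (y l * Matrix.diagonal (g l))ᵀ) ≤ _
  rw [rowSelect_mul]
  refine (frobSq_submatrix_le _ (he l)).trans ?_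
  rw [frobSq_transpose]
  exact (frobSq_mul_diagonal_le _ (hg l)).trans_eq (one_mul _)

lemma frameFactor_mem_opBall {e : ∀ l, J l → M l} (he : ∀ l, (e l).Injective)
    {U : ∀ l, Matrix (M l) (M l) ℝ} (hU : ∀ l, (U l)ᵀ * U l = 1) :
    frameFactor e U ∈ opBall J M 1 := by
  classical
  intro l x
  change frobSq (x * (rowSelect (e l) * (U l)ᵀ)) ≤ _
  rw [← Matrix.mul_assoc, frobSq_mul_of_mul_transpose_eq_one _ (by rw [Matrix.transpose_transpose,
    hU l]), frobSq_mul_of_mul_transpose_eq_one _ (rowSelect_mul_transpose (he l)), one_pow, one_mul]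

variable {s ρ : ℝ} {ν : ∀ l, M l → ℝ}

lemma frobSq_mul_noise_transpose_le (hρ : 0 < ρ) (hs : 0 < s) (hsρ : 1 / 16 ≤ s * ρ ^ 2)
    {U : ∀ l, Matrix (M l) (M l) ℝ} (hU : ∀ l, (U l)ᵀ * U l = 1) (l : ι)
    (x : Matrix Unit (M l) ℝ) :
    frobSq (x * (U l * Matrix.diagonal fun k => noiseScale ρ s (ν l k))ᵀ) ≤ 1 / 4 * frobSq x := by
  rw [Matrix.transpose_mul, Matrix.diagonal_transpose, ← Matrix.mul_assoc,
    frobSq_mul_of_mul_transpose_eq_one _ (by rw [Matrix.transpose_transpose, hU l])]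
  exact frobSq_mul_diagonal_le _ fun k => sq_noiseScale_le hρ hs hsρ

variable [Fintype ι]

lemma sum_weightedFrobSq_leftNoise_le (hρ : 0 < ρ) (hs : 0 < s)
    {e : ∀ l, J l → M l} (he : ∀ l, (e l).Injective) {b : FactorSpace J P}
    (hb : b ∈ frobBall J P (2 * ρ)) :
    ∑ l, weightedFrobSq (fun k => max (ν l k) s)
      (leftNoise e (fun l k => noiseScale ρ s (ν l k)) b l) ≤ 4 / 4096 := by
  classical
  calc _ = 1 / (4096 * ρ ^ 2) * ∑ l, frobSq (Matrix.of (b l)) := by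
        rw [Finset.mul_sum]
        refine Finset.sum_congr rfl fun l _ => ?_
        rw [leftNoise, weightedFrobSq_mul_diagonal _ fun k => max_mul_sq_noiseScale hs,
          frobSq_mul_of_mul_transpose_eq_one _ (rowSelect_mul_transpose (he l)), frobSq_transpose]
    _ ≤ 1 / (4096 * ρ ^ 2) * (2 * ρ) ^ 2 := by gcongr; exact hb
    _ = 4 / 4096 := by field_simp; norm_num

lemma sum_weightedFrobSq_rightNoise_le (hρ : 0 < ρ) (hs : 0 < s) {z : FactorSpace J P}
    (hz : z ∈ frobBall J P (2 * ρ)) {b' : FactorSpace J M} (hb' : b' ∈ opBall J M 2) :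
    ∑ l, weightedFrobSq (fun k => max (ν l k) s)
      (rightNoise (fun l k => noiseScale ρ s (ν l k)) z b' l) ≤ 16 / 4096 := by
  calc _ ≤ 1 / (4096 * ρ ^ 2) * ∑ l, 2 ^ 2 * frobSq (Matrix.of (z l)) := by
        rw [Finset.mul_sum]
        refine Finset.sum_le_sum fun l _ => ?_
        rw [rightNoise, weightedFrobSq_mul_diagonal _ fun k => max_mul_sq_noiseScale hs,
          ← frobSq_transpose (Matrix.of (z l))]
        gcongr
        exact frobSq_mul_le_of_mem_opBall hb' l _
    _ ≤ 1 / (4096 * ρ ^ 2) * (2 ^ 2 * (2 * ρ) ^ 2) := by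
        rw [← Finset.mul_sum]
        gcongr
        exact hz
    _ = 16 / 4096 := by field_simp; norm_num

end NoisyFactors

section LowRankMass

variable {ι : Type*} {P M : ι → Type*} [Fintype ι] [∀ l, Fintype (P l)] [∀ l, Fintype (M l)]

/-- The families `w` of norm at most `ρ` whose coordinates `w l * U l` in the frames `U`
approximate `y` in the weights `ν`. -/
def ridgeGoodSet (ρ : ℝ) (ν : ∀ l, M l → ℝ) (U : ∀ l, Matrix (M l) (M l) ℝ)
    (y : ∀ l, Matrix (P l) (M l) ℝ) : Set (∀ l, Matrix (P l) (M l) ℝ) :=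
  {w | ∑ l, frobSq (w l) ≤ ρ ^ 2 ∧ ∑ l, weightedFrobSq (ν l) (w l * U l - y l) ≤ 1 / 4}

lemma isClosed_ridgeGoodSet (ρ : ℝ) (ν : ∀ l, M l → ℝ) (U : ∀ l, Matrix (M l) (M l) ℝ)
    (y : ∀ l, Matrix (P l) (M l) ℝ) : IsClosed (ridgeGoodSet ρ ν U y) := by
  rw [ridgeGoodSet, Set.ofPred_and]
  refine IsClosed.inter (isClosed_le ?_ continuous_const) (isClosed_le ?_ continuous_const)
  · exact continuous_finsetSum _ fun l _ => continuous_frobSq.comp (continuous_apply l)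
  · exact continuous_finsetSum _ fun l _ => (continuous_weightedFrobSq _).comp (by fun_prop)

variable {J : ι → Type*} [∀ l, Fintype (J l)] [∀ l, DecidableEq (M l)] {s ρ : ℝ}
  {ν : ∀ l, M l → ℝ} {U : ∀ l, Matrix (M l) (M l) ℝ} {y : ∀ l, Matrix (P l) (M l) ℝ}
  {e : ∀ l, J l → M l}

lemma factorProd_noisy_mem_ridgeGoodSet (hρ : 0 < ρ) (hs : 0 < s) (hν : ∀ l k, 0 ≤ ν l k)
    (hU : ∀ l, (U l)ᵀ * U l = 1) (hy : ∑ l, frobSq (y l) ≤ ρ ^ 2)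
    (hbias : ridgeBias (entryWeights P ν) (entries y) s = 1 / 64) (he : ∀ l, (e l).Injective)
    (hes : ∀ l, ∀ k ∉ Set.range (e l), ν l k < s) {b : FactorSpace J P}
    (hb : b ∈ frobBall J P (2 * ρ)) {b' : FactorSpace J M} (hb' : b' ∈ opBall J M 2)
    {τ : ∀ l, M l → ℝ} (hτ : τ = fun l k => noiseScale ρ s (ν l k)) {z : FactorSpace J P}
    (hz : z = shrunkFactor e (fun l k => truncatedRidge s (ν l k)) y +
      rowScale (fun l => τ l ∘ e l) b)
    (hzmem : z ∈ frobBall J P (2 * ρ)) (hyb : ridgePairing s ν y (leftNoise e τ b) ≤ 0)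
    (hyb' : ridgePairing s ν y (rightNoise τ z b') ≤ 0) :
    factorProd z (frameFactor e U + rowMul (fun l => U l * Matrix.diagonal (τ l)) b') ∈
      ridgeGoodSet ρ ν U y := by
  have hprod := factorProd_noisy_mul he
    (fun l k hk => truncatedRidge_of_lt (hes l k hk)) τ hU y b b' hz
  have hbounds := ridge_family_le hs hν hy hbias
    (hτ ▸ sum_weightedFrobSq_leftNoise_le hρ hs he hb)
    (hτ ▸ sum_weightedFrobSq_rightNoise_le hρ hs hzmem hb') hyb hyb'
  simp only [← hprod] at hbounds
  refine ⟨?_, hbounds.2⟩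
  convert hbounds.1 using 2 with l
  exact (frobSq_mul_of_mul_transpose_eq_one _ (mul_eq_one_comm.1 (hU l))).symm

lemma ofReal_prod_noiseScale_le_cond_prod (hρ : 0 < ρ) (hs : 0 < s) (hsρ : 1 / 16 ≤ s * ρ ^ 2)
    (hν : ∀ l k, 0 ≤ ν l k) (hU : ∀ l, (U l)ᵀ * U l = 1) (hy : ∑ l, frobSq (y l) ≤ ρ ^ 2)
    (hbias : ridgeBias (entryWeights P ν) (entries y) s = 1 / 64) (he : ∀ l, (e l).Injective)
    (hes : ∀ l, ∀ k ∉ Set.range (e l), ν l k < s) :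
    ENNReal.ofReal (1 / 4 * ((∏ l, ∏ j, noiseScale ρ s (ν l (e l j)) ^ Fintype.card (P l)) *
      ∏ l, ∏ k, noiseScale ρ s (ν l k) ^ Fintype.card (J l))) ≤
      ((ProbabilityTheory.cond volume (frobBall J P (2 * ρ))).prod
        (ProbabilityTheory.cond volume (opBall J M 2)))
        {zv | factorProd zv.1 zv.2 ∈ ridgeGoodSet ρ ν U y} := by
  set τ : ∀ l, M l → ℝ := fun l k => noiseScale ρ s (ν l k) with hτ
  have hτpos (l : ι) (k : M l) : 0 < τ l k := noiseScale_pos hρ hs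
  have hmaps₁ : ∀ b ∈ frobBall J P (2 * ρ), shrunkFactor e (fun l k => truncatedRidge s (ν l k)) y +
      rowScale (fun l => τ l ∘ e l) b ∈ frobBall J P (2 * ρ) := fun b hb =>
    add_rowScale_mem_frobBall (shrunkFactor_mem_frobBall he (fun l k => (sq_le_one_iff₀
      (truncatedRidge_nonneg hs)).2 (truncatedRidge_le_one hs)) (by simpa using hy)) hb
      fun l j => sq_noiseScale_le hρ hs hsρ
  have hmaps₂ : ∀ b ∈ opBall J M 2,
      frameFactor e U + rowMul (fun l => U l * Matrix.diagonal (τ l)) b ∈ opBall J M 2 :=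
    fun b hb => add_rowMul_mem_opBall (by simpa using frameFactor_mem_opBall he hU) hb
      (frobSq_mul_noise_transpose_le hρ hs hsρ hU)
  have hmass := (isSymmetricBody_frobBall (J := J) (P := P) (r := 2 * ρ)
      (by positivity)).ofReal_abs_det_mul_le_cond_prod
    (isSymmetricBody_opBall (J := J) (P := M) two_pos) volume volume
    ((isClosed_ridgeGoodSet ρ ν U y).preimage continuous_factorProd).measurableSet _ _
    (f₁ := fun b => ridgePairing s ν y (leftNoise e τ b))
    (fun b => by simp only [leftNoise_neg, ridgePairing_neg]) hmaps₁ _ _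
    (f₂ := fun z b => ridgePairing s ν y (rightNoise τ z b))
    (fun z b => by simp only [rightNoise_neg, ridgePairing_neg]) hmaps₂
    fun b hb hyb b' hb' hyb' => factorProd_noisy_mem_ridgeGoodSet hρ hs hν hU hy hbias he hes hb hb'
      hτ rfl (hmaps₁ b hb) hyb hyb'
  have hdetU (l : ι) : |(U l).det| = 1 := by
    have := congrArg Matrix.det (hU l)
    rw [Matrix.det_mul, Matrix.det_transpose, Matrix.det_one] at this
    rcases mul_self_eq_one_iff.1 this with h | h <;> simp [h]
  refine le_of_eq_of_le ?_ hmass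
  rw [← ENNReal.ofReal_mul (by positivity), det_rowScale, det_rowMul]
  congr 1
  simp only [Finset.abs_prod, abs_pow, Matrix.det_mul, abs_mul, hdetU, one_mul, Function.comp_apply,
    Matrix.det_diagonal, abs_of_pos (hτpos _ _), Finset.prod_pow]
  ring

lemma prod_pow_card_le_prod_pow_card {α : Type*} [Fintype α] (H : Finset α)
    {f : α → ℝ} (hf : ∀ k, 0 ≤ f k) (h : ∀ k ∈ H, ∀ k' ∉ H, f k ≤ f k') :
    ∏ k ∈ H, f k ^ Fintype.card α ≤ ∏ k, f k ^ H.card := by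
  classical
  have hcross : ∏ k ∈ H, ∏ _k' ∈ Hᶜ, f k ≤ ∏ k' ∈ Hᶜ, ∏ _k ∈ H, f k' := by
    rw [Finset.prod_comm]
    exact Finset.prod_le_prod (fun _ _ => Finset.prod_nonneg fun k _ => hf k) fun k' hk' =>
      Finset.prod_le_prod (fun k _ => hf k) fun k hk => h k hk k' (Finset.mem_compl.1 hk')
  simp only [Finset.prod_const, ← Finset.prod_mul_prod_compl H fun k => f k ^ H.card,
    ← Finset.card_add_card_compl H, pow_add, Finset.prod_mul_distrib] at hcross ⊢
  exact mul_le_mul_of_nonneg_left hcross (Finset.prod_nonneg fun k _ => pow_nonneg (hf k) _)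

lemma exists_ofReal_prod_le_cond_prod (hρ : 0 < ρ) (hν : ∀ l k, 0 ≤ ν l k)
    (hU : ∀ l, (U l)ᵀ * U l = 1) (hy : ∑ l, frobSq (y l) ≤ ρ ^ 2)
    (hlarge : 1 / 64 < ∑ l, weightedFrobSq (ν l) (y l)) :
    ∃ H : ∀ l, Finset (M l), (∀ l, ∀ k ∈ H l, 1 / 16 ≤ ν l k * ρ ^ 2) ∧
      ENNReal.ofReal (1 / 4 * ∏ l, ∏ k ∈ H l,
        (1 / (64 * ρ * √(ν l k))) ^ (Fintype.card (P l) + Fintype.card (M l))) ≤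
      ((ProbabilityTheory.cond volume (frobBall (fun l => Fin (H l).card) P (2 * ρ))).prod
        (ProbabilityTheory.cond volume (opBall (fun l => Fin (H l).card) M 2)))
        {zv | factorProd zv.1 zv.2 ∈ ridgeGoodSet ρ ν U y} := by
  have hν' : ∀ t, 0 ≤ entryWeights P ν t := fun t => hν _ _
  obtain ⟨s, hs, hbias⟩ := exists_ridgeBias_eq hν' (by norm_num : (0 : ℝ) < 1 / 64)
    (hlarge.trans_eq (sum_mul_sq_entries ν y).symm)
  have hsρ : 1 / 16 ≤ s * ρ ^ 2 := by
    have := ridgeBias_le (Y := entries y) hs hν'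
    rw [hbias, sum_sq_entries] at this
    nlinarith [mul_le_mul_of_nonneg_left hy hs.le]
  set H : ∀ l, Finset (M l) := fun l => {k | s ≤ ν l k} with hH
  have hmem (l : ι) (k : M l) : k ∈ H l ↔ s ≤ ν l k := by simp [hH]
  refine ⟨H, fun l k hk => hsρ.trans ?_, le_trans (ENNReal.ofReal_le_ofReal ?_)
    (ofReal_prod_noiseScale_le_cond_prod (e := fun l j => ((H l).equivFin.symm j : M l))
      hρ hs hsρ hν hU hy hbias (fun l => Subtype.val_injective.comp (H l).equivFin.symm.injective)
      fun l k hk => not_le.1 fun h => hk ⟨(H l).equivFin ⟨k, (hmem l k).2 h⟩, by simp⟩)⟩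
  · exact mul_le_mul_of_nonneg_right ((hmem l k).1 hk) (sq_nonneg ρ)
  · rw [← Finset.prod_mul_distrib]
    gcongr with l
    have hscale : ∀ k ∈ H l, 1 / (64 * ρ * √(ν l k)) = noiseScale ρ s (ν l k) := fun k hk => by
      rw [noiseScale, max_eq_left ((hmem l k).1 hk)]
    rw [Finset.prod_congr rfl fun k hk => by rw [hscale k hk, pow_add], Finset.prod_mul_distrib,
      ← Finset.prod_coe_sort, ← (H l).equivFin.symm.prod_comp, Fintype.card_fin]
    gcongr
    · exact Finset.prod_nonneg fun j _ => (pow_pos (noiseScale_pos hρ hs) _).le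
    · exact prod_pow_card_le_prod_pow_card (H l) (fun k => (noiseScale_pos hρ hs).le)
        fun k hk k' hk' => noiseScale_le_noiseScale hρ hs
          ((not_le.1 (mt (hmem l k').2 hk')).le.trans ((hmem l k).1 hk))

end LowRankMass

/-! ### The law of a random low-rank family -/

section LowRankMeasure

variable {ι : Type*} [Fintype ι] {J P M : ι → Type*} [∀ l, Fintype (J l)] [∀ l, Fintype (P l)]
  [∀ l, Fintype (M l)]

open Classical in
/-- The product family `zᵀ v`, replaced by `0` when its norm exceeds `ρ`. -/
def truncatedProd (ρ : ℝ) (zv : FactorSpace J P × FactorSpace J M) :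
    ∀ l, Matrix (P l) (M l) ℝ :=
  if ∑ l, frobSq (factorProd zv.1 zv.2 l) ≤ ρ ^ 2 then factorProd zv.1 zv.2 else 0

/-- The law of the truncated product of `z`, uniform in a Frobenius ball, and `v`, uniform in an
operator ball; it is carried by families of rank at most `r`. -/
def lowRankMeasure (P M : ι → Type*) [∀ l, Fintype (P l)] [∀ l, Fintype (M l)] (ρ : ℝ)
    (r : ι → ℕ) : Measure (∀ l, Matrix (P l) (M l) ℝ) :=
  ((ProbabilityTheory.cond volume (frobBall (fun l => Fin (r l)) P (2 * ρ))).prod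
    (ProbabilityTheory.cond volume (opBall (fun l => Fin (r l)) M 2))).map (truncatedProd ρ)

variable {ρ : ℝ}

lemma truncatedProd_of_le {zv : FactorSpace J P × FactorSpace J M}
    (h : ∑ l, frobSq (factorProd zv.1 zv.2 l) ≤ ρ ^ 2) :
    truncatedProd ρ zv = factorProd zv.1 zv.2 :=
  if_pos h

lemma truncatedProd_of_lt {zv : FactorSpace J P × FactorSpace J M}
    (h : ρ ^ 2 < ∑ l, frobSq (factorProd zv.1 zv.2 l)) : truncatedProd ρ zv = 0 :=
  if_neg h.not_ge

lemma sum_frobSq_truncatedProd_le (zv : FactorSpace J P × FactorSpace J M) :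
    ∑ l, frobSq (truncatedProd ρ zv l) ≤ ρ ^ 2 := by
  rcases le_or_gt (∑ l, frobSq (factorProd zv.1 zv.2 l)) (ρ ^ 2) with h | h
  · rwa [truncatedProd_of_le h]
  · rw [truncatedProd_of_lt h]
    simpa [frobSq] using sq_nonneg ρ

lemma truncatedProd_of_isEmpty [∀ l, IsEmpty (J l)] (zv : FactorSpace J P × FactorSpace J M) :
    truncatedProd ρ zv = 0 := by
  have hprod : factorProd zv.1 zv.2 = 0 := by
    ext l i k
    simp [factorProd, Matrix.mul_apply]
  rcases le_or_gt (∑ l, frobSq (factorProd zv.1 zv.2 l)) (ρ ^ 2) with h | h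
  · rw [truncatedProd_of_le h, hprod]
  · rw [truncatedProd_of_lt h]

lemma measurable_truncatedProd :
    Measurable (truncatedProd ρ : FactorSpace J P × FactorSpace J M → _) :=
  Measurable.ite (isClosed_le (continuous_finsetSum _ fun l _ =>
    continuous_frobSq.comp ((continuous_apply l).comp continuous_factorProd))
    continuous_const).measurableSet continuous_factorProd.measurable measurable_const

lemma isProbabilityMeasure_lowRankMeasure (hρ : 0 < ρ) (r : ι → ℕ) :
    IsProbabilityMeasure (lowRankMeasure P M ρ r) :=
  have := (isSymmetricBody_frobBall (J := fun l => Fin (r l)) (P := P) (r := 2 * ρ)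
    (by positivity)).isProbabilityMeasure_cond volume
  have := (isSymmetricBody_opBall (J := fun l => Fin (r l)) (P := M)
    two_pos).isProbabilityMeasure_cond volume
  Measure.isProbabilityMeasure_map measurable_truncatedProd.aemeasurable

lemma lowRankMeasure_eq_one (hρ : 0 < ρ) (r : ι → ℕ) {A : Set (∀ l, Matrix (P l) (M l) ℝ)}
    (hA : ∀ zv : FactorSpace (fun l => Fin (r l)) P × FactorSpace (fun l => Fin (r l)) M,
      truncatedProd ρ zv ∈ A) : lowRankMeasure P M ρ r A = 1 := by
  have := isProbabilityMeasure_lowRankMeasure (P := P) (M := M) hρ r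
  refine le_antisymm prob_le_one ?_
  rw [← measure_univ (μ := lowRankMeasure P M ρ r), lowRankMeasure,
    Measure.map_apply measurable_truncatedProd MeasurableSet.univ]
  exact (measure_mono fun zv _ => hA zv).trans
    (Measure.le_map_apply measurable_truncatedProd.aemeasurable A)

lemma lowRankMeasure_ball (hρ : 0 < ρ) (r : ι → ℕ) :
    lowRankMeasure P M ρ r {w | ∑ l, frobSq (w l) ≤ ρ ^ 2} = 1 :=
  lowRankMeasure_eq_one hρ r sum_frobSq_truncatedProd_le

variable {ν : ∀ l, M l → ℝ} {U : ∀ l, Matrix (M l) (M l) ℝ}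

lemma lowRankMeasure_ridgeGoodSet_of_rank_zero (hρ : 0 < ρ) {y : ∀ l, Matrix (P l) (M l) ℝ}
    (hsmall : ∑ l, weightedFrobSq (ν l) (y l) ≤ 1 / 64) :
    lowRankMeasure P M ρ (fun _ => 0) (ridgeGoodSet ρ ν U y) = 1 := by
  refine lowRankMeasure_eq_one hρ _ fun zv => ⟨sum_frobSq_truncatedProd_le zv, ?_⟩
  have hzero (l : ι) : weightedFrobSq (ν l) (truncatedProd ρ zv l * U l - y l) =
      weightedFrobSq (ν l) (y l) := by
    simp [truncatedProd_of_isEmpty, weightedFrobSq]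
  simp only [hzero]
  linarith

lemma inv_mul_sqrt_eq_exp_neg_log (hρ : 0 < ρ) {a : ℝ} (ha : 0 < a) :
    1 / (64 * ρ * √a) = Real.exp (-(1 / 2 * Real.log (4096 * (a * ρ ^ 2)))) := by
  have hsq : 4096 * (a * ρ ^ 2) = (64 * ρ * √a) ^ 2 := by
    rw [mul_pow, Real.sq_sqrt ha.le]
    ring
  rw [hsq, Real.log_pow, Real.exp_neg, Nat.cast_two, ← mul_assoc, one_div_mul_cancel two_ne_zero,
    one_mul, Real.exp_log (by positivity), one_div]

lemma exp_neg_sum_log_eq_prod (hρ : 0 < ρ) {H : ∀ l, Finset (M l)}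
    (hH : ∀ l, ∀ k ∈ H l, 0 < ν l k) :
    Real.exp (-(Real.log 4 + ∑ l, (Fintype.card (P l) + Fintype.card (M l)) *
        ∑ k ∈ H l, 1 / 2 * Real.log (4096 * (ν l k * ρ ^ 2)))) =
      1 / 4 * ∏ l, ∏ k ∈ H l, (1 / (64 * ρ * √(ν l k))) ^
        (Fintype.card (P l) + Fintype.card (M l)) := by
  rw [neg_add, Real.exp_add, Real.exp_neg, Real.exp_log four_pos, ← one_div,
    ← Finset.sum_neg_distrib, Real.exp_sum]
  congr 1
  refine Finset.prod_congr rfl fun l _ => ?_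
  rw [← mul_neg, ← Finset.sum_neg_distrib, Finset.mul_sum, Real.exp_sum]
  refine Finset.prod_congr rfl fun k hk => ?_
  rw [inv_mul_sqrt_eq_exp_neg_log hρ (hH l k hk), ← Real.exp_nat_mul, Nat.cast_add]

lemma exists_ofReal_exp_neg_le_lowRankMeasure [∀ l, DecidableEq (M l)] (hρ : 0 < ρ)
    (hν : ∀ l k, 0 ≤ ν l k) (hU : ∀ l, (U l)ᵀ * U l = 1) {w : ∀ l, Matrix (P l) (M l) ℝ}
    (hw : ∑ l, frobSq (w l) ≤ ρ ^ 2) :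
    ∃ H : ∀ l, Finset (M l), (∀ l, ∀ k ∈ H l, 1 / 16 ≤ ν l k * ρ ^ 2) ∧
      ENNReal.ofReal (Real.exp (-(Real.log 4 + ∑ l, (Fintype.card (P l) + Fintype.card (M l)) *
        ∑ k ∈ H l, 1 / 2 * Real.log (4096 * (ν l k * ρ ^ 2))))) ≤
      lowRankMeasure P M ρ (fun l => (H l).card) (ridgeGoodSet ρ ν U fun l => w l * U l) := by
  have hy : ∑ l, frobSq (w l * U l) ≤ ρ ^ 2 := by
    simpa only [frobSq_mul_of_mul_transpose_eq_one _ (mul_eq_one_comm.1 (hU _))] using hw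
  rcases le_or_gt (∑ l, weightedFrobSq (ν l) (w l * U l)) (1 / 64) with hsmall | hlarge
  · refine ⟨fun _ => ∅, by simp, ?_⟩
    simp only [Finset.card_empty, lowRankMeasure_ridgeGoodSet_of_rank_zero hρ hsmall]
    simpa using Real.log_nonneg (by norm_num : (1 : ℝ) ≤ 4)
  · obtain ⟨H, hH, hmass⟩ := exists_ofReal_prod_le_cond_prod hρ hν hU hy hlarge
    refine ⟨H, hH, le_trans (le_of_eq ?_) (hmass.trans ?_)⟩
    · rw [exp_neg_sum_log_eq_prod hρ fun l k hk =>
        pos_of_mul_pos_left (lt_of_lt_of_le (by norm_num) (hH l k hk)) (sq_nonneg ρ)]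
    · refine le_trans (measure_mono fun zv hzv => ?_)
        (Measure.le_map_apply measurable_truncatedProd.aemeasurable _)
      rw [Set.mem_preimage, truncatedProd_of_le hzv.1]
      exact hzv

end LowRankMeasure

/-! ### Effective dimension and thresholds -/

section EffectiveDimension

/-- The contribution `½ log(8x)` of a rescaled eigenvalue `x = λR²/(nε²)` to the effective
dimension; it is dropped unless `x ≥ ½`. -/
def effLog (x : ℝ) : ℝ := if 1 / 2 ≤ x then 1 / 2 * Real.log (8 * x) else 0

/-- The effective dimension of a list of rescaled eigenvalues `λ_k R²/(nε²)`. -/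
def effDim {κ : Type*} [Fintype κ] (a : κ → ℝ) : ℝ := ∑ k, effLog (a k)

lemma effLog_nonneg (x : ℝ) : 0 ≤ effLog x := by
  unfold effLog
  split_ifs with h
  · exact mul_nonneg (by norm_num) (Real.log_nonneg (by linarith))
  · exact le_rfl

lemma effLog_of_le {x : ℝ} (hx : 1 / 2 ≤ x) : effLog x = 1 / 2 * Real.log (8 * x) := if_pos hx

lemma monotone_effLog : Monotone effLog := by
  intro x y hxy
  rcases le_or_gt (1 / 2) x with hx | hx
  · rw [effLog_of_le hx, effLog_of_le (hx.trans hxy)]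
    gcongr
  · rw [effLog, if_neg hx.not_ge]
    exact effLog_nonneg y

variable {κ : Type*} [Fintype κ]

lemma effDim_nonneg (a : κ → ℝ) : 0 ≤ effDim a :=
  Finset.sum_nonneg fun _ _ => effLog_nonneg _

lemma effDim_mono {a b : κ → ℝ} (h : a ≤ b) : effDim a ≤ effDim b :=
  Finset.sum_le_sum fun k _ => monotone_effLog (h k)

lemma effDim_comp_equiv {κ' : Type*} [Fintype κ'] (a : κ → ℝ) (e : κ' ≃ κ) :
    effDim (fun k => a (e k)) = effDim a :=
  Equiv.sum_comp e fun k => effLog (a k)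

lemma dEff_eq_effDim {m n : ℕ} (G : Matrix (Fin m) (Fin m) ℝ) (R : ℝ) {ε : ℝ} (hn : 1 ≤ n)
    (hε : 0 < ε) : dEff G R n ε = effDim fun k => eigDesc G k * R ^ 2 / (n * ε ^ 2) := by
  have hN : 0 < n * ε ^ 2 := by positivity
  rw [dEff, effDim, Finset.mul_sum, Finset.sum_filter]
  refine Finset.sum_congr rfl fun k _ => ?_
  have hiff : n * ε ^ 2 / 2 ≤ eigDesc G k * R ^ 2 ↔
      1 / 2 ≤ eigDesc G k * R ^ 2 / (n * ε ^ 2) := by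
    rw [le_div_iff₀ hN, one_div_mul_eq_div]
  simp only [effLog, hiff]
  congr 3
  ring

lemma half_log_le_effLog {q x : ℝ} (hq : 0 < q) (hq1 : q ≤ 1) (hx : 1 / 16 ≤ q * x) :
    1 / 2 * Real.log (4096 * (q * x)) ≤ effLog (2 ^ 18 * x) := by
  have hxpos : 0 < x := pos_of_mul_pos_right (lt_of_lt_of_le (by norm_num) hx) hq.le
  have hqx : q * x ≤ x := mul_le_of_le_one_left hxpos.le hq1
  rw [effLog_of_le (by linarith)]
  gcongr 1 / 2 * Real.log ?_
  linarith

lemma half_log_add_le_effLog {q x t : ℝ} (hq : 0 < q) (hx : 1 / 32 ≤ x)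
    (ht : t ≤ 9 * Real.log 2 + Real.log (1 / q)) :
    1 / 2 * Real.log (4096 * (q * x)) + 1 / 2 * t ≤ effLog (2 ^ 18 * x) := by
  have hxpos : 0 < x := lt_of_lt_of_le (by norm_num) hx
  rw [effLog_of_le (by linarith)]
  have hsplit : Real.log (8 * (2 ^ 18 * x)) =
      9 * Real.log 2 + Real.log (1 / q) + Real.log (4096 * (q * x)) := by
    rw [← Nat.cast_ofNat (n := 9), ← Real.log_pow, ← Real.log_mul (by positivity) (by positivity),
      ← Real.log_mul (by positivity) (by positivity)]
    congr 1
    field_simp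
    norm_num
  rw [hsplit]
  linarith

lemma add_half_le_effLog {x t : ℝ} (hx : 1 / 32 ≤ x)
    (ht : t ≤ 16 * Real.log 2 + Real.log (32 * x)) : 1 / 2 * t ≤ effLog (2 ^ 18 * x) := by
  have hxpos : 0 < x := lt_of_lt_of_le (by norm_num) hx
  rw [effLog_of_le (by linarith)]
  have hsplit : Real.log (8 * (2 ^ 18 * x)) = 16 * Real.log 2 + Real.log (32 * x) := by
    rw [← Nat.cast_ofNat (n := 16), ← Real.log_pow,
      ← Real.log_mul (by positivity) (by positivity)]
    congr 1
    ring
  rw [hsplit]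
  linarith

/-- The surplus `t` is paid by the single index `k₀`. -/
lemma sum_half_log_add_le_effDim {a : κ → ℝ} {q t : ℝ} (hq : 0 < q) (hq1 : q ≤ 1) {H : Finset κ}
    (hH : ∀ k ∈ H, 1 / 16 ≤ q * a k) {k₀ : κ} (hk₀ : 1 / 32 ≤ a k₀)
    (ht : t ≤ 9 * Real.log 2 + Real.log (1 / q))
    (ht' : t ≤ 16 * Real.log 2 + Real.log (32 * a k₀)) :
    ∑ k ∈ H, 1 / 2 * Real.log (4096 * (q * a k)) + 1 / 2 * t ≤
      effDim fun k => 2 ^ 18 * a k := by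
  classical
  have hrest (k) (hk : k ∈ H) := half_log_le_effLog hq hq1 (hH k hk)
  have hsub (T : Finset κ) : ∑ k ∈ T, effLog (2 ^ 18 * a k) ≤ effDim fun k => 2 ^ 18 * a k :=
    Finset.sum_le_univ_sum_of_nonneg fun _ => effLog_nonneg _
  by_cases hmem : k₀ ∈ H
  · rw [← Finset.add_sum_erase _ _ hmem]
    refine le_trans ?_ (hsub H)
    rw [← Finset.add_sum_erase _ _ hmem]
    have := Finset.sum_le_sum fun k hk => hrest k (Finset.mem_of_mem_erase (s := H) (a := k₀) hk)
    linarith [half_log_add_le_effLog hq hk₀ ht]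
  · refine le_trans ?_ (hsub (insert k₀ H))
    rw [Finset.sum_insert hmem]
    linarith [Finset.sum_le_sum hrest, add_half_le_effLog hk₀ ht']

lemma sum_half_log_le_effDim {a : κ → ℝ} {q : ℝ} (hq : 0 < q) (hq1 : q ≤ 1) {H : Finset κ}
    (hH : ∀ k ∈ H, 1 / 16 ≤ q * a k) :
    ∑ k ∈ H, 1 / 2 * Real.log (4096 * (q * a k)) ≤ effDim fun k => 2 ^ 18 * a k :=
  (Finset.sum_le_sum fun k hk => half_log_le_effLog hq hq1 (hH k hk)).trans
    (Finset.sum_le_univ_sum_of_nonneg fun _ => effLog_nonneg _)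

lemma sum_half_log_add_threshold_le_effDim {a : κ → ℝ} {q θ u : ℝ} (hq : 0 < q) (hq1 : q ≤ 1)
    (hθ : 1 / 32 ≤ θ) (hu : u ≤ Real.log (1 / q)) (hu' : u ≤ Real.log (32 * θ)) {H : Finset κ}
    (hH : ∀ k ∈ H, 1 / 16 ≤ q * a k) (k₀ : κ) :
    ∑ k ∈ H, 1 / 2 * Real.log (4096 * (q * a k)) +
        1 / 2 * ((if 1 / 32 ≤ a k₀ then 8 * Real.log 2 else 0) + if θ ≤ a k₀ then u else 0) ≤
      effDim fun k => 2 ^ 18 * a k := by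
  have hlog2 : 0 < Real.log 2 := Real.log_pos one_lt_two
  rcases lt_or_ge (a k₀) (1 / 32) with hsmall | hlarge
  · rw [if_neg hsmall.not_ge, if_neg (hsmall.trans_le hθ).not_ge, add_zero, mul_zero, add_zero]
    exact sum_half_log_le_effDim hq hq1 hH
  · have hlogq : 0 ≤ Real.log (1 / q) := Real.log_nonneg (one_le_one_div hq hq1)
    have hloga : 0 ≤ Real.log (32 * a k₀) := Real.log_nonneg (by linarith)
    rw [if_pos hlarge]
    refine sum_half_log_add_le_effDim hq hq1 hH hlarge ?_ ?_ <;> split_ifs with hθa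
    · linarith
    · linarith
    · have : Real.log (32 * θ) ≤ Real.log (32 * a k₀) := by gcongr
      linarith
    · linarith

end EffectiveDimension

section Threshold

variable {ι : Type*} [Fintype ι] {A : ι → ℝ} {θ : ℝ}

lemma exists_threshold (hA : ∀ l, 0 ≤ A l) {c : ℝ} (hc : 0 ≤ c) (h : c < ∑ l, A l) :
    ∃ θ, (∃ l, θ ≤ A l) ∧ ∑ l with A l < θ, A l ≤ c ∧ c < ∑ l with A l ≤ θ, A l := by
  classical
  let T : Finset ι := {l | c < ∑ l' with A l' ≤ A l, A l'}
  have hmemT (l : ι) : l ∈ T ↔ c < ∑ l' with A l' ≤ A l, A l' := Finset.mem_filter_univ l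
  have hne : Nonempty ι := by
    by_contra hempty
    rw [not_nonempty_iff] at hempty
    rw [Finset.univ_eq_empty, Finset.sum_empty] at h
    exact h.not_ge hc
  have hT : T.Nonempty := by
    obtain ⟨l, hl⟩ := Finite.exists_max A
    refine ⟨l, (hmemT l).2 ?_⟩
    rwa [Finset.filter_true_of_mem fun l' _ => hl l']
  obtain ⟨l, hl, hmin⟩ := Finset.exists_min_image T A hT
  refine ⟨A l, ⟨l, le_rfl⟩, ?_, (hmemT l).1 hl⟩
  rcases (Finset.univ.filter fun l' => A l' < A l).eq_empty_or_nonempty with hempty | hbelow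
  · rwa [hempty, Finset.sum_empty]
  · obtain ⟨l', hl', hmax⟩ := Finset.exists_max_image _ A hbelow
    have hnot : l' ∉ T := fun hT' => (hmin l' hT').not_gt (Finset.mem_filter.1 hl').2
    rw [hmemT, not_lt] at hnot
    refine le_trans (Finset.sum_le_sum_of_subset_of_nonneg ?_ fun _ _ _ => hA _) hnot
    exact fun x hx => Finset.mem_filter.2 ⟨Finset.mem_univ x, hmax x hx⟩

lemma threshold_gt (hθ : (Fintype.card ι : ℝ) / 16 < ∑ l with A l ≤ θ, A l) : 1 / 16 < θ := by
  by_contra! hsmall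
  have hle : ∑ l with A l ≤ θ, A l ≤ Finset.card {l | A l ≤ θ} * (1 / 16 : ℝ) := by
    rw [← nsmul_eq_mul]
    exact Finset.sum_le_card_nsmul _ _ _ fun l hl => (Finset.mem_filter.1 hl).2.trans hsmall
  have hcard : (Finset.card {l | A l ≤ θ} : ℝ) ≤ Fintype.card ι := by
    exact_mod_cast Finset.card_le_univ _
  linarith

lemma card_div_lt_threshold_mul_card (hA : ∀ l, 0 ≤ A l)
    (hθ : (Fintype.card ι : ℝ) / 16 < ∑ l with A l ≤ θ, A l) :
    (Fintype.card ι : ℝ) / 32 < θ * Finset.card {l | 1 / 32 ≤ A l} := by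
  have hθ16 := threshold_gt hθ
  have hterm (l : ι) : (if A l ≤ θ then A l else 0) ≤ 1 / 32 + if 1 / 32 ≤ A l then θ else 0 := by
    have := hA l
    split_ifs <;> linarith
  have hsum := hθ.trans_le ((Finset.sum_filter _ _).trans_le (Finset.sum_le_sum fun l _ => hterm l))
  rw [Finset.sum_add_distrib, Finset.sum_const, Finset.card_univ, ← Finset.sum_filter,
    Finset.sum_const, nsmul_eq_mul, nsmul_eq_mul] at hsum
  linarith

/-- The cost, in the exponent, of choosing a support of `h` layers out of `L`. The last summand
is `0` when `h = 0`. -/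
def supportCost (L h : ℕ) : ℝ := (h + 1) * Real.log 2 + (h + h * Real.log (L / h))

lemma mul_log_div_le {h N L : ℝ} (hh : 0 ≤ h) (hN : 0 < N) (hL : 0 < L) :
    h * Real.log (L / h) ≤ h * Real.log (L / N) + N := by
  rcases hh.eq_or_lt with rfl | hh
  · simpa using hN.le
  · have hsplit : Real.log (L / h) = Real.log (L / N) + Real.log (N / h) := by
      rw [← Real.log_mul (by positivity) (by positivity), div_mul_div_cancel₀ hN.ne']
    have hlog : h * Real.log (N / h) ≤ N := by
      calc h * Real.log (N / h) ≤ h * (N / h) :=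
            mul_le_mul_of_nonneg_left (Real.log_le_self (by positivity)) hh.le
        _ = N := mul_div_cancel₀ N hh.ne'
    rw [hsplit]
    linarith

lemma log_four_add_supportCost_le {h N L : ℕ} (hhN : h ≤ N) (hN : 1 ≤ N) (hNL : N ≤ L) :
    Real.log 4 + supportCost L h ≤ N * (8 * Real.log 2) + h * Real.log (L / N) := by
  have hmul := mul_log_div_le (h := h) (N := N) (L := L) (Nat.cast_nonneg h)
    (by exact_mod_cast hN) (by exact_mod_cast hN.trans hNL)
  have hlog4 : Real.log 4 = 2 * Real.log 2 := by
    rw [show (4 : ℝ) = 2 ^ 2 by norm_num, Real.log_pow, Nat.cast_two]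
  have hlog2 := Real.log_two_gt_d9
  have hhN' : (h : ℝ) ≤ N := by exact_mod_cast hhN
  have hN' : (1 : ℝ) ≤ N := by exact_mod_cast hN
  rw [supportCost, hlog4]
  nlinarith

variable {M : ι → Type*} [∀ l, Fintype (M l)] {a : ∀ l, M l → ℝ} {P : ι → ℝ}
  {H : ∀ l, Finset (M l)}

/-- Every layer has a pivot `k₀ l`: the layers whose pivot is at least `1/32` share the fixed costs,
those whose pivot is at least `θ` share the entropy of the support. -/
lemma sum_half_log_add_threshold_le_sum_effDim (k₀ : ∀ l, M l) {q u : ℝ} (hq : 0 < q)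
    (hq1 : q ≤ 1) (hθ : 1 / 32 ≤ θ) (hu0 : 0 ≤ u) (hu : u ≤ Real.log (1 / q))
    (hu' : u ≤ Real.log (32 * θ)) (hP : ∀ l, 2 ≤ P l) (hH : ∀ l, ∀ k ∈ H l, 1 / 16 ≤ q * a l k) :
    ∑ l, P l * ∑ k ∈ H l, 1 / 2 * Real.log (4096 * (q * a l k)) +
        (Finset.card {l | 1 / 32 ≤ a l (k₀ l)} * (8 * Real.log 2) +
          Finset.card {l | θ ≤ a l (k₀ l)} * u) ≤
      ∑ l, P l * effDim fun k => 2 ^ 18 * a l k := by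
  rw [← nsmul_eq_mul, ← nsmul_eq_mul, ← Finset.sum_const, ← Finset.sum_const, Finset.sum_filter,
    Finset.sum_filter, ← Finset.sum_add_distrib, ← Finset.sum_add_distrib]
  refine Finset.sum_le_sum fun l _ => ?_
  have hlayer := sum_half_log_add_threshold_le_effDim hq hq1 hθ hu hu' (hH l) (k₀ l)
  refine le_trans ?_ (mul_le_mul_of_nonneg_left hlayer (zero_le_two.trans (hP l)))
  have hlog2 := Real.log_two_gt_d9
  have hfixed : 0 ≤ (if 1 / 32 ≤ a l (k₀ l) then 8 * Real.log 2 else 0) +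
      if θ ≤ a l (k₀ l) then u else 0 := by
    split_ifs <;> linarith
  nlinarith [hP l]

lemma sum_half_log_add_supportCost_le (k₀ : ∀ l, M l) (ha : ∀ l k, 0 ≤ a l k)
    (hθ : (Fintype.card ι : ℝ) / 16 < ∑ l with a l (k₀ l) ≤ θ, a l (k₀ l)) {h : ℕ}
    (hh : Finset.card {l | θ ≤ a l (k₀ l)} = h) (hpos : 0 < h) (hP : ∀ l, 2 ≤ P l)
    (hHθ : ∀ l, (H l).Nonempty → θ ≤ a l (k₀ l))
    (hH : ∀ l, ∀ k ∈ H l, 1 / 16 ≤ (h : ℝ) / Fintype.card ι * a l k) :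
    ∑ l, P l * ∑ k ∈ H l, 1 / 2 * Real.log (4096 * ((h : ℝ) / Fintype.card ι * a l k)) +
        (Real.log 4 + supportCost (Fintype.card ι) (Finset.card {l | (H l).Nonempty})) ≤
      ∑ l, P l * effDim fun k => 2 ^ 18 * a l k := by
  set N : ℕ := Finset.card {l | 1 / 32 ≤ a l (k₀ l)}
  set h' : ℕ := Finset.card {l | (H l).Nonempty}
  have hθ16 : 1 / 16 < θ := threshold_gt hθ
  have hh'h : h' ≤ h := hh ▸ Finset.card_le_card (Finset.monotone_filter_right _ fun l _ => hHθ l)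
  have hhN : h ≤ N := hh ▸ Finset.card_le_card
    (Finset.monotone_filter_right _ fun l _ (hl : θ ≤ _) => by linarith)
  have hNL : N ≤ Fintype.card ι := Finset.card_le_univ _
  have hNpos : (0 : ℝ) < N := by exact_mod_cast hpos.trans_le hhN
  have hhpos : (0 : ℝ) < h := by exact_mod_cast hpos
  have hLpos : (0 : ℝ) < Fintype.card ι := by exact_mod_cast hpos.trans_le (hhN.trans hNL)
  set u : ℝ := Real.log (Fintype.card ι / N)
  have hu0 : 0 ≤ u := Real.log_nonneg ((one_le_div hNpos).2 (by exact_mod_cast hNL))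
  have hu : u ≤ Real.log (1 / (h / Fintype.card ι)) := by
    rw [one_div_div]
    exact Real.log_le_log (by positivity)
      (div_le_div_of_nonneg_left hLpos.le hhpos (by exact_mod_cast hhN))
  have hu' : u ≤ Real.log (32 * θ) := by
    refine Real.log_le_log (by positivity) ((div_le_iff₀ hNpos).2 ?_)
    linarith [card_div_lt_threshold_mul_card (fun l => ha l (k₀ l)) hθ]
  have hlayers := sum_half_log_add_threshold_le_sum_effDim k₀ (by positivity)
    ((div_le_one hLpos).2 (by exact_mod_cast hhN.trans hNL)) (by linarith) hu0 hu hu' hP hH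
  rw [hh] at hlayers
  have hcost := log_four_add_supportCost_le (hh'h.trans hhN) (hpos.trans_le hhN) hNL
  have : h' * u ≤ h * u := by gcongr
  linarith

end Threshold

/-! ### Mixing over ranks -/

lemma exists_mixture {κ Ω : Type*} [Fintype κ] [MeasurableSpace Ω] {w : κ → ℝ}
    (hw : ∀ j, 0 ≤ w j) (hpos : 0 < ∑ j, w j) (hle : ∑ j, w j ≤ 1) (μ : κ → Measure Ω)
    [∀ j, IsProbabilityMeasure (μ j)] :
    ∃ π : Measure Ω, IsProbabilityMeasure π ∧ (∀ j, ENNReal.ofReal (w j) • μ j ≤ π) ∧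
      ∀ A, (∀ j, μ j A = 1) → π A = 1 := by
  have hsum : ∑ j, ENNReal.ofReal (w j) = ENNReal.ofReal (∑ j, w j) :=
    (ENNReal.ofReal_sum_of_nonneg fun j _ => hw j).symm
  have hone (A : Set Ω) (hA : ∀ j, μ j A = 1) :
      ((ENNReal.ofReal (∑ j, w j))⁻¹ • ∑ j, ENNReal.ofReal (w j) • μ j) A = 1 := by
    simp only [Measure.smul_apply, Measure.finsetSum_apply, hA, smul_eq_mul, mul_one, hsum]
    exact ENNReal.inv_mul_cancel (ENNReal.ofReal_pos.2 hpos).ne' ENNReal.ofReal_ne_top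
  refine ⟨(ENNReal.ofReal (∑ j, w j))⁻¹ • ∑ j, ENNReal.ofReal (w j) • μ j,
    ⟨hone _ fun j => measure_univ⟩, fun j => Measure.le_iff'.2 fun A => ?_, hone⟩
  simp only [Measure.smul_apply, Measure.finsetSum_apply, smul_eq_mul]
  calc ENNReal.ofReal (w j) * μ j A
    _ ≤ ∑ j, ENNReal.ofReal (w j) * μ j A :=
        Finset.single_le_sum (f := fun j => ENNReal.ofReal (w j) * μ j A)
          (fun _ _ => zero_le) (Finset.mem_univ j)
    _ ≤ _ := le_mul_of_one_le_left zero_le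
        (ENNReal.one_le_inv.2 (ENNReal.ofReal_le_one.2 hle))

lemma choose_le_exp (L h : ℕ) : (L.choose h : ℝ) ≤ Real.exp (h + h * Real.log (L / h)) := by
  rcases h.eq_zero_or_pos with rfl | hh
  · simp
  rcases L.eq_zero_or_pos with rfl | hL
  · simp only [Nat.choose_eq_zero_of_lt hh, Nat.cast_zero]
    exact (Real.exp_pos _).le
  have hh' : (0 : ℝ) < h := by exact_mod_cast hh
  have : (L : ℝ) ≠ 0 := by exact_mod_cast hL.ne'
  calc (L.choose h : ℝ) ≤ (L : ℝ) ^ h / h.factorial := Nat.choose_le_pow_div h L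
    _ = (h : ℝ) ^ h / h.factorial * (L / h) ^ h := by
        rw [div_pow]
        field_simp
    _ ≤ Real.exp h * (L / h) ^ h := by
        gcongr
        exact Real.pow_div_factorial_le_exp _ hh'.le h
    _ = Real.exp (h + h * Real.log (L / h)) := by
        rw [Real.exp_add, Real.exp_nat_mul, Real.exp_log (by positivity)]

section RankMixture

variable {ι : Type*} [Fintype ι]

/-- The prior weight of the support `S` of a rank pattern: its cardinality is geometric, and the
support is uniform given its cardinality. -/
def supportWeight (S : Finset ι) : ℝ :=
  (1 / 2) ^ (S.card + 1) / (Fintype.card ι).choose S.card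

lemma supportWeight_pos (S : Finset ι) : 0 < supportWeight S := by
  have := Nat.choose_pos (Finset.card_le_univ S)
  unfold supportWeight
  positivity

lemma exp_neg_supportCost_le (S : Finset ι) :
    Real.exp (-supportCost (Fintype.card ι) S.card) ≤ supportWeight S := by
  have hchoose : (0 : ℝ) < (Fintype.card ι).choose S.card := by
    exact_mod_cast Nat.choose_pos (Finset.card_le_univ S)
  rw [supportCost, neg_add, Real.exp_add, Real.exp_neg, Real.exp_neg, ← Nat.cast_succ,
    Real.exp_nat_mul, Real.exp_log two_pos, ← inv_pow, ← one_div, supportWeight, div_eq_mul_inv]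
  exact mul_le_mul_of_nonneg_left (inv_anti₀ hchoose (choose_le_exp _ _)) (by positivity)

lemma sum_supportWeight_le_one : ∑ S : Finset ι, supportWeight S ≤ 1 := by
  rw [← Finset.powerset_univ]
  simp only [supportWeight]
  rw [Finset.sum_powerset_apply_card
    (fun h => (1 / 2 : ℝ) ^ (h + 1) / (Fintype.card ι).choose h), Finset.card_univ]
  calc ∑ h ∈ Finset.range (Fintype.card ι + 1), (Fintype.card ι).choose h •
        ((1 / 2 : ℝ) ^ (h + 1) / (Fintype.card ι).choose h)
    _ = 1 / 2 * ∑ h ∈ Finset.range (Fintype.card ι + 1), (1 / 2 : ℝ) ^ h := by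
        rw [Finset.mul_sum]
        refine Finset.sum_congr rfl fun h hh => ?_
        have : ((Fintype.card ι).choose h : ℝ) ≠ 0 := by
          exact_mod_cast (Nat.choose_pos (Nat.lt_succ_iff.1 (Finset.mem_range.1 hh))).ne'
        rw [nsmul_eq_mul, mul_div_cancel₀ _ this, pow_succ']
    _ ≤ 1 := by linarith [sum_geometric_two_le (Fintype.card ι + 1)]

/-- The prior weight of a rank pattern: a support together with one candidate rank per layer, all
candidates being equally likely. -/
def patternWeight {m : ι → ℕ} (j : Finset ι × ∀ l, Fin (m l)) : ℝ :=
  supportWeight j.1 / ∏ l, (m l : ℝ)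

open Classical in
/-- The rank of each layer in a rank pattern: candidates `0, …, m l - 1` stand for `1, …, m l`, and
count only on the support. -/
def patternRank {m : ι → ℕ} (j : Finset ι × ∀ l, Fin (m l)) (l : ι) : ℕ :=
  if l ∈ j.1 then j.2 l + 1 else 0

variable {m : ι → ℕ}

lemma patternWeight_pos (hm : ∀ l, 0 < m l) (j : Finset ι × ∀ l, Fin (m l)) :
    0 < patternWeight j :=
  div_pos (supportWeight_pos j.1) (Finset.prod_pos fun l _ => by exact_mod_cast hm l)

lemma sum_patternWeight_le_one [DecidableEq ι] (hm : ∀ l, 0 < m l) :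
    ∑ j : Finset ι × ∀ l, Fin (m l), patternWeight j ≤ 1 := by
  have hprod : ∏ l, (m l : ℝ) ≠ 0 :=
    Finset.prod_ne_zero_iff.2 fun l _ => by exact_mod_cast (hm l).ne'
  simp only [patternWeight, Fintype.sum_prod_type, Finset.sum_const, Finset.card_univ,
    Fintype.card_pi, Fintype.card_fin, nsmul_eq_mul, Nat.cast_prod, mul_div_cancel₀ _ hprod]
  exact sum_supportWeight_le_one

lemma exp_neg_supportCost_add_le (hm : ∀ l, 0 < m l) (j : Finset ι × ∀ l, Fin (m l)) :
    Real.exp (-(supportCost (Fintype.card ι) j.1.card + ∑ l, Real.log (m l))) ≤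
      patternWeight j := by
  rw [neg_add, Real.exp_add, Real.exp_neg (∑ l, _), Real.exp_sum,
    Finset.prod_congr rfl fun l _ => Real.exp_log (by exact_mod_cast hm l)]
  exact mul_le_mul_of_nonneg_right (exp_neg_supportCost_le _) (by positivity)

lemma exists_patternRank_eq {r : ι → ℕ} (hm : ∀ l, 0 < m l) (hr : ∀ l, r l ≤ m l) :
    ∃ j : Finset ι × ∀ l, Fin (m l),
      patternRank j = r ∧ j.1 = Finset.univ.filter fun l => 0 < r l := by
  refine ⟨(Finset.univ.filter fun l => 0 < r l, fun l => ⟨r l - 1, ?_⟩), ?_, rfl⟩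
  · have := hm l
    have := hr l
    omega
  · funext l
    simp only [patternRank, Finset.mem_filter_univ]
    split_ifs <;> omega

variable {P M : ι → Type*} [∀ l, Fintype (P l)] [∀ l, Fintype (M l)]

lemma exists_rankMixture [∀ l, Nonempty (M l)] {ρ : ℝ} (hρ : 0 < ρ) :
    ∃ π : Measure (∀ l, Matrix (P l) (M l) ℝ), IsProbabilityMeasure π ∧
      (∀ H : ∀ l, Finset (M l), ENNReal.ofReal (Real.exp
          (-(supportCost (Fintype.card ι) (Finset.card {l | (H l).Nonempty}) +
            ∑ l, Real.log (Fintype.card (M l))))) •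
        lowRankMeasure P M ρ (fun l => (H l).card) ≤ π) ∧
      ∀ A, (∀ r, lowRankMeasure P M ρ r A = 1) → π A = 1 := by
  classical
  have hm (l : ι) : 0 < Fintype.card (M l) := Fintype.card_pos
  have (j : Finset ι × ∀ l, Fin (Fintype.card (M l))) :
      IsProbabilityMeasure (lowRankMeasure P M ρ (patternRank j)) :=
    isProbabilityMeasure_lowRankMeasure hρ _
  obtain ⟨π, hπ, hlow, hone⟩ := exists_mixture (fun j => (patternWeight_pos hm j).le)
    (Finset.sum_pos (fun j _ => patternWeight_pos hm j)
      ⟨(∅, fun l => ⟨0, hm l⟩), Finset.mem_univ _⟩)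
    (sum_patternWeight_le_one hm) fun j => lowRankMeasure P M ρ (patternRank j)
  refine ⟨π, hπ, fun H => ?_, fun A hA => hone A fun j => hA _⟩
  obtain ⟨j, hj, hsupp⟩ := exists_patternRank_eq hm fun l => (H l).card_le_univ
  simp only [Finset.card_pos] at hsupp
  rw [← hj, ← hsupp]
  refine le_trans ?_ (hlow j)
  gcongr
  exact exp_neg_supportCost_add_le hm j

end RankMixture

/-! ### The prior at a fixed scale -/

section ScalePrior

variable {ι : Type*} [Fintype ι] {P M : ι → Type*} [∀ l, Fintype (P l)] [∀ l, Fintype (M l)]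

/-- The families of norm at most `ρ` whose distances to `w`, layer by layer in the seminorms with
eigenvalues `lam l` and eigenframes `U l`, add up to at most `√L`, where `L` is the number of
layers. -/
def spectralNhd (ρ : ℝ) (lam : ∀ l, M l → ℝ) (U : ∀ l, Matrix (M l) (M l) ℝ)
    (w : ∀ l, Matrix (P l) (M l) ℝ) : Set (∀ l, Matrix (P l) (M l) ℝ) :=
  {w' | ∑ l, frobSq (w' l) ≤ ρ ^ 2 ∧
    ∑ l, √(weightedFrobSq (lam l) ((w' l - w l) * U l)) ≤ √(Fintype.card ι)}

lemma weightedFrobSq_nonneg {m n : Type*} [Fintype m] [Fintype n] {ν : n → ℝ} (hν : ∀ k, 0 ≤ ν k)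
    (A : Matrix m n ℝ) : 0 ≤ weightedFrobSq ν A :=
  Finset.sum_nonneg fun _ _ => Finset.sum_nonneg fun k _ => mul_nonneg (hν k) (sq_nonneg _)

lemma weightedFrobSq_le_mul_frobSq {m n : Type*} [Fintype m] [Fintype n] {ν : n → ℝ} {c : ℝ}
    (hν : ∀ k, ν k ≤ c) (A : Matrix m n ℝ) : weightedFrobSq ν A ≤ c * frobSq A := by
  simp only [weightedFrobSq, frobSq, Finset.mul_sum]
  gcongr
  exact hν _

lemma weightedFrobSq_const_mul {m n : Type*} [Fintype m] [Fintype n] (c : ℝ) (ν : n → ℝ)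
    (A : Matrix m n ℝ) : weightedFrobSq (fun k => c * ν k) A = c * weightedFrobSq ν A := by
  simp only [weightedFrobSq, Finset.mul_sum, mul_assoc]

variable {lam : ∀ l, M l → ℝ} {U : ∀ l, Matrix (M l) (M l) ℝ} {w w' : ∀ l, Matrix (P l) (M l) ℝ}
  {ρ : ℝ}

lemma sum_frobSq_sub_le (hw : ∑ l, frobSq (w l) ≤ ρ ^ 2) (hw' : ∑ l, frobSq (w' l) ≤ ρ ^ 2) :
    ∑ l, frobSq (w' l - w l) ≤ 4 * ρ ^ 2 := by
  calc ∑ l, frobSq (w' l - w l) ≤ ∑ l, (2 * frobSq (w' l) + 2 * frobSq (w l)) := by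
        gcongr with l
        simpa only [frobSq_neg, ← sub_eq_add_neg] using frobSq_add_le (w' l) (-w l)
    _ ≤ 4 * ρ ^ 2 := by
        rw [Finset.sum_add_distrib, ← Finset.mul_sum, ← Finset.mul_sum]
        linarith

omit [Fintype ι] in
lemma sum_sqrt_le_of_le_mul {T : Finset ι} {t A D : ι → ℝ} (hA : ∀ l, 0 ≤ A l)
    (hD : ∀ l, 0 ≤ D l) (ht : ∀ l, t l ≤ A l * D l) {c : ℝ}
    (h : (∑ l ∈ T, A l) * ∑ l ∈ T, D l ≤ c) : ∑ l ∈ T, √(t l) ≤ √c := by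
  calc ∑ l ∈ T, √(t l) ≤ ∑ l ∈ T, √(A l) * √(D l) := by
        gcongr with l
        rw [← Real.sqrt_mul (hA l)]
        exact Real.sqrt_le_sqrt (ht l)
    _ ≤ √(∑ l ∈ T, A l) * √(∑ l ∈ T, D l) := Real.sum_sqrt_mul_sqrt_le _ hA hD
    _ ≤ √c := by
        rw [← Real.sqrt_mul (Finset.sum_nonneg fun l _ => hA l)]
        exact Real.sqrt_le_sqrt h

lemma sqrt_div_four (x : ℝ) : √(x / 4) = √x / 2 := by
  rw [Real.sqrt_div' x (by norm_num), show (4 : ℝ) = 2 ^ 2 by norm_num, Real.sqrt_sq zero_le_two]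

lemma sum_sqrt_weightedFrobSq_le_of_mem_ridgeGoodSet {S : Finset ι} {ν : ∀ l, M l → ℝ}
    (hlam : ∀ l k, 0 ≤ lam l k) (hS : S.Nonempty) (hν : ∀ l k, 0 ≤ ν l k)
    (hνS : ∀ l ∈ S, ∀ k, ν l k = S.card / Fintype.card ι * lam l k)
    (hw' : w' ∈ ridgeGoodSet ρ ν U fun l => w l * U l) :
    ∑ l ∈ S, √(weightedFrobSq (lam l) ((w' l - w l) * U l)) ≤ √(Fintype.card ι) / 2 := by
  have hScard : (0 : ℝ) < S.card := by exact_mod_cast hS.card_pos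
  have hLcard : (0 : ℝ) < Fintype.card ι := hScard.trans_le (by exact_mod_cast S.card_le_univ)
  have hsum : S.card / Fintype.card ι *
      ∑ l ∈ S, weightedFrobSq (lam l) ((w' l - w l) * U l) ≤ 1 / 4 := by
    refine le_trans ?_ hw'.2
    rw [Finset.mul_sum]
    calc ∑ l ∈ S, S.card / Fintype.card ι * weightedFrobSq (lam l) ((w' l - w l) * U l)
      _ = ∑ l ∈ S, weightedFrobSq (ν l) (w' l * U l - w l * U l) := by
          refine Finset.sum_congr rfl fun l hl => ?_
          rw [← weightedFrobSq_const_mul, Matrix.sub_mul]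
          exact congrArg (weightedFrobSq · _) (funext fun k => (hνS l hl k).symm)
      _ ≤ _ := Finset.sum_le_univ_sum_of_nonneg fun l => weightedFrobSq_nonneg (hν l) _
  rw [← sqrt_div_four]
  refine sum_sqrt_le_of_le_mul (fun _ => zero_le_one) (fun l => weightedFrobSq_nonneg (hlam l) _)
    (fun l => (one_mul _).ge) ?_
  rw [Finset.sum_const, nsmul_eq_mul, mul_one]
  rw [div_mul_eq_mul_div, div_le_iff₀ hLcard] at hsum
  linarith

variable [∀ l, DecidableEq (M l)]

lemma sum_sqrt_weightedFrobSq_le_of_sum_max_le {T : Finset ι} {k₀ : ∀ l, M l}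
    (hlam : ∀ l k, 0 ≤ lam l k) (hk₀ : ∀ l k, lam l k ≤ lam l (k₀ l))
    (hU : ∀ l, (U l)ᵀ * U l = 1) (hT : ∑ l ∈ T, lam l (k₀ l) * ρ ^ 2 ≤ Fintype.card ι / 16)
    (hw : ∑ l, frobSq (w l) ≤ ρ ^ 2) (hw' : ∑ l, frobSq (w' l) ≤ ρ ^ 2) :
    ∑ l ∈ T, √(weightedFrobSq (lam l) ((w' l - w l) * U l)) ≤ √(Fintype.card ι) / 2 := by
  rw [← sqrt_div_four]
  refine sum_sqrt_le_of_le_mul (fun l => hlam l (k₀ l)) (fun l => frobSq_nonneg (w' l - w l))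
    (fun l => ?_) ?_
  · rw [← frobSq_mul_of_mul_transpose_eq_one (w' l - w l) (mul_eq_one_comm.1 (hU l))]
    exact weightedFrobSq_le_mul_frobSq (hk₀ l) _
  · have hdist : ∑ l ∈ T, frobSq (w' l - w l) ≤ 4 * ρ ^ 2 :=
      (Finset.sum_le_univ_sum_of_nonneg fun _ => frobSq_nonneg _).trans (sum_frobSq_sub_le hw hw')
    rw [← Finset.sum_mul] at hT
    have hmul := mul_le_mul_of_nonneg_left hdist (Finset.sum_nonneg fun l (_ : l ∈ T) =>
      hlam l (k₀ l))
    linarith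

lemma ridgeGoodSet_subset_spectralNhd [DecidableEq ι] {S : Finset ι} {ν : ∀ l, M l → ℝ}
    {k₀ : ∀ l, M l} (hlam : ∀ l k, 0 ≤ lam l k) (hk₀ : ∀ l k, lam l k ≤ lam l (k₀ l))
    (hU : ∀ l, (U l)ᵀ * U l = 1) (hw : ∑ l, frobSq (w l) ≤ ρ ^ 2) (hS : S.Nonempty)
    (hT : ∑ l ∈ Sᶜ, lam l (k₀ l) * ρ ^ 2 ≤ Fintype.card ι / 16) (hν : ∀ l k, 0 ≤ ν l k)
    (hνS : ∀ l ∈ S, ∀ k, ν l k = S.card / Fintype.card ι * lam l k) :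
    ridgeGoodSet ρ ν U (fun l => w l * U l) ⊆ spectralNhd ρ lam U w := by
  intro w' hw'
  refine ⟨hw'.1, ?_⟩
  have hon := sum_sqrt_weightedFrobSq_le_of_mem_ridgeGoodSet hlam hS hν hνS hw'
  have hoff := sum_sqrt_weightedFrobSq_le_of_sum_max_le hlam hk₀ hU hT hw hw'.1
  rw [← Finset.sum_add_sum_compl S]
  linarith

/-- Only the layers in `S` are approximated. Their eigenvalues are damped by the factor `|S|/L`, as
the errors of these `|S|` layers have to add up to a multiple of `√L`. -/
lemma exists_ofReal_exp_neg_le_lowRankMeasure_spectralNhd [DecidableEq ι] {S : Finset ι}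
    {k₀ : ∀ l, M l} (hρ : 0 < ρ) (hlam : ∀ l k, 0 ≤ lam l k)
    (hk₀ : ∀ l k, lam l k ≤ lam l (k₀ l)) (hU : ∀ l, (U l)ᵀ * U l = 1)
    (hw : ∑ l, frobSq (w l) ≤ ρ ^ 2) (hS : S.Nonempty)
    (hT : ∑ l ∈ Sᶜ, lam l (k₀ l) * ρ ^ 2 ≤ Fintype.card ι / 16) :
    ∃ H : ∀ l, Finset (M l), (∀ l, (H l).Nonempty → l ∈ S) ∧
      (∀ l, ∀ k ∈ H l, 1 / 16 ≤ (S.card : ℝ) / Fintype.card ι * (lam l k * ρ ^ 2)) ∧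
      ENNReal.ofReal (Real.exp (-(Real.log 4 + ∑ l, (Fintype.card (P l) + Fintype.card (M l)) *
        ∑ k ∈ H l, 1 / 2 *
          Real.log (4096 * ((S.card : ℝ) / Fintype.card ι * (lam l k * ρ ^ 2)))))) ≤
      lowRankMeasure P M ρ (fun l => (H l).card) (spectralNhd ρ lam U w) := by
  let ν (l : ι) (k : M l) : ℝ := if l ∈ S then S.card / Fintype.card ι * lam l k else 0
  have hνS (l : ι) (hl : l ∈ S) (k : M l) : ν l k = S.card / Fintype.card ι * lam l k := if_pos hl
  have hν (l : ι) (k : M l) : 0 ≤ ν l k := by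
    have := hlam l k
    unfold ν
    positivity
  obtain ⟨H, hH, hmass⟩ := exists_ofReal_exp_neg_le_lowRankMeasure hρ hν hU hw
  have hHS (l : ι) (k : M l) (hk : k ∈ H l) : l ∈ S := by
    by_contra hl
    have := hH l k hk
    norm_num [ν, hl] at this
  have hscaled (l : ι) (k : M l) (hk : k ∈ H l) :
      ν l k * ρ ^ 2 = S.card / Fintype.card ι * (lam l k * ρ ^ 2) := by
    rw [hνS l (hHS l k hk), mul_assoc]
  refine ⟨H, fun l ⟨k, hk⟩ => hHS l k hk, fun l k hk => (hH l k hk).trans_eq (hscaled l k hk),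
    le_trans (le_of_eq ?_) (hmass.trans (measure_mono
      (ridgeGoodSet_subset_spectralNhd hlam hk₀ hU hw hS hT hν hνS)))⟩
  congr 4
  refine Finset.sum_congr rfl fun l _ => congrArg _ (Finset.sum_congr rfl fun k hk => ?_)
  rw [hscaled l k hk]

lemma exists_ofReal_exp_neg_le_mul_lowRankMeasure [∀ l, Nonempty (P l)] {k₀ : ∀ l, M l}
    (hρ : 0 < ρ) (hlam : ∀ l k, 0 ≤ lam l k) (hk₀ : ∀ l k, lam l k ≤ lam l (k₀ l))
    (hU : ∀ l, (U l)ᵀ * U l = 1) (hw : ∑ l, frobSq (w l) ≤ ρ ^ 2)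
    (hlarge : (Fintype.card ι : ℝ) / 16 < ∑ l, lam l (k₀ l) * ρ ^ 2) :
    ∃ H : ∀ l, Finset (M l), ENNReal.ofReal (Real.exp (-∑ l, (Fintype.card (P l) +
        Fintype.card (M l)) * effDim fun k => 2 ^ 18 * (lam l k * ρ ^ 2))) ≤
      ENNReal.ofReal (Real.exp (-supportCost (Fintype.card ι)
          (Finset.card {l | (H l).Nonempty}))) *
        lowRankMeasure P M ρ (fun l => (H l).card) (spectralNhd ρ lam U w) := by
  classical
  have ha (l : ι) (k : M l) : 0 ≤ lam l k * ρ ^ 2 := mul_nonneg (hlam l k) (sq_nonneg ρ)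
  obtain ⟨θ, ⟨l₀, hl₀⟩, hbelow, habove⟩ := exists_threshold (fun l => ha l (k₀ l))
    (by positivity) hlarge
  set S : Finset ι := {l | θ ≤ lam l (k₀ l) * ρ ^ 2} with hSdef
  have hmemS (l : ι) : l ∈ S ↔ θ ≤ lam l (k₀ l) * ρ ^ 2 := Finset.mem_filter_univ l
  have hS : S.Nonempty := ⟨l₀, (hmemS l₀).2 hl₀⟩
  have hcompl : Sᶜ = Finset.univ.filter fun l => lam l (k₀ l) * ρ ^ 2 < θ := by
    ext l
    rw [Finset.mem_compl, hmemS, not_le, Finset.mem_filter_univ]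
  obtain ⟨H, hHS, hH, hmass⟩ := exists_ofReal_exp_neg_le_lowRankMeasure_spectralNhd hρ hlam hk₀ hU
    hw hS (hcompl ▸ hbelow)
  have hrank (l : ι) : (2 : ℝ) ≤ Fintype.card (P l) + Fintype.card (M l) := by
    have : 1 ≤ Fintype.card (P l) := Fintype.card_pos
    have : 1 ≤ Fintype.card (M l) := Fintype.card_pos_iff.2 ⟨k₀ l⟩
    exact_mod_cast (by omega : 2 ≤ Fintype.card (P l) + Fintype.card (M l))
  have hcost := sum_half_log_add_supportCost_le k₀ ha habove (congrArg Finset.card hSdef.symm)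
    hS.card_pos hrank (fun l hl => (hmemS l).1 (hHS l hl)) hH
  refine ⟨H, le_trans ?_ (mul_le_mul_right hmass _)⟩
  rw [← ENNReal.ofReal_mul (Real.exp_pos _).le, ← Real.exp_add]
  gcongr
  linarith

lemma ball_subset_spectralNhd {k₀ : ∀ l, M l} (hlam : ∀ l k, 0 ≤ lam l k)
    (hk₀ : ∀ l k, lam l k ≤ lam l (k₀ l)) (hU : ∀ l, (U l)ᵀ * U l = 1)
    (hw : ∑ l, frobSq (w l) ≤ ρ ^ 2)
    (hsmall : ∑ l, lam l (k₀ l) * ρ ^ 2 ≤ Fintype.card ι / 16) :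
    {w' | ∑ l, frobSq (w' l) ≤ ρ ^ 2} ⊆ spectralNhd ρ lam U w := fun _ hw' =>
  ⟨hw', (sum_sqrt_weightedFrobSq_le_of_sum_max_le hlam hk₀ hU hsmall hw hw').trans
    (half_le_self (Real.sqrt_nonneg _))⟩

lemma exists_scalePrior [∀ l, Nonempty (P l)] [∀ l, Nonempty (M l)] (hρ : 0 < ρ) :
    ∃ π : Measure (∀ l, Matrix (P l) (M l) ℝ), IsProbabilityMeasure π ∧
      ∀ (lam : ∀ l, M l → ℝ) (U : ∀ l, Matrix (M l) (M l) ℝ) (w : ∀ l, Matrix (P l) (M l) ℝ),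
        (∀ l k, 0 ≤ lam l k) → (∀ l, (U l)ᵀ * U l = 1) → ∑ l, frobSq (w l) ≤ ρ ^ 2 →
        ENNReal.ofReal (Real.exp (-(∑ l, (Fintype.card (P l) + Fintype.card (M l)) *
            (effDim fun k => 2 ^ 18 * (lam l k * ρ ^ 2)) +
            ∑ l, Real.log (Fintype.card (M l))))) ≤
          π (spectralNhd ρ lam U w) := by
  obtain ⟨π, hπ, hlow, hone⟩ := exists_rankMixture (P := P) (M := M) hρ
  refine ⟨π, hπ, fun lam U w hlam hU hw => ?_⟩
  choose k₀ hk₀ using fun l => Finite.exists_max (lam l)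
  rcases le_or_gt (∑ l, lam l (k₀ l) * ρ ^ 2) (Fintype.card ι / 16) with hsmall | hlarge
  · have hball := hone _ fun r => lowRankMeasure_ball (P := P) (M := M) hρ r
    refine le_trans ?_ (hball.ge.trans (measure_mono
      (ball_subset_spectralNhd hlam hk₀ hU hw hsmall)))
    have heff : 0 ≤ ∑ l, (Fintype.card (P l) + Fintype.card (M l) : ℝ) *
        effDim fun k => 2 ^ 18 * (lam l k * ρ ^ 2) :=
      Finset.sum_nonneg fun l _ => mul_nonneg (by positivity) (effDim_nonneg _)
    have hlog : 0 ≤ ∑ l, Real.log (Fintype.card (M l)) :=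
      Finset.sum_nonneg fun l _ => Real.log_natCast_nonneg _
    exact ENNReal.ofReal_le_one.2 (Real.exp_le_one_iff.2 (by linarith))
  · obtain ⟨H, hH⟩ := exists_ofReal_exp_neg_le_mul_lowRankMeasure hρ hlam hk₀ hU hw hlarge
    refine le_trans ?_ (hlow H _)
    rw [Measure.smul_apply, smul_eq_mul, neg_add, neg_add, Real.exp_add, Real.exp_add,
      ENNReal.ofReal_mul (Real.exp_pos _).le, ENNReal.ofReal_mul (Real.exp_pos _).le,
      mul_right_comm]
    exact mul_le_mul_left hH _

end ScalePrior

/-! ### Priors on weight tuples -/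

section Spectrum

variable {m : Type*} [Fintype m] [DecidableEq m] {G : Matrix m m ℝ}

lemma transpose_eigenvectorUnitary_mul_self (hG : G.IsHermitian) :
    (hG.eigenvectorUnitary : Matrix m m ℝ)ᵀ * hG.eigenvectorUnitary = 1 := by
  rw [← Matrix.conjTranspose_eq_transpose_of_trivial]
  exact Unitary.star_mul_self_of_mem hG.eigenvectorUnitary.2

lemma weightedFrobSq_eigenvalues_mul {p : Type*} [Fintype p] (hG : G.IsHermitian)
    (A : Matrix p m ℝ) :
    weightedFrobSq hG.eigenvalues (A * (hG.eigenvectorUnitary : Matrix m m ℝ)) =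
      (A * G * Aᵀ).trace := by
  set U : Matrix m m ℝ := (hG.eigenvectorUnitary : Matrix m m ℝ)
  have hspec : G = U * Matrix.diagonal hG.eigenvalues * Uᵀ := by
    rw [← Matrix.conjTranspose_eq_transpose_of_trivial]
    exact hG.spectral_theorem
  have hsandwich : A * G * Aᵀ = A * U * Matrix.diagonal hG.eigenvalues * (A * U)ᵀ := by
    conv_lhs => rw [hspec]
    simp only [Matrix.transpose_mul, Matrix.mul_assoc]
  rw [hsandwich, weightedFrobSq, Matrix.trace]
  refine Finset.sum_congr rfl fun i _ => ?_
  rw [Matrix.diag_apply, Matrix.mul_apply]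
  refine Finset.sum_congr rfl fun k _ => ?_
  rw [Matrix.mul_diagonal, Matrix.transpose_apply]
  ring

end Spectrum

lemma exists_perm_eigDesc_eq {m : ℕ} {G : Matrix (Fin m) (Fin m) ℝ} (hG : G.IsHermitian) :
    ∃ e : Equiv.Perm (Fin m), ∀ k, eigDesc G k = hG.eigenvalues (e k) :=
  ⟨Fin.revPerm.trans (Tuple.sort hG.eigenvalues), fun k => by rw [eigDesc, dif_pos hG]; rfl⟩

lemma effDim_eigenvalues_le_dEff {m n : ℕ} {G : Matrix (Fin m) (Fin m) ℝ} (hG : G.PosSemidef)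
    {ρ R ε : ℝ} (hρ : 0 ≤ ρ) (hR : 512 * ρ ≤ R) (hn : 1 ≤ n) (hε : 0 < ε) :
    (effDim fun k => 2 ^ 18 * ((n * ε ^ 2)⁻¹ * hG.1.eigenvalues k * ρ ^ 2)) ≤ dEff G R n ε := by
  obtain ⟨e, he⟩ := exists_perm_eigDesc_eq hG.1
  rw [dEff_eq_effDim G R hn hε, ← effDim_comp_equiv _ e]
  refine effDim_mono fun k => ?_
  have hsq : 2 ^ 18 * ρ ^ 2 ≤ R ^ 2 := by nlinarith
  calc 2 ^ 18 * ((n * ε ^ 2)⁻¹ * hG.1.eigenvalues (e k) * ρ ^ 2)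
    _ = (n * ε ^ 2)⁻¹ * hG.1.eigenvalues (e k) * (2 ^ 18 * ρ ^ 2) := by ring
    _ ≤ (n * ε ^ 2)⁻¹ * hG.1.eigenvalues (e k) * R ^ 2 := by
        have := hG.eigenvalues_nonneg (e k)
        gcongr
    _ = eigDesc G k * R ^ 2 / (n * ε ^ 2) := by
        rw [he]
        ring

section Weights

variable {d : ℕ → ℕ} {L : ℕ}

/-- Extension of the weights of `L` layers to a weight tuple, by zero on the unused layers. -/
def extendWeights (w : ∀ l : Fin L, Matrix (Fin (d (l + 1))) (Fin (d l)) ℝ) : Weights d :=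
  fun l => if h : l < L then w ⟨l, h⟩ else 0

lemma extendWeights_val (w : ∀ l : Fin L, Matrix (Fin (d (l + 1))) (Fin (d l)) ℝ) (l : Fin L) :
    extendWeights w l = w l :=
  dif_pos l.isLt

lemma measurable_extendWeights :
    Measurable (extendWeights : (∀ l : Fin L, Matrix (Fin (d (l + 1))) (Fin (d l)) ℝ) → _) := by
  refine measurable_pi_iff.2 fun l => ?_
  unfold extendWeights
  split_ifs with h
  · exact measurable_pi_apply (⟨l, h⟩ : Fin L)
  · exact measurable_const

lemma wNorm_le_iff {W : Weights d} {ρ : ℝ} (hρ : 0 ≤ ρ) :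
    wNorm d L W ≤ ρ ↔ ∑ l : Fin L, frobSq (W l) ≤ ρ ^ 2 := by
  rw [wNorm, Real.sqrt_le_left hρ, Finset.sum_range]

/-- The weight tuples of norm at most `ρ` whose distances to `W`, layer by layer in the seminorms
with Gram matrices `G l`, add up to at most `c`. -/
def gramNhd (L : ℕ) (ρ c : ℝ) (G : ∀ l, Matrix (Fin (d l)) (Fin (d l)) ℝ) (W : Weights d) :
    Set (Weights d) :=
  {W' | wNorm d L W' ≤ ρ ∧
    ∑ l ∈ Finset.range L, √(((W' l - W l) * G l * (W' l - W l)ᵀ).trace) ≤ c}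

/-- The cost `∑ (d_l d_eff + d_{l-1} d_eff + log d_{l-1})` of approximating a weight tuple. -/
def netCost (d : ℕ → ℕ) (L : ℕ) (G : ∀ l, Matrix (Fin (d l)) (Fin (d l)) ℝ) (R : ℝ) (n : ℕ)
    (ε : ℝ) : ℝ :=
  ∑ l ∈ Finset.range L,
    (d (l + 1) * dEff (G l) R n ε + d l * dEff (G l) R n ε + Real.log (d l))

variable {G : ∀ l, Matrix (Fin (d l)) (Fin (d l)) ℝ} {W : Weights d} {n : ℕ} {ρ ε : ℝ}

lemma spectralNhd_subset_preimage_gramNhd (hG : ∀ l, (G l).PosSemidef) (hρ : 0 ≤ ρ) (hn : 1 ≤ n)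
    (hε : 0 < ε) :
    spectralNhd ρ (fun (l : Fin L) k => (n * ε ^ 2)⁻¹ * (hG l).1.eigenvalues k)
      (fun l : Fin L => ((hG l).1.eigenvectorUnitary : Matrix (Fin (d l)) (Fin (d l)) ℝ))
      (fun l : Fin L => W l) ⊆ extendWeights ⁻¹' gramNhd L ρ √(L * (n * ε ^ 2)) G W := by
  rintro w ⟨hball, hdist⟩
  have hN : 0 < n * ε ^ 2 := by positivity
  refine ⟨(wNorm_le_iff hρ).2 (by simpa only [extendWeights_val] using hball), ?_⟩
  simp only [weightedFrobSq_const_mul, weightedFrobSq_eigenvalues_mul,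
    Real.sqrt_mul (inv_nonneg.2 hN.le), ← Finset.mul_sum, Fintype.card_fin, Real.sqrt_inv] at hdist
  rw [inv_mul_le_iff₀ (Real.sqrt_pos.2 hN)] at hdist
  rw [Finset.sum_range, mul_comm (L : ℝ), Real.sqrt_mul hN.le]
  simpa only [extendWeights_val] using hdist

lemma exists_weightPrior (hd : ∀ l, 1 ≤ d l) (L : ℕ) (hρ : 0 < ρ) :
    ∃ π : Measure (Weights d), IsProbabilityMeasure π ∧
      ∀ (G : ∀ l, Matrix (Fin (d l)) (Fin (d l)) ℝ) (W : Weights d) (n : ℕ) (R ε : ℝ),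
        (∀ l, (G l).PosSemidef) → wNorm d L W ≤ ρ → 1 ≤ n → 512 * ρ ≤ R → 0 < ε →
        ENNReal.ofReal (Real.exp (-netCost d L G R n ε)) ≤
          π (gramNhd L ρ √(L * (n * ε ^ 2)) G W) := by
  have (l : ℕ) : Nonempty (Fin (d l)) := ⟨⟨0, hd l⟩⟩
  obtain ⟨π, hπ, hmass⟩ := exists_scalePrior (ι := Fin L) (P := fun l => Fin (d (l + 1)))
    (M := fun l => Fin (d l)) hρ
  have hmeas := (measurable_extendWeights (d := d) (L := L)).aemeasurable (μ := π)
  refine ⟨π.map extendWeights, Measure.isProbabilityMeasure_map hmeas,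
    fun G W n R ε hG hW hn hR hε => ?_⟩
  have hlow := hmass (fun l k => (n * ε ^ 2)⁻¹ * (hG l).1.eigenvalues k)
    (fun l => ((hG l).1.eigenvectorUnitary : Matrix (Fin (d l)) (Fin (d l)) ℝ)) (fun l => W l)
    (fun l k => mul_nonneg (by positivity) ((hG l).eigenvalues_nonneg k))
    (fun l => transpose_eigenvectorUnitary_mul_self (hG l).1) ((wNorm_le_iff hρ.le).1 hW)
  refine le_trans ?_ (hlow.trans ((measure_mono
    (spectralNhd_subset_preimage_gramNhd hG hρ.le hn hε)).trans (Measure.le_map_apply hmeas _)))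
  rw [netCost, Finset.sum_range, ← Finset.sum_add_distrib]
  simp only [Fintype.card_fin, ← add_mul]
  gcongr with l
  exact effDim_eigenvalues_le_dEff (hG l) hρ.le hR hn hε

lemma exists_dyadic_scale {w R : ℝ} (hw : w ≤ R) (hn : 1 ≤ n) :
    ∃ κ : Fin n, w ≤ R / 2 ^ (κ : ℕ) ∧ R / 2 ^ (κ : ℕ) ≤ 2 * max w (R / 2 ^ n) := by
  suffices ∃ κ < n, w ≤ R / 2 ^ κ ∧ R / 2 ^ κ ≤ 2 * max w (R / 2 ^ n) by
    obtain ⟨κ, hκ, hlow, hhigh⟩ := this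
    exact ⟨⟨κ, hκ⟩, hlow, hhigh⟩
  induction n, hn using Nat.le_induction with
  | base =>
    refine ⟨0, one_pos, by simpa using hw, ?_⟩
    linarith [le_max_right w (R / 2 ^ 1)]
  | succ n _ ih =>
    rcases le_or_gt w (R / 2 ^ n) with h | h
    · refine ⟨n, n.lt_succ_self, h, ?_⟩
      calc R / 2 ^ n = 2 * (R / 2 ^ (n + 1)) := by
            rw [pow_succ]
            ring
        _ ≤ _ := by
            gcongr
            exact le_max_right _ _
    · obtain ⟨κ, hκ, hlow, hhigh⟩ := ih
      rw [max_eq_left h.le] at hhigh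
      refine ⟨κ, hκ.trans n.lt_succ_self, hlow, hhigh.trans ?_⟩
      gcongr
      exact le_max_left _ _

lemma exists_multiscalePrior (hd : ∀ l, 1 ≤ d l) (L : ℕ) {R : ℝ} (hR : 0 < R) (hn : 1 ≤ n) :
    ∃ π : Measure (Weights d), IsProbabilityMeasure π ∧
      ∀ (G : ∀ l, Matrix (Fin (d l)) (Fin (d l)) ℝ) (W : Weights d) (ε : ℝ),
        (∀ l, (G l).PosSemidef) → wNorm d L W ≤ R → 0 < ε →
        ENNReal.ofReal (Real.exp
            (-(netCost d L G (1024 * max (wNorm d L W) (R / 2 ^ n)) n ε + Real.log n))) ≤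
          π (gramNhd L R √(L * (n * ε ^ 2)) G W) := by
  choose μ hμ hmass using fun κ : Fin n =>
    exists_weightPrior (ρ := R / 2 ^ (κ : ℕ)) hd L (by positivity)
  have hn0 : (n : ℝ) ≠ 0 := by positivity
  have hsum : ∑ _ : Fin n, (1 / n : ℝ) = 1 := by
    rw [Finset.sum_const, Finset.card_univ, Fintype.card_fin, nsmul_eq_mul, mul_one_div_cancel hn0]
  obtain ⟨π, hπ, hlow, -⟩ := exists_mixture (w := fun _ : Fin n => (1 / n : ℝ))
    (fun _ => by positivity) (hsum.symm ▸ one_pos) hsum.le μ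
  refine ⟨π, hπ, fun G W ε hG hW hε => ?_⟩
  obtain ⟨κ, hκ, hκ'⟩ := exists_dyadic_scale hW hn
  have hsub : gramNhd L (R / 2 ^ (κ : ℕ)) √(L * (n * ε ^ 2)) G W ⊆
      gramNhd L R √(L * (n * ε ^ 2)) G W := fun W' hW' =>
    ⟨hW'.1.trans (div_le_self hR.le (one_le_pow₀ one_le_two)), hW'.2⟩
  refine le_trans ?_ ((hlow κ _).trans (measure_mono hsub))
  rw [Measure.smul_apply, smul_eq_mul, neg_add_rev, Real.exp_add, Real.exp_neg (Real.log n),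
    Real.exp_log (by positivity), ← one_div, ENNReal.ofReal_mul (by positivity)]
  gcongr
  exact hmass κ G W n _ ε hG hκ hn (by linarith) hε

lemma negLog_le_ofReal {p : ℝ≥0∞} (hp : p ≤ 1) {x : ℝ} (h : ENNReal.ofReal (Real.exp (-x)) ≤ p) :
    negLog p ≤ ENNReal.ofReal x := by
  have hp0 : p ≠ 0 := ((ENNReal.ofReal_pos.2 (Real.exp_pos _)).trans_le h).ne'
  have hptop : p ≠ ⊤ := ne_top_of_le_ne_top ENNReal.one_ne_top hp
  rw [negLog, if_neg hp0, one_div, Real.log_inv]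
  refine ENNReal.ofReal_le_ofReal (neg_le.1 ?_)
  rw [Real.le_log_iff_exp_le (ENNReal.toReal_pos hp0 hptop)]
  exact (ENNReal.ofReal_le_iff_le_toReal hptop).1 h

lemma trace_mul_smul_gram_mul_transpose {p m k : Type*} [Fintype p] [Fintype m] [Fintype k]
    (c : ℝ) (F : Matrix m k ℝ) (D : Matrix p m ℝ) :
    (D * (c • (F * Fᵀ)) * Dᵀ).trace = c * frobSq (D * F) := by
  rw [frobSq_eq_trace, Matrix.transpose_mul, Matrix.mul_smul, Matrix.smul_mul, Matrix.trace_smul,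
    smul_eq_mul]
  simp only [Matrix.mul_assoc]

lemma posSemidef_smul_gram {m k : Type*} [Finite m] [Fintype k] {c : ℝ} (hc : 0 ≤ c)
    (F : Matrix m k ℝ) :
    (c • (F * Fᵀ)).PosSemidef := by
  simpa using (Matrix.posSemidef_self_mul_conjTranspose F).smul hc

lemma sum_mul_sqrt_frobSq_le_of_mem_gramNhd (hL : 1 ≤ L) (hε : 0 < ε)
    {F : ∀ l, Matrix (Fin (d l)) (Fin n) ℝ} {c : ℕ → ℝ} (hc : ∀ l, 0 ≤ c l) {W' : Weights d}
    (hW' : W' ∈ gramNhd L ρ √(L * (n * ε ^ 2)) (fun l => (L * c l ^ 2) • (F l * (F l)ᵀ)) W) :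
    ∑ l ∈ Finset.range L, c l * √(frobSq ((W' l - W l) * F l)) ≤ √n * ε := by
  have hsum := hW'.2
  have hterm (l : ℕ) : √(L * c l ^ 2 * frobSq ((W' l - W l) * F l)) =
      √L * (c l * √(frobSq ((W' l - W l) * F l))) := by
    rw [Real.sqrt_mul (by positivity), Real.sqrt_mul (Nat.cast_nonneg L), Real.sqrt_sq (hc l),
      mul_assoc]
  simp only [trace_mul_smul_gram_mul_transpose, hterm, ← Finset.mul_sum] at hsum
  rw [Real.sqrt_mul (Nat.cast_nonneg L), Real.sqrt_mul (Nat.cast_nonneg n), Real.sqrt_sq hε.le]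
    at hsum
  exact le_of_mul_le_mul_left hsum (Real.sqrt_pos.2 (by exact_mod_cast hL))

lemma netCost_add_log_le (hL : 1 ≤ L) (G : ∀ l, Matrix (Fin (d l)) (Fin (d l)) ℝ) (R ε : ℝ) :
    netCost d L G R n ε + Real.log n ≤ ∑ l ∈ Finset.range L,
      (d (l + 1) * dEff (G l) R n ε + d l * dEff (G l) R n ε + Real.log (d l) + Real.log n) := by
  rw [Finset.sum_add_distrib, netCost, Finset.sum_const, Finset.card_range, nsmul_eq_mul]
  gcongr
  exact le_mul_of_one_le_left (Real.log_natCast_nonneg n) (by exact_mod_cast hL)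

end Weights

/-- **Riemannian Dimension Bound for DNN (Theorem).** -/
theorem riemannian_dimension_bound_for_dnn :
    ∃ C : ℝ, 0 < C ∧
      ∀ (d : ℕ → ℕ), (∀ l, 1 ≤ d l) → ∀ (L nn : ℕ), 1 ≤ L → 1 ≤ nn →
      ∀ (σ : (l : ℕ) → ((Fin (d (l + 1)) → ℝ) → Fin (d (l + 1)) → ℝ)),
      (∀ (l : ℕ) (u v : Fin (d (l + 1)) → ℝ),
        ∑ i, (σ l u i - σ l v i) ^ 2 ≤ ∑ i, (u i - v i) ^ 2) →
      ∀ (X : Matrix (Fin (d 0)) (Fin nn) ℝ) (R : ℝ), 0 < R →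
      ∀ (M : Weights d → ℝ → ℕ → ℝ), (∀ W ε l, 0 ≤ M W ε l) →
      -- local Lipschitz property of the outer maps
      (∀ W : Weights d, wNorm d L W ≤ R → ∀ ε : ℝ, 0 < ε →
        ∀ W' : Weights d, wNorm d L W' ≤ R → rhoN d L nn σ X W W' ≤ ε → ∀ j, j < L →
          Real.sqrt (frobSq
              (iterNet d nn σ W' (j + 1)
                  (mapCols (σ j) (W' j * feat d nn σ W X j)) (L - (j + 1)) -
                iterNet d nn σ W' (j + 1)
                  (mapCols (σ j) (W j * feat d nn σ W X j)) (L - (j + 1)))) ≤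
            M W ε j * Real.sqrt (frobSq
              (mapCols (σ j) (W' j * feat d nn σ W X j) -
                mapCols (σ j) (W j * feat d nn σ W X j)))) →
      ∃ π : Measure (Weights d), IsProbabilityMeasure π ∧
        ∀ W : Weights d, wNorm d L W ≤ R → ∀ ε : ℝ, 0 < ε →
          negLog (π {W' | rhoN d L nn σ X W W' ≤ ε}) ≤
            ENNReal.ofReal (∑ j ∈ Finset.range L,
              ((d (j + 1) : ℝ) *
                  dEff ((L * M W ε j ^ 2) •
                      (feat d nn σ W X j * (feat d nn σ W X j)ᵀ))
                    (C * max (wNorm d L W) (R / 2 ^ nn)) nn ε +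
                (d j : ℝ) *
                  dEff ((L * M W ε j ^ 2) •
                      (feat d nn σ W X j * (feat d nn σ W X j)ᵀ))
                    (C * max (wNorm d L W) (R / 2 ^ nn)) nn ε +
                Real.log (d j) + Real.log nn)) := by
  refine ⟨1024, by norm_num, fun d hd L nn hL hn σ hσ X R hR M hM hLip => ?_⟩
  obtain ⟨π, hπ, hmass⟩ := exists_multiscalePrior hd L hR hn
  refine ⟨π, hπ, fun W hW ε hε => ?_⟩
  set G : ∀ l, Matrix (Fin (d l)) (Fin (d l)) ℝ := fun l =>
    (L * M W ε l ^ 2) • (feat d nn σ W X l * (feat d nn σ W X l)ᵀ)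
  have hG (l : ℕ) : (G l).PosSemidef := posSemidef_smul_gram (by positivity) _
  have hsub : gramNhd L R √(L * (nn * ε ^ 2)) G W ⊆ {W' | rhoN d L nn σ X W W' ≤ ε} :=
    fun W' hW' => rhoN_le_of_sum_le hn hσ (hM W ε) hε hR.le hW hW'.1 (hLip W hW ε hε)
      (sum_mul_sqrt_frobSq_le_of_mem_gramNhd hL hε (hM W ε) hW')
  calc negLog (π {W' | rhoN d L nn σ X W W' ≤ ε})
    _ ≤ ENNReal.ofReal
          (netCost d L G (1024 * max (wNorm d L W) (R / 2 ^ nn)) nn ε + Real.log nn) :=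
        negLog_le_ofReal prob_le_one ((hmass G W ε hG hW hε).trans (measure_mono hsub))
    _ ≤ _ := ENNReal.ofReal_le_ofReal (netCost_add_log_le hL G _ ε)


end
end

section
/- Eigenvalue Bound for Projected Metric Tensor (Lemma). Let Σ be a p×p real positive semidefinite matrix with eigenvalues λ_1 ≥ … ≥ λ_p listed in nonincreasing order (with multiplicity), let 1 ≤ r ≤ p, let V ⊆ ℝ^p be an r-dimensional subspace spanned by orthonormal eigenvectors of Σ corresponding to λ_1,…,λ_r, and let V̄ ⊆ ℝ^p be any r-dimensional subspace, with orthogonal projection matrices P_V and P_V̄. Then for every k = 1,…,r, the k-th largest eigenvalue of P_V̄·Σ·P_V̄ satisfies λ_k ≥ λ_k(P_V̄·Σ·P_V̄) ≥ λ_k/2 − ‖Σ^{1/2}(P_V − P_V̄)‖_op². -/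
/-!
Both inequalities are instances of the Courant–Fischer principle, for any contraction `Q` in place
of `P_V̄`. For the upper bound, take a subspace of codimension `k - 1` on which the Rayleigh
quotient of `Σ` is at most `λ_k`; its preimage under `Q` has at most that codimension, and
`⟪Σ Q x, Q x⟫ ≤ λ_k ‖Q x‖² ≤ λ_k ‖x‖²` on it. For the lower bound, let `x` lie in the span of the
first `k` eigenvectors. Then `P_V x = x`, so splitting
`Σ^{1/2} x = Σ^{1/2} (P_V - Q) x + Σ^{1/2} Q x` gives
`λ_k ‖x‖² ≤ ‖Σ^{1/2} x‖² ≤ 2 ‖Σ^{1/2} (P_V - Q)‖² ‖x‖² + 2 ⟪Qᵀ Σ Q x, x⟫`.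
-/

open scoped Matrix MatrixOrder

noncomputable section

/-- The `ℓ² → ℓ²` operator norm of a real matrix. -/
def opNorm {m k : Type*} [Fintype m] [Fintype k] (M : Matrix m k ℝ) : ℝ :=
  sSup {t | ∃ x : k → ℝ, (∑ j, x j ^ 2) ≤ 1 ∧ t = Real.sqrt (∑ i, (M.mulVec x i) ^ 2)}

/-- The (matrix of the) orthogonal projection determined by an orthonormal family
`u : Fin r → ℝ^p`, namely `Σ_k u_k u_kᵀ`. -/
def gramProj {p r : ℕ} (u : Fin r → Fin p → ℝ) : Matrix (Fin p) (Fin p) ℝ :=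
  Matrix.of fun i j => ∑ k, u k i * u k j

section CourantFischer

open Module RCLike Submodule
open scoped InnerProductSpace

variable {𝕜 E F : Type*} [RCLike 𝕜]
  [NormedAddCommGroup E] [InnerProductSpace 𝕜 E] [NormedAddCommGroup F] [InnerProductSpace 𝕜 F]

theorem re_inner_map_sum_smul_of_orthonormal {ι : Type*} [Fintype ι] {T : E →ₗ[𝕜] E} {w : ι → E}
    (hw : Orthonormal 𝕜 w) {μ : ι → ℝ} (hTw : ∀ i, T (w i) = (μ i : 𝕜) • w i) (c : ι → 𝕜) :
    re ⟪T (∑ i, c i • w i), ∑ i, c i • w i⟫_𝕜 = ∑ i, μ i * ‖c i‖ ^ 2 := by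
  have hTx : T (∑ i, c i • w i) = ∑ i, (c i * μ i) • w i := by
    simp only [map_sum, map_smul, hTw, smul_smul]
  rw [hTx, hw.inner_sum, map_sum]
  refine Finset.sum_congr rfl fun i _ => ?_
  rw [RingHom.map_mul, conj_ofReal, mul_right_comm, RCLike.conj_mul, mul_comm, ← ofReal_pow,
    re_ofReal_mul, ofReal_re]

theorem mul_norm_sq_le_re_inner_map_of_mem_span {ι : Type*} [Finite ι] {T : E →ₗ[𝕜] E}
    {w : ι → E} (hw : Orthonormal 𝕜 w) {μ : ι → ℝ} (hTw : ∀ i, T (w i) = (μ i : 𝕜) • w i)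
    {a : ℝ} (ha : ∀ i, a ≤ μ i) {x : E} (hx : x ∈ span 𝕜 (Set.range w)) :
    a * ‖x‖ ^ 2 ≤ re ⟪T x, x⟫_𝕜 := by
  have := Fintype.ofFinite ι
  obtain ⟨c, rfl⟩ := (mem_span_range_iff_exists_fun 𝕜).mp hx
  have hnorm := re_inner_map_sum_smul_of_orthonormal (T := LinearMap.id) (μ := 1) hw (by simp) c
  rw [LinearMap.id_apply, inner_self_eq_norm_sq] at hnorm
  rw [hnorm, re_inner_map_sum_smul_of_orthonormal hw hTw, Finset.mul_sum]
  refine Finset.sum_le_sum fun i _ => ?_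
  rw [Pi.one_apply, one_mul]
  gcongr
  exact ha i

theorem re_inner_map_le_mul_norm_sq_of_mem_span {ι : Type*} [Finite ι] {T : E →ₗ[𝕜] E}
    {w : ι → E} (hw : Orthonormal 𝕜 w) {μ : ι → ℝ} (hTw : ∀ i, T (w i) = (μ i : 𝕜) • w i)
    {a : ℝ} (ha : ∀ i, μ i ≤ a) {x : E} (hx : x ∈ span 𝕜 (Set.range w)) :
    re ⟪T x, x⟫_𝕜 ≤ a * ‖x‖ ^ 2 := by
  have hneg := mul_norm_sq_le_re_inner_map_of_mem_span (T := -T) (μ := -μ) hw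
    (by simp [hTw]) (fun i => neg_le_neg (ha i)) hx
  simpa using hneg

theorem exists_mem_mem_ne_zero_of_finrank_lt {K V : Type*} [DivisionRing K] [AddCommGroup V]
    [Module K V] [FiniteDimensional K V] {U W : Submodule K V}
    (h : finrank K V < finrank K U + finrank K W) : ∃ x ∈ U, x ∈ W ∧ x ≠ 0 := by
  by_contra! hUW
  exact h.not_ge (finrank_add_finrank_le_of_disjoint (disjoint_def.mpr hUW))

theorem finrank_quotient_comap_le {K V V' : Type*} [DivisionRing K] [AddCommGroup V] [Module K V]
    [AddCommGroup V'] [Module K V'] (f : V →ₗ[K] V') (W : Submodule K V')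
    [FiniteDimensional K (V' ⧸ W)] : finrank K (V ⧸ W.comap f) ≤ finrank K (V' ⧸ W) := by
  refine LinearMap.finrank_le_finrank_of_injective (f := (W.comap f).mapQ W f le_rfl) ?_
  rw [← LinearMap.ker_eq_bot, ker_mapQ, mkQ_map_self]

variable [FiniteDimensional 𝕜 E] {T : E →ₗ[𝕜] E} (hT : T.IsSymmetric) {n : ℕ} (hn : finrank 𝕜 E = n)
include hT hn

theorem finrank_span_eigenvectorBasis (s : Finset (Fin n)) :
    finrank 𝕜 (span 𝕜 (Set.range fun i : s => hT.eigenvectorBasis hn i)) = s.card := by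
  have hs := (hT.eigenvectorBasis hn).orthonormal.comp _ (Subtype.val_injective (p := (· ∈ s)))
  exact (finrank_span_eq_card hs.linearIndependent).trans (Fintype.card_coe s)

theorem eigenvalues_eq_eigenvalues_cast {m : ℕ} (hm : finrank 𝕜 E = m) (k : Fin n) :
    hT.eigenvalues hn k = hT.eigenvalues hm (Fin.cast (hn.symm.trans hm) k) := by
  subst hn hm
  rfl

theorem exists_finrank_eq_forall_mul_norm_sq_le_re_inner (k : Fin n) :
    ∃ W : Submodule 𝕜 E, finrank 𝕜 W = k + 1 ∧
      ∀ x ∈ W, hT.eigenvalues hn k * ‖x‖ ^ 2 ≤ re ⟪T x, x⟫_𝕜 := by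
  refine ⟨_, (finrank_span_eigenvectorBasis hT hn (Finset.Iic k)).trans (Fin.card_Iic k),
    fun x => mul_norm_sq_le_re_inner_map_of_mem_span
      ((hT.eigenvectorBasis hn).orthonormal.comp _ Subtype.val_injective)
      (fun i => hT.apply_eigenvectorBasis hn i)
      (fun i => hT.eigenvalues_antitone hn (Finset.mem_Iic.mp i.2))⟩

theorem exists_finrank_quotient_eq_forall_re_inner_le_mul_norm_sq (k : Fin n) :
    ∃ W : Submodule 𝕜 E, finrank 𝕜 (E ⧸ W) = k ∧
      ∀ x ∈ W, re ⟪T x, x⟫_𝕜 ≤ hT.eigenvalues hn k * ‖x‖ ^ 2 := by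
  let W := span 𝕜 (Set.range fun i : Finset.Ici k => hT.eigenvectorBasis hn i)
  have hW : finrank 𝕜 W = n - k :=
    (finrank_span_eigenvectorBasis hT hn (Finset.Ici k)).trans (Fin.card_Ici k)
  refine ⟨W, by have := W.finrank_quotient_add_finrank; omega,
    fun x => re_inner_map_le_mul_norm_sq_of_mem_span
      ((hT.eigenvectorBasis hn).orthonormal.comp _ Subtype.val_injective)
      (fun i => hT.apply_eigenvectorBasis hn i)
      (fun i => hT.eigenvalues_antitone hn (Finset.mem_Ici.mp i.2))⟩

theorem le_eigenvalues_of_lt_finrank {k : Fin n} {W : Submodule 𝕜 E} (hW : k < finrank 𝕜 W)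
    {a : ℝ} (ha : ∀ x ∈ W, a * ‖x‖ ^ 2 ≤ re ⟪T x, x⟫_𝕜) : a ≤ hT.eigenvalues hn k := by
  obtain ⟨U, hU, hUle⟩ := exists_finrank_quotient_eq_forall_re_inner_le_mul_norm_sq hT hn k
  obtain ⟨x, hxW, hxU, hx⟩ : ∃ x ∈ W, x ∈ U ∧ x ≠ 0 :=
    exists_mem_mem_ne_zero_of_finrank_lt (by have := U.finrank_quotient_add_finrank; omega)
  exact le_of_mul_le_mul_right ((ha x hxW).trans (hUle x hxU)) (by positivity)

theorem eigenvalues_le_of_finrank_quotient_le {k : Fin n} {W : Submodule 𝕜 E}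
    (hW : finrank 𝕜 (E ⧸ W) ≤ k) {a : ℝ} (ha : ∀ x ∈ W, re ⟪T x, x⟫_𝕜 ≤ a * ‖x‖ ^ 2) :
    hT.eigenvalues hn k ≤ a := by
  obtain ⟨U, hU, hleU⟩ := exists_finrank_eq_forall_mul_norm_sq_le_re_inner hT hn k
  obtain ⟨x, hxW, hxU, hx⟩ : ∃ x ∈ W, x ∈ U ∧ x ≠ 0 :=
    exists_mem_mem_ne_zero_of_finrank_lt (by have := W.finrank_quotient_add_finrank; omega)
  exact le_of_mul_le_mul_right ((hleU x hxU).trans (ha x hxW)) (by positivity)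

theorem eigenvalues_le_sq_norm_mul_eigenvalues [FiniteDimensional 𝕜 F] {S : F →ₗ[𝕜] F}
    (hS : S.IsPositive) {m : ℕ} (hm : finrank 𝕜 F = m) (Q : E →L[𝕜] F)
    (hTS : ∀ x, re ⟪T x, x⟫_𝕜 ≤ re ⟪S (Q x), Q x⟫_𝕜) {k : Fin n} {l : Fin m} (hlk : (l : ℕ) ≤ k) :
    hT.eigenvalues hn k ≤ ‖Q‖ ^ 2 * hS.isSymmetric.eigenvalues hm l := by
  obtain ⟨W, hW, hSW⟩ :=
    exists_finrank_quotient_eq_forall_re_inner_le_mul_norm_sq hS.isSymmetric hm l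
  refine eigenvalues_le_of_finrank_quotient_le hT hn
    ((finrank_quotient_comap_le (Q : E →ₗ[𝕜] F) W).trans (hW.trans_le hlk)) fun x hx => ?_
  have hSl : 0 ≤ hS.isSymmetric.eigenvalues hm l := hS.nonneg_eigenvalues hm l
  calc re ⟪T x, x⟫_𝕜 ≤ re ⟪S (Q x), Q x⟫_𝕜 := hTS x
    _ ≤ hS.isSymmetric.eigenvalues hm l * ‖Q x‖ ^ 2 := hSW _ hx
    _ ≤ hS.isSymmetric.eigenvalues hm l * (‖Q‖ * ‖x‖) ^ 2 := by gcongr; exact Q.le_opNorm x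
    _ = ‖Q‖ ^ 2 * hS.isSymmetric.eigenvalues hm l * ‖x‖ ^ 2 := by ring

theorem half_sub_sq_norm_sub_le_eigenvalues (A B : E →L[𝕜] F)
    (hBT : ∀ x, ‖B x‖ ^ 2 ≤ re ⟪T x, x⟫_𝕜) {k : Fin n} {W : Submodule 𝕜 E}
    (hW : k < finrank 𝕜 W) {a : ℝ} (ha : ∀ x ∈ W, a * ‖x‖ ^ 2 ≤ ‖A x‖ ^ 2) :
    a / 2 - ‖A - B‖ ^ 2 ≤ hT.eigenvalues hn k := by
  refine le_eigenvalues_of_lt_finrank hT hn hW fun x hx => ?_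
  have hAB : ‖A x‖ ≤ ‖(A - B) x‖ + ‖B x‖ := by simpa using norm_add_le ((A - B) x) (B x)
  have hA : ‖A x‖ ^ 2 ≤ 2 * ((‖A - B‖ * ‖x‖) ^ 2 + ‖B x‖ ^ 2) := by
    calc ‖A x‖ ^ 2 ≤ (‖(A - B) x‖ + ‖B x‖) ^ 2 := by gcongr
      _ ≤ 2 * (‖(A - B) x‖ ^ 2 + ‖B x‖ ^ 2) := add_sq_le
      _ ≤ 2 * ((‖A - B‖ * ‖x‖) ^ 2 + ‖B x‖ ^ 2) := by gcongr; exact (A - B).le_opNorm x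
  linarith [ha x hx, hBT x, mul_pow ‖A - B‖ ‖x‖ 2]

end CourantFischer

section EuclideanMatrix

open Matrix WithLp

theorem inner_toEuclideanLin_conjTranspose_mul_mul_same {𝕜 m n : Type*} [RCLike 𝕜] [Fintype m]
    [DecidableEq m] [Fintype n] [DecidableEq n] (S : Matrix m m 𝕜) (Q : Matrix m n 𝕜)
    (x : EuclideanSpace 𝕜 n) :
    inner 𝕜 (toEuclideanLin (Qᴴ * S * Q) x) x =
      inner 𝕜 (toEuclideanLin S (toEuclideanLin Q x)) (toEuclideanLin Q x) := by
  rw [Matrix.mul_assoc, toLpLin_mul_same, toLpLin_mul_same, LinearMap.comp_apply,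
    toEuclideanLin_conjTranspose_eq_adjoint, LinearMap.adjoint_inner_left, LinearMap.comp_apply]

theorem re_inner_toEuclideanLin_conjTranspose_mul_self {𝕜 m n : Type*} [RCLike 𝕜] [Fintype m]
    [Fintype n] [DecidableEq n] (M : Matrix m n 𝕜) (x : EuclideanSpace 𝕜 n) :
    RCLike.re (inner 𝕜 (toEuclideanLin (Mᴴ * M) x) x) = ‖toEuclideanLin M x‖ ^ 2 := by
  classical
  have h := inner_toEuclideanLin_conjTranspose_mul_mul_same 1 M x
  rw [Matrix.mul_one, toLpLin_one, LinearMap.id_apply] at h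
  rw [h, inner_self_eq_norm_sq]

open scoped ComplexOrder in
theorem conjTranspose_sqrt_mul_sqrt_self {𝕜 n : Type*} [RCLike 𝕜] [Fintype n] [DecidableEq n]
    {S : Matrix n n 𝕜} (hS : S.PosSemidef) : (CFC.sqrt S)ᴴ * CFC.sqrt S = S := by
  rw [(nonneg_iff_posSemidef.mp (CFC.sqrt_nonneg S)).isHermitian.eq,
    CFC.sqrt_mul_sqrt_self S (nonneg_iff_posSemidef.mpr hS)]

theorem opNorm_eq_norm_toEuclideanLin {m k : Type*} [Fintype m] [Fintype k] [DecidableEq k]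
    (M : Matrix m k ℝ) : opNorm M = ‖(toEuclideanLin M).toContinuousLinearMap‖ := by
  rw [← ContinuousLinearMap.sSup_unitClosedBall_eq_norm, opNorm]
  congr 1
  ext t
  simp only [Set.mem_ofPred_eq, Set.mem_image, mem_closedBall_zero_iff, EuclideanSpace.norm_eq,
    Real.sqrt_le_one, Real.norm_eq_abs, sq_abs]
  constructor
  · rintro ⟨x, hx, rfl⟩
    exact ⟨toLp 2 x, hx, rfl⟩
  · rintro ⟨x, hx, rfl⟩
    exact ⟨ofLp x, hx, rfl⟩

theorem eigDesc_eq_eigenvalues {m : ℕ} {G : Matrix (Fin m) (Fin m) ℝ} (hG : G.IsHermitian) :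
    eigDesc G =
      (isSymmetric_toEuclideanLin_iff.mpr hG).eigenvalues finrank_euclideanSpace_fin := by
  have hT := isSymmetric_toEuclideanLin_iff.mpr hG
  let μ := hT.eigenvalues finrank_euclideanSpace_fin
  let e : Fin m ≃ Fin m :=
    (Fintype.equivOfCardEq (Fintype.card_fin _)).symm.trans (finCongr (Fintype.card_fin m))
  have hμ : hG.eigenvalues = μ ∘ e := by
    ext i
    exact eigenvalues_eq_eigenvalues_cast hT _ _ _
  have hsort : Antitone (μ ∘ (Fin.revPerm.trans (Tuple.sort (μ ∘ e))).trans e) :=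
    (Tuple.monotone_sort (μ ∘ e)).comp_antitone fun _ _ => Fin.rev_le_rev.mpr
  rw [eigDesc, dif_pos hG, hμ]
  exact Tuple.unique_antitone hsort
    (τ := Equiv.refl _) (hT.eigenvalues_antitone finrank_euclideanSpace_fin)

theorem antitone_eigDesc {m : ℕ} {G : Matrix (Fin m) (Fin m) ℝ} (hG : G.IsHermitian) :
    Antitone (eigDesc G) := by
  rw [eigDesc_eq_eigenvalues hG]
  exact LinearMap.IsSymmetric.eigenvalues_antitone _ _

theorem eigDesc_nonneg {m : ℕ} {G : Matrix (Fin m) (Fin m) ℝ} (hG : G.PosSemidef) (k : Fin m) :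
    0 ≤ eigDesc G k := by
  rw [eigDesc_eq_eigenvalues hG.isHermitian]
  exact (isPositive_toEuclideanLin_iff.mpr hG).nonneg_eigenvalues _ k

theorem opNorm_nonneg {m k : Type*} [Fintype m] [Fintype k] (M : Matrix m k ℝ) :
    0 ≤ opNorm M :=
  Real.sSup_nonneg (by rintro _ ⟨_, _, rfl⟩; exact Real.sqrt_nonneg _)

theorem eigDesc_conjTranspose_mul_mul_same_le {p : ℕ} {S : Matrix (Fin p) (Fin p) ℝ}
    (hS : S.PosSemidef) (Q : Matrix (Fin p) (Fin p) ℝ) (k : Fin p) :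
    eigDesc (Qᴴ * S * Q) k ≤ opNorm Q ^ 2 * eigDesc S k := by
  rw [eigDesc_eq_eigenvalues (isHermitian_conjTranspose_mul_mul Q hS.isHermitian),
    eigDesc_eq_eigenvalues hS.isHermitian, opNorm_eq_norm_toEuclideanLin]
  refine eigenvalues_le_sq_norm_mul_eigenvalues _ _ (isPositive_toEuclideanLin_iff.mpr hS) _
    (toEuclideanLin Q).toContinuousLinearMap (fun x => ?_) le_rfl
  rw [inner_toEuclideanLin_conjTranspose_mul_mul_same, LinearMap.coe_toContinuousLinearMap']

theorem half_sub_sq_opNorm_le_eigDesc_conjTranspose_mul_mul_same {p : ℕ}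
    {S : Matrix (Fin p) (Fin p) ℝ} (hS : S.PosSemidef) (P Q : Matrix (Fin p) (Fin p) ℝ) {k : Fin p}
    {W : Submodule ℝ (EuclideanSpace ℝ (Fin p))} (hW : k < Module.finrank ℝ W)
    (hPW : ∀ x ∈ W, toEuclideanLin P x = x) {a : ℝ}
    (ha : ∀ x ∈ W, a * ‖x‖ ^ 2 ≤ inner ℝ (toEuclideanLin S x) x) :
    a / 2 - opNorm (CFC.sqrt S * (P - Q)) ^ 2 ≤ eigDesc (Qᴴ * S * Q) k := by
  have hSx := re_inner_toEuclideanLin_conjTranspose_mul_self (CFC.sqrt S)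
  rw [conjTranspose_sqrt_mul_sqrt_self hS] at hSx
  rw [eigDesc_eq_eigenvalues (isHermitian_conjTranspose_mul_mul Q hS.isHermitian),
    opNorm_eq_norm_toEuclideanLin, Matrix.mul_sub, map_sub, map_sub]
  refine half_sub_sq_norm_sub_le_eigenvalues _ _ _ _ (fun x => ?_) hW fun x hx => ?_
  · rw [inner_toEuclideanLin_conjTranspose_mul_mul_same, hSx, toLpLin_mul_same]
    rfl
  · rw [LinearMap.coe_toContinuousLinearMap', toLpLin_mul_same, LinearMap.comp_apply, hPW x hx,
      ← hSx]
    exact ha x hx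

variable {p r : ℕ} {u : Fin r → Fin p → ℝ}

theorem gramProj_eq_conjTranspose_mul_self (u : Fin r → Fin p → ℝ) :
    gramProj u = (of u)ᴴ * of u := by
  ext i j
  simp [gramProj, mul_apply]

theorem isHermitian_gramProj (u : Fin r → Fin p → ℝ) : (gramProj u).IsHermitian := by
  rw [gramProj_eq_conjTranspose_mul_self]
  exact isHermitian_conjTranspose_mul_self _

theorem of_mul_conjTranspose_of_eq_one
    (hu : ∀ k l, u k ⬝ᵥ u l = if k = l then (1 : ℝ) else 0) : of u * (of u)ᴴ = 1 := by
  ext k l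
  simpa [mul_apply, one_apply, dotProduct] using hu k l

theorem orthonormal_toLp (hu : ∀ k l, u k ⬝ᵥ u l = if k = l then (1 : ℝ) else 0) :
    Orthonormal ℝ fun k => toLp 2 (u k) := by
  rw [orthonormal_iff_ite]
  intro k l
  rw [EuclideanSpace.inner_toLp_toLp, star_trivial, dotProduct_comm, hu]

theorem gramProj_mulVec_self (hu : ∀ k l, u k ⬝ᵥ u l = if k = l then (1 : ℝ) else 0) (k : Fin r) :
    gramProj u *ᵥ u k = u k := by
  have h : gramProj u * (of u)ᴴ = (of u)ᴴ := by
    rw [gramProj_eq_conjTranspose_mul_self, Matrix.mul_assoc, of_mul_conjTranspose_of_eq_one hu,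
      Matrix.mul_one]
  ext i
  exact congrFun₂ h i k

theorem toEuclideanLin_gramProj_of_mem_span
    (hu : ∀ k l, u k ⬝ᵥ u l = if k = l then (1 : ℝ) else 0) {x : EuclideanSpace ℝ (Fin p)}
    (hx : x ∈ Submodule.span ℝ (Set.range fun k => toLp 2 (u k))) :
    toEuclideanLin (gramProj u) x = x := by
  refine LinearMap.eqOn_span (g := LinearMap.id) ?_ hx
  rintro _ ⟨k, rfl⟩
  rw [toLpLin_toLp, toLin'_apply, gramProj_mulVec_self hu, LinearMap.id_apply]

theorem half_sub_sq_opNorm_gramProj_sub_le_eigDesc (hrp : r ≤ p) {S : Matrix (Fin p) (Fin p) ℝ}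
    (hS : S.PosSemidef) (hu : ∀ k l, u k ⬝ᵥ u l = if k = l then (1 : ℝ) else 0)
    (hSu : ∀ k : Fin r, S *ᵥ u k = eigDesc S (Fin.castLE hrp k) • u k)
    (Q : Matrix (Fin p) (Fin p) ℝ) (k : Fin r) :
    eigDesc S (Fin.castLE hrp k) / 2 - opNorm (CFC.sqrt S * (gramProj u - Q)) ^ 2 ≤
      eigDesc (Qᴴ * S * Q) (Fin.castLE hrp k) := by
  let w : Finset.Iic k → EuclideanSpace ℝ (Fin p) := fun i => toLp 2 (u i)
  have hw : Orthonormal ℝ w := (orthonormal_toLp hu).comp _ Subtype.val_injective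
  have hSw (i) : toEuclideanLin S (w i) = eigDesc S (Fin.castLE hrp i) • w i := by
    rw [toLpLin_toLp, toLin'_apply, hSu, toLp_smul]
  have hspan : Submodule.span ℝ (Set.range w) ≤
      Submodule.span ℝ (Set.range fun i => toLp 2 (u i)) :=
    Submodule.span_mono (Set.range_comp_subset_range Subtype.val fun i => toLp 2 (u i))
  have hdim : Module.finrank ℝ (Submodule.span ℝ (Set.range w)) = k + 1 := by
    rw [finrank_span_eq_card hw.linearIndependent, Fintype.card_coe, Fin.card_Iic]
  have hk (i : Finset.Iic k) : eigDesc S (Fin.castLE hrp k) ≤ eigDesc S (Fin.castLE hrp i) :=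
    antitone_eigDesc hS.isHermitian ((Fin.castLE_le_castLE_iff hrp).mpr (Finset.mem_Iic.mp i.2))
  exact half_sub_sq_opNorm_le_eigDesc_conjTranspose_mul_mul_same hS (gramProj u) Q
    (by rw [hdim]; exact Nat.lt_succ_self k)
    (fun _ hx => toEuclideanLin_gramProj_of_mem_span hu (hspan hx))
    (fun _ hx => mul_norm_sq_le_re_inner_map_of_mem_span hw hSw hk hx)

theorem isStarProjection_gramProj (hu : ∀ k l, u k ⬝ᵥ u l = if k = l then (1 : ℝ) else 0) :
    IsStarProjection (gramProj u) where
  isIdempotentElem := by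
    rw [IsIdempotentElem, gramProj_eq_conjTranspose_mul_self, Matrix.mul_assoc,
      ← Matrix.mul_assoc (of u), of_mul_conjTranspose_of_eq_one hu, Matrix.one_mul]
  isSelfAdjoint := isHermitian_gramProj u

theorem opNorm_gramProj_le_one (hu : ∀ k l, u k ⬝ᵥ u l = if k = l then (1 : ℝ) else 0) :
    opNorm (gramProj u) ≤ 1 := by
  rw [opNorm_eq_norm_toEuclideanLin]
  exact ((isStarProjection_gramProj hu).map (toEuclideanCLM (𝕜 := ℝ))).norm_le

end EuclideanMatrix

open Matrix in
theorem eigenvalue_bound_for_projected_metric_tensor_general {p r : ℕ} (hrp : r ≤ p)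
    {Sig : Matrix (Fin p) (Fin p) ℝ} (hSig : Sig.PosSemidef) {u : Fin r → Fin p → ℝ}
    (hu : ∀ k l, u k ⬝ᵥ u l = if k = l then (1 : ℝ) else 0)
    (hue : ∀ k : Fin r, Sig *ᵥ u k = eigDesc Sig (Fin.castLE hrp k) • u k)
    {Q : Matrix (Fin p) (Fin p) ℝ} (hQ : opNorm Q ≤ 1) (k : Fin r) :
    eigDesc (Qᴴ * Sig * Q) (Fin.castLE hrp k) ≤ eigDesc Sig (Fin.castLE hrp k) ∧
      eigDesc Sig (Fin.castLE hrp k) / 2 - opNorm (CFC.sqrt Sig * (gramProj u - Q)) ^ 2 ≤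
        eigDesc (Qᴴ * Sig * Q) (Fin.castLE hrp k) := by
  refine ⟨?_, half_sub_sq_opNorm_gramProj_sub_le_eigDesc hrp hSig hu hue Q k⟩
  calc eigDesc (Qᴴ * Sig * Q) (Fin.castLE hrp k)
      ≤ opNorm Q ^ 2 * eigDesc Sig (Fin.castLE hrp k) :=
        eigDesc_conjTranspose_mul_mul_same_le hSig Q _
    _ ≤ eigDesc Sig (Fin.castLE hrp k) :=
        mul_le_of_le_one_left (eigDesc_nonneg hSig _) (pow_le_one₀ (opNorm_nonneg Q) hQ)

/-- **Eigenvalue Bound for Projected Metric Tensor (Lemma).** -/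
theorem eigenvalue_bound_for_projected_metric_tensor
    (p r : ℕ) (hr : 1 ≤ r) (hrp : r ≤ p)
    (Sig : Matrix (Fin p) (Fin p) ℝ) (hSig : Sig.PosSemidef)
    -- `V` is spanned by orthonormal eigenvectors of `Sig` corresponding to `λ_1,…,λ_r`
    (u : Fin r → Fin p → ℝ)
    (hu : ∀ k l, (u k) ⬝ᵥ (u l) = if k = l then (1 : ℝ) else 0)
    (hue : ∀ k : Fin r, Sig.mulVec (u k) = eigDesc Sig (Fin.castLE hrp k) • u k)
    -- `V̄` is an arbitrary `r`-dimensional subspace, given by an orthonormal family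
    (v : Fin r → Fin p → ℝ)
    (hv : ∀ k l, (v k) ⬝ᵥ (v l) = if k = l then (1 : ℝ) else 0) :
    ∀ k : Fin r,
      eigDesc (gramProj v * Sig * gramProj v) (Fin.castLE hrp k) ≤
          eigDesc Sig (Fin.castLE hrp k) ∧
        eigDesc Sig (Fin.castLE hrp k) / 2 -
            opNorm (CFC.sqrt Sig * (gramProj u - gramProj v)) ^ 2 ≤
          eigDesc (gramProj v * Sig * gramProj v) (Fin.castLE hrp k) := by
  intro k
  simpa only [(isHermitian_gramProj v).eq] using
    eigenvalue_bound_for_projected_metric_tensor_general hrp hSig hu hue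
      (opNorm_gramProj_le_one hv) k

end
end
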